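/- A(1/10;n) ∼ √2·(√5−1)·cosh(3π√(8n−1)/20)/√(8n−1) as n → ∞; that is, the quotient A(1/10;n)·√(8n−1)/(√2·(√5−1)·cosh(3π√(8n−1)/20)) tends to 1 as n → ∞. -/

import Mathlib

open scoped Classical

/-- The M2-rank of a partition: ⌈ℓ/2⌉ − s, where ℓ is the largest part
(0 for the empty partition) and s is the number of parts. -/
def m2Rank {n : ℕ} (P : n.Partition) : ℤ :=
  (((P.parts.sup + 1) / 2 : ℕ) : ℤ) - (Multiset.card P.parts : ℤ)

/-- A partition has no repeated odd parts. -/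
def NoRepeatedOddParts {n : ℕ} (P : n.Partition) : Prop :=
  ∀ j : ℕ, Odd j → P.parts.count j ≤ 1

/-- `N2 r m n` is the number of partitions of `n` without repeated odd parts whose
M2-rank is congruent to `r` modulo `m`. -/
noncomputable def N2 (r : ℤ) (m n : ℕ) : ℕ :=
  Nat.card {P : n.Partition // NoRepeatedOddParts P ∧ m2Rank P ≡ r [ZMOD (m : ℤ)]}

/-- `Acoef a c n = Σ_{r=0}^{c−1} N2(r,c,n)·e^{2πiar/c}`, the coefficient of `q^n`
in the M2-rank generating function `R2(e^{2πia/c};q)`. -/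
noncomputable def Acoef (a : ℤ) (c n : ℕ) : ℂ :=
  ∑ r ∈ Finset.range c,
    (N2 (r : ℤ) c n : ℂ) * Complex.exp (2 * Real.pi * Complex.I * (a : ℂ) * (r : ℂ) / (c : ℂ))

namespace M2R


/-- Multisets of positive integers without repeated odd members. -/
def NRO (μ : Multiset ℕ) : Prop := 0 ∉ μ ∧ ∀ j : ℕ, Odd j → μ.count j ≤ 1

/-- Rank of a multiset. -/
noncomputable def rk (μ : Multiset ℕ) : ℤ :=
  (((μ.sup + 1) / 2 : ℕ) : ℤ) - (Multiset.card μ : ℤ)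

/-- Admissible multisets with `s` members, all at most `2 * M`. -/
noncomputable def SS (M s : ℕ) : Finset (Multiset ℕ) :=
  ((s • Multiset.range (2 * M + 1)).powerset.toFinset).filter
    (fun μ => NRO μ ∧ Multiset.card μ = s ∧ ∀ x ∈ μ, x ≤ 2 * M)

lemma mem_SS {M s : ℕ} {μ : Multiset ℕ} :
    μ ∈ SS M s ↔ NRO μ ∧ Multiset.card μ = s ∧ ∀ x ∈ μ, x ≤ 2 * M := by
  unfold SS
  rw [Finset.mem_filter]
  constructor
  · exact fun h => h.2
  · intro h
    refine ⟨?_, h⟩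
    rw [Multiset.mem_toFinset, Multiset.mem_powerset, Multiset.le_iff_count]
    intro a
    by_cases ha : a ∈ μ
    · rw [Multiset.count_nsmul]
      have h1 : Multiset.count a (Multiset.range (2 * M + 1)) = 1 :=
        Multiset.count_eq_one_of_mem (Multiset.nodup_range _)
          (Multiset.mem_range.2 (by have := h.2.2 a ha; omega))
      rw [h1, mul_one, ← h.2.1]
      exact Multiset.count_le_card a μ
    · rw [Multiset.count_eq_zero_of_notMem ha]; exact Nat.zero_le _

/-- Generating polynomial of `SS`. -/
noncomputable def g {R : Type*} [CommRing R] (q : R) (M s : ℕ) : R :=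
  ∑ μ ∈ SS M s, q ^ μ.sum

lemma SS_zero_right (M : ℕ) : SS M 0 = {0} := by
  ext μ
  rw [mem_SS, Finset.mem_singleton]
  constructor
  · rintro ⟨_, h, _⟩; exact Multiset.card_eq_zero.1 h
  · rintro rfl; simp [NRO]

lemma SS_zero_left (s : ℕ) : SS 0 (s + 1) = ∅ := by
  ext μ
  rw [mem_SS]
  simp only [Finset.notMem_empty, iff_false]
  rintro ⟨h, h1, h2⟩
  have : ∃ a, a ∈ μ := by
    apply Multiset.exists_mem_of_ne_zero
    rintro rfl; simp at h1
  obtain ⟨a, ha⟩ := this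
  have := h2 a ha
  have h0 : a = 0 := by omega
  exact h.1 (h0 ▸ ha)

lemma SS_succ (M s : ℕ) :
    SS (M + 1) (s + 1) = (SS (M + 1) s).image (Multiset.cons (2 * M + 2)) ∪
      (SS M (s + 1) ∪ (SS M s).image (Multiset.cons (2 * M + 1))) := by
  ext μ
  simp only [Finset.mem_union, Finset.mem_image, mem_SS]
  constructor
  · rintro ⟨⟨h0, h1⟩, h2, h3⟩
    by_cases ha : 2 * M + 2 ∈ μ
    · left
      obtain ⟨ν, rfl⟩ := Multiset.exists_cons_of_mem ha
      refine ⟨ν, ⟨⟨fun h => h0 (Multiset.mem_cons_of_mem h), fun j hj =>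
        (Multiset.count_le_count_cons j _ ν).trans (h1 j hj)⟩, by simpa using h2,
        fun x hx => h3 x (Multiset.mem_cons_of_mem hx)⟩, rfl⟩
    · right
      by_cases hb : 2 * M + 1 ∈ μ
      · right
        obtain ⟨ν, rfl⟩ := Multiset.exists_cons_of_mem hb
        refine ⟨ν, ⟨⟨fun h => h0 (Multiset.mem_cons_of_mem h), fun j hj =>
          (Multiset.count_le_count_cons j _ ν).trans (h1 j hj)⟩, by simpa using h2,
          fun x hx => ?_⟩, rfl⟩
        have hx1 := h3 x (Multiset.mem_cons_of_mem hx)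
        have hx2 : x ≠ 2 * M + 2 := fun h => ha (h ▸ Multiset.mem_cons_of_mem hx)
        have hx3 : x ≠ 2 * M + 1 := by
          intro h
          have := h1 (2 * M + 1) ⟨M, rfl⟩
          rw [Multiset.count_cons_self] at this
          have h5 : 0 < Multiset.count (2 * M + 1) ν := Multiset.count_pos.2 (h ▸ hx)
          omega
        omega
      · left
        refine ⟨⟨h0, h1⟩, h2, fun x hx => ?_⟩
        have hx1 := h3 x hx
        have hx2 : x ≠ 2 * M + 2 := fun h => ha (h ▸ hx)
        have hx3 : x ≠ 2 * M + 1 := fun h => hb (h ▸ hx)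
        omega
  · rintro (⟨ν, ⟨⟨h0, h1⟩, h2, h3⟩, rfl⟩ | ⟨⟨h0, h1⟩, h2, h3⟩ | ⟨ν, ⟨⟨h0, h1⟩, h2, h3⟩, rfl⟩)
    · refine ⟨⟨by simp [h0], fun j hj => ?_⟩, by simp [h2], fun x hx => ?_⟩
      · have : j ≠ 2 * M + 2 := by rintro rfl; obtain ⟨k, hk⟩ := hj; omega
        rw [Multiset.count_cons_of_ne this]; exact h1 j hj
      · rcases Multiset.mem_cons.1 hx with rfl | hx
        · omega
        · exact h3 x hx
    · exact ⟨⟨h0, h1⟩, h2, fun x hx => by have := h3 x hx; omega⟩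
    · refine ⟨⟨by simp [h0], fun j hj => ?_⟩, by simp [h2], fun x hx => ?_⟩
      · by_cases hj2 : j = 2 * M + 1
        · subst hj2
          have : 2 * M + 1 ∉ ν := fun h => by have := h3 _ h; omega
          rw [Multiset.count_cons_self, Multiset.count_eq_zero_of_notMem this]
        · rw [Multiset.count_cons_of_ne hj2]; exact h1 j hj
      · rcases Multiset.mem_cons.1 hx with rfl | hx
        · omega
        · have := h3 x hx; omega

variable {R : Type*} [CommRing R] (q : R)

lemma g_zero_right (M : ℕ) : g q M 0 = 1 := by simp [g, SS_zero_right]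

lemma g_zero_left (s : ℕ) : g q 0 (s + 1) = 0 := by simp [g, SS_zero_left]

lemma g_succ (M s : ℕ) : g q (M + 1) (s + 1) =
    q ^ (2 * M + 2) * g q (M + 1) s + g q M (s + 1) + q ^ (2 * M + 1) * g q M s := by
  unfold g
  rw [SS_succ, Finset.sum_union, Finset.sum_union, Finset.sum_image, Finset.sum_image]
  · simp only [Multiset.sum_cons, pow_add, ← Finset.mul_sum]
    ring
  · intro a _ b _ h; exact (Multiset.cons_inj_right _).1 h
  · intro a _ b _ h; exact (Multiset.cons_inj_right _).1 h
  · rw [Finset.disjoint_left]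
    intro μ h1 h2
    obtain ⟨ν, hν, rfl⟩ := Finset.mem_image.1 h2
    have := (mem_SS.1 h1).2.2 (2 * M + 1) (Multiset.mem_cons_self _ _)
    omega
  · rw [Finset.disjoint_left]
    intro μ h1 h2
    obtain ⟨ν, hν, rfl⟩ := Finset.mem_image.1 h1
    rcases Finset.mem_union.1 h2 with h2 | h2
    · have := (mem_SS.1 h2).2.2 (2 * M + 2) (Multiset.mem_cons_self _ _)
      omega
    · obtain ⟨ξ, hξ, h⟩ := Finset.mem_image.1 h2
      have h3 : 2 * M + 2 ∈ (2 * M + 1) ::ₘ ξ := h ▸ Multiset.mem_cons_self _ _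
      rcases Multiset.mem_cons.1 h3 with h3 | h3
      · omega
      · have := (mem_SS.1 hξ).2.2 _ h3; omega

/-- Second recurrence. -/
lemma g_succ' (M : ℕ) : ∀ s : ℕ, q ^ (2 * s + 2) * g q M (s + 1) + q ^ (2 * s + 1) * g q M s =
    g q (M + 1) (s + 1) - q ^ 2 * g q (M + 1) s := by
  induction M with
  | zero =>
    intro s
    rw [g_succ]
    cases s with
    | zero => simp [g_zero_left, g_zero_right]
    | succ s => simp [g_zero_left]
  | succ M ihM =>
    intro s
    induction s with
    | zero =>
      have h1 := g_succ q (M + 1) 0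
      have h2 := g_succ q M 0
      have h3 := ihM 0
      simp only [g_zero_right] at *
      rw [h1]
      have e : q ^ (2 * (M + 1) + 2) = q ^ (2 * M + 2) * q ^ 2 := by ring
      have e' : q ^ (2 * (M + 1) + 1) = q ^ (2 * M + 1) * q ^ 2 := by ring
      rw [e, e']
      have h3' : q ^ 2 * g q M 1 + q = g q (M + 1) 1 - q ^ 2 := by simpa using h3
      simp only [mul_zero, zero_add, pow_one, mul_one] at *
      linear_combination h3 + (q ^ 2) * h2
    | succ s ihs =>
      have h1 := g_succ q (M + 1) (s + 1)
      have h1' := g_succ q (M + 1) s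
      have h2 := g_succ q M (s + 1)
      have h2' := g_succ q M s
      have h3 := ihM (s + 1)
      have h3' := ihM s
      have e1 : q ^ (2 * (s + 1) + 2) = q ^ (2 * s) * q ^ 4 := by ring
      have e2 : q ^ (2 * (s + 1) + 1) = q ^ (2 * s) * q ^ 3 := by ring
      have e3 : q ^ (2 * s + 2) = q ^ (2 * s) * q ^ 2 := by ring
      have e4 : q ^ (2 * s + 1) = q ^ (2 * s) * q := by ring
      have e5 : q ^ (2 * (M + 1) + 2) = q ^ (2 * M) * q ^ 4 := by ring
      have e6 : q ^ (2 * (M + 1) + 1) = q ^ (2 * M) * q ^ 3 := by ring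
      have e7 : q ^ (2 * M + 2) = q ^ (2 * M) * q ^ 2 := by ring
      have e8 : q ^ (2 * M + 1) = q ^ (2 * M) * q := by ring
      rw [e1, e2] at h3 ⊢
      rw [e3, e4] at h3' ihs
      rw [e5, e6] at h1 h1'
      rw [e7, e8] at h2 h2'
      linear_combination (-1 : R) * h1 + q ^ 2 * h1' + q ^ (2 * s) * q ^ 4 * h2
        + q ^ (2 * s) * q ^ 3 * h2' + h3 + q ^ (2 * M) * q ^ 4 * ihs + q ^ (2 * M) * q ^ 3 * h3'

end M2R

namespace M2R


/-- Weight. -/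
noncomputable def wt (q : ℂ) (μ : Multiset ℕ) : ℂ := if NRO μ then q ^ μ.sum else 0

lemma g_nonneg {r : ℝ} (h0 : 0 ≤ r) (M s : ℕ) : 0 ≤ g r M s :=
  Finset.sum_nonneg fun _ _ => pow_nonneg h0 _

lemma H_le {r : ℝ} (h0 : 0 ≤ r) (h1 : r < 1) (S M : ℕ) :
    ∑ s ∈ Finset.range (S + 1), g r M s ≤
      ∏ j ∈ Finset.range M, ((1 + r ^ (2 * j + 1)) / (1 - r ^ (2 * j + 2))) := by
  induction M with
  | zero =>
    rw [Finset.sum_range_succ']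
    simp [g_zero_left, g_zero_right]
  | succ M ih =>
    have hpos : 0 < 1 - r ^ (2 * M + 2) := by
      have : r ^ (2 * M + 2) < 1 := pow_lt_one₀ h0 h1 (by omega)
      linarith
    rw [Finset.prod_range_succ]
    have key : ∑ s ∈ Finset.range (S + 1), g r (M + 1) s ≤
        r ^ (2 * M + 2) * ∑ s ∈ Finset.range (S + 1), g r (M + 1) s +
          (1 + r ^ (2 * M + 1)) * ∑ s ∈ Finset.range (S + 1), g r M s := by
      have e1 : ∑ s ∈ Finset.range (S + 1), g r (M + 1) s =
          r ^ (2 * M + 2) * ∑ s ∈ Finset.range S, g r (M + 1) s +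
          ∑ s ∈ Finset.range (S + 1), g r M s
           + r ^ (2 * M + 1) * ∑ s ∈ Finset.range S, g r M s := by
        rw [Finset.sum_range_succ' _ S, Finset.sum_range_succ' _ S]
        simp only [g_succ, g_zero_right, Finset.sum_add_distrib, Finset.mul_sum]
        ring
      have e2 : ∑ s ∈ Finset.range S, g r (M + 1) s ≤ ∑ s ∈ Finset.range (S + 1), g r (M + 1) s := by
        rw [Finset.sum_range_succ]; linarith [g_nonneg h0 (M + 1) S]
      have e3 : ∑ s ∈ Finset.range S, g r M s ≤ ∑ s ∈ Finset.range (S + 1), g r M s := by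
        rw [Finset.sum_range_succ]; linarith [g_nonneg h0 M S]
      have p1 : 0 ≤ r ^ (2 * M + 2) := by positivity
      have p2 : 0 ≤ r ^ (2 * M + 1) := by positivity
      have := mul_le_mul_of_nonneg_left e2 p1
      have := mul_le_mul_of_nonneg_left e3 p2
      linarith
    have p2 : 0 ≤ r ^ (2 * M + 1) := by positivity
    rw [← mul_div_assoc, le_div_iff₀ hpos]
    have := mul_le_mul_of_nonneg_left ih (by linarith : 0 ≤ 1 + r ^ (2 * M + 1))
    nlinarith

lemma prod_bound {r : ℝ} (h0 : 0 ≤ r) (h1 : r < 1) : ∃ B : ℝ, ∀ M : ℕ,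
    ∏ j ∈ Finset.range M, ((1 + r ^ (2 * j + 1)) / (1 - r ^ (2 * j + 2))) ≤ B := by
  refine ⟨Real.exp ((1 + 1 / (1 - r)) * (1 / (1 - r))), fun M => ?_⟩
  have hr : 0 < 1 - r := by linarith
  have : ∏ j ∈ Finset.range M, ((1 + r ^ (2 * j + 1)) / (1 - r ^ (2 * j + 2))) ≤
      ∏ j ∈ Finset.range M, Real.exp ((1 + 1 / (1 - r)) * r ^ j) := by
    apply Finset.prod_le_prod
    · intro j _
      have : r ^ (2 * j + 2) < 1 := pow_lt_one₀ h0 h1 (by omega)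
      have : 0 ≤ r ^ (2 * j + 1) := by positivity
      apply div_nonneg <;> linarith
    · intro j _
      have a1 : r ^ (2 * j + 1) ≤ r ^ j := pow_le_pow_of_le_one h0 h1.le (by omega)
      have a2 : r ^ (2 * j + 2) ≤ r ^ j := pow_le_pow_of_le_one h0 h1.le (by omega)
      have a3 : r ^ (2 * j + 2) ≤ r := by
        simpa using pow_le_pow_of_le_one h0 h1.le (show 1 ≤ 2 * j + 2 by omega)
      have a4 : 0 ≤ r ^ (2 * j + 2) := by positivity
      rw [add_mul, one_mul, Real.exp_add, div_eq_mul_inv]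
      have b1 : 1 + r ^ (2 * j + 1) ≤ Real.exp (r ^ j) := by
        have := Real.add_one_le_exp (r ^ j); linarith
      have b2 : (1 - r ^ (2 * j + 2))⁻¹ ≤ Real.exp (1 / (1 - r) * r ^ j) := by
        have hp : 0 < 1 - r ^ (2 * j + 2) := by linarith
        have c1 : (1 - r ^ (2 * j + 2))⁻¹ = 1 + r ^ (2 * j + 2) / (1 - r ^ (2 * j + 2)) := by
          field_simp; ring
        have c2 : r ^ (2 * j + 2) / (1 - r ^ (2 * j + 2)) ≤ 1 / (1 - r) * r ^ j := by
          rw [one_div_mul_eq_div]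
          apply div_le_div₀ (by positivity) a2 hr; linarith
        have := Real.add_one_le_exp (1 / (1 - r) * r ^ j); linarith
      have hp : 0 ≤ (1 - r ^ (2 * j + 2))⁻¹ := inv_nonneg.2 (by linarith)
      exact mul_le_mul b1 b2 hp (Real.exp_pos _).le
  refine this.trans ?_
  rw [← Real.exp_sum, ← Finset.mul_sum]
  apply Real.exp_le_exp.2
  apply mul_le_mul_of_nonneg_left _ (by positivity)
  have := (summable_geometric_of_lt_one h0 h1).sum_le_tsum (Finset.range M)
    (fun i _ => by positivity)
  rw [tsum_geometric_of_lt_one h0 h1] at this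
  simpa using this

lemma summable_real {r : ℝ} (h0 : 0 ≤ r) (h1 : r < 1) :
    Summable (fun μ : Multiset ℕ => if NRO μ then r ^ μ.sum else 0) := by
  obtain ⟨B, hB⟩ := prod_bound h0 h1
  refine summable_of_sum_le (c := B) (fun μ => by positivity) (fun u => ?_)
  set S := u.sup Multiset.card
  set M := u.sup Multiset.sum
  refine le_trans ?_ ((H_le h0 h1 S M).trans (hB M))
  unfold g
  rw [← Finset.sum_biUnion]
  · rw [← Finset.sum_filter]
    apply Finset.sum_le_sum_of_subset_of_nonneg
    · intro μ hμ
      obtain ⟨h2, h3⟩ := Finset.mem_filter.1 hμ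
      rw [Finset.mem_biUnion]
      refine ⟨Multiset.card μ, Finset.mem_range.2 (Nat.lt_succ_of_le
        (Finset.le_sup (f := Multiset.card) h2)), mem_SS.2 ⟨h3, rfl, fun x hx => ?_⟩⟩
      have a1 : x ≤ μ.sum := Multiset.single_le_sum (fun _ _ => Nat.zero_le _) x hx
      have a2 : μ.sum ≤ M := Finset.le_sup (f := Multiset.sum) h2
      omega
    · intros; positivity
  · intro a _ b _ hab
    rw [Function.onFun, Finset.disjoint_left]
    intro μ h2 h3
    exact hab ((mem_SS.1 h2).2.1.symm.trans (mem_SS.1 h3).2.1)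

variable {q : ℂ}

lemma norm_wt (μ : Multiset ℕ) : ‖wt q μ‖ = if NRO μ then ‖q‖ ^ μ.sum else 0 := by
  unfold wt; split_ifs <;> simp

lemma summable_wt_norm (hq : ‖q‖ < 1) : Summable (fun μ => ‖wt q μ‖) := by
  simp only [norm_wt]
  exact summable_real (norm_nonneg _) hq

lemma summable_wt (hq : ‖q‖ < 1) : Summable (wt q) := (summable_wt_norm hq).of_norm

/-- Total generating function. -/
noncomputable def PP (q : ℂ) : ℂ := ∑' μ, wt q μ

/-- Generating function of rank at most `m`. -/
noncomputable def U (q : ℂ) (m : ℤ) : ℂ := ∑' μ, if rk μ ≤ m then wt q μ else 0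

/-- Integer-indexed `g`. -/
noncomputable def gz (q : ℂ) (M : ℤ) (s : ℕ) : ℂ := if 0 ≤ M then g q M.toNat s else 0

lemma summable_U (hq : ‖q‖ < 1) (m : ℤ) :
    Summable (fun μ => if rk μ ≤ m then wt q μ else 0) := by
  refine Summable.of_norm_bounded (summable_wt_norm hq) (fun μ => ?_)
  split_ifs <;> simp

lemma hasSum_U (hq : ‖q‖ < 1) (m : ℤ) : HasSum (fun s : ℕ => gz q (m + s) s) (U q m) := by
  have h := (summable_U hq m).hasSum.tsum_fiberwise Multiset.card
  have e : (fun s : ℕ => ∑' b : (Multiset.card ⁻¹' {s} : Set (Multiset ℕ)),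
      (fun μ => if rk μ ≤ m then wt q μ else 0) (b : Multiset ℕ)) = fun s : ℕ => gz q (m + s) s := by
    funext s
    rw [tsum_subtype (Multiset.card ⁻¹' {s} : Set (Multiset ℕ))
      (fun μ => if rk μ ≤ m then wt q μ else 0)]
    unfold gz
    by_cases hM : 0 ≤ m + s
    · rw [if_pos hM]
      have key : ∀ μ : Multiset ℕ, Multiset.card μ = s → (rk μ ≤ m ↔ ∀ x ∈ μ, x ≤ 2 * (m + s).toNat) := by
        intro μ hμ
        rw [← Multiset.sup_le]
        unfold rk
        rw [hμ]
        omega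
      rw [tsum_eq_sum (s := SS (m + s).toNat s)]
      · unfold g
        apply Finset.sum_congr rfl
        intro μ hμ
        obtain ⟨a, b, c⟩ := mem_SS.1 hμ
        rw [Set.indicator_of_mem (by simpa using b), if_pos ((key μ b).2 c), wt, if_pos a]
      · intro μ hμ
        by_cases hb : Multiset.card μ = s
        · rw [Set.indicator_of_mem (by simpa using hb)]
          split_ifs with h1
          · unfold wt
            rw [if_neg]
            intro h2
            exact hμ (mem_SS.2 ⟨h2, hb, (key μ hb).1 h1⟩)
          · rfl
        · rw [Set.indicator_of_notMem (by simpa using hb)]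
    · rw [if_neg hM]
      convert tsum_zero with μ
      rw [Set.indicator_apply]
      split_ifs with h1 h2
      · exfalso
        have : Multiset.card μ = s := by simpa using h1
        unfold rk at h2
        omega
      · rfl
      · rfl
  rw [e] at h
  exact h

lemma gzA (M : ℤ) (s : ℕ) : gz q M (s + 1) = q ^ (2 * M) * gz q M s + gz q (M - 1) (s + 1)
    + q ^ (2 * M - 1) * gz q (M - 1) s - (if M = 0 ∧ s = 0 then 1 else 0) := by
  rcases lt_trichotomy M 0 with h | h | h
  · simp [gz, not_le.2 h, h.ne, show ¬ (1 ≤ M) by omega]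
  · subst h
    cases s with
    | zero => simp [gz, g_zero_left, g_zero_right]
    | succ s => simp [gz, g_zero_left]
  · obtain ⟨k, rfl⟩ : ∃ k : ℕ, M = k + 1 := ⟨(M - 1).toNat, by omega⟩
    have e1 : (2 * ((k : ℤ) + 1)) = ((2 * k + 2 : ℕ) : ℤ) := by push_cast; ring
    have e2 : (2 * ((k : ℤ) + 1) - 1) = ((2 * k + 1 : ℕ) : ℤ) := by push_cast; ring
    have e3 : ((k : ℤ) + 1).toNat = k + 1 := by omega
    have e4 : ((k : ℤ) + 1 - 1).toNat = k := by omega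
    rw [e2, e1, zpow_natCast, zpow_natCast]
    unfold gz
    rw [if_pos (by omega), if_pos (by omega), if_pos (by omega), if_pos (by omega), e3, e4,
      if_neg (by omega), g_succ]
    ring

lemma gzA0 (M : ℤ) : gz q M 0 = gz q (M - 1) 0 + (if M = 0 then 1 else 0) := by
  unfold gz
  simp only [g_zero_right]
  split_ifs <;> first | omega | simp

lemma gzB (M : ℤ) (s : ℕ) : q ^ (2 * s + 2) * gz q M (s + 1) + q ^ (2 * s + 1) * gz q M s =
    gz q (M + 1) (s + 1) - q ^ 2 * gz q (M + 1) s + (if M = -1 ∧ s = 0 then q ^ 2 else 0) := by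
  rcases lt_trichotomy M (-1) with h | h | h
  · simp [gz, show ¬ (0 ≤ M) by omega, h.ne, show ¬ (0 ≤ M + 1) by omega]
  · subst h
    cases s with
    | zero => simp [gz, g_zero_left, g_zero_right]
    | succ s => simp [gz, g_zero_left]
  · obtain ⟨k, rfl⟩ : ∃ k : ℕ, M = k := ⟨M.toNat, by omega⟩
    have e3 : ((k : ℤ) + 1).toNat = k + 1 := by omega
    unfold gz
    rw [if_pos (by omega), if_pos (by omega), if_pos (by omega), if_pos (by omega), e3,
      if_neg (by omega), Int.toNat_natCast, g_succ']
    ring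

/-- Auxiliary sum. -/
noncomputable def V (q : ℂ) (m : ℤ) : ℂ := ∑' s : ℕ, q ^ (2 * (m + s)) * gz q (m + s) s

lemma hasSum_V (hq : ‖q‖ < 1) (m : ℤ) :
    HasSum (fun s : ℕ => q ^ (2 * (m + s)) * gz q (m + s) s) (V q m) := by
  apply Summable.hasSum
  refine Summable.of_norm_bounded (hasSum_U hq m).summable.norm (fun s => ?_)
  rw [norm_mul]
  by_cases h : 0 ≤ m + s
  · obtain ⟨k, hk⟩ : ∃ k : ℕ, m + s = k := ⟨(m + s).toNat, by omega⟩
    have : (2 * (m + s) : ℤ) = ((2 * k : ℕ) : ℤ) := by rw [hk]; push_cast; ring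
    rw [this, zpow_natCast, norm_pow]
    exact mul_le_of_le_one_left (norm_nonneg _) (pow_le_one₀ (norm_nonneg _) hq.le)
  · simp [gz, h]

lemma relX (hq : ‖q‖ < 1) (hq0 : q ≠ 0) (m : ℤ) : U q m = U q (m - 1) + V q (m + 1) + q * V q m
    + (if m = 0 then 1 else 0) - (if m = -1 then 1 else 0) := by
  have h1 := (hasSum_nat_add_iff' 1).2 (hasSum_U hq m)
  have h2 := (hasSum_nat_add_iff' 1).2 (hasSum_U hq (m - 1))
  have h3 := hasSum_V hq (m + 1)
  have h4 := (hasSum_V hq m).mul_left q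
  have h5 : HasSum (fun s : ℕ => if m + 1 + s = 0 ∧ s = 0 then (1 : ℂ) else 0)
      (if m = -1 then 1 else 0) := by
    convert hasSum_ite_eq (0 : ℕ) (if m = -1 then (1 : ℂ) else 0) using 2 with s
    split_ifs <;> first | omega | rfl
  have h6 := ((h3.add h2).add h4).sub h5
  have e : ∀ s : ℕ, gz q (m + ((s + 1 : ℕ) : ℤ)) (s + 1) = q ^ (2 * (m + 1 + s)) * gz q (m + 1 + s) s
      + gz q (m - 1 + ((s + 1 : ℕ) : ℤ)) (s + 1)
      + q * (q ^ (2 * (m + s)) * gz q (m + s) s) - (if m + 1 + s = 0 ∧ s = 0 then (1 : ℂ) else 0) := by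
    intro s
    have := gzA (q := q) (m + 1 + s) s
    have a1 : m + ((s + 1 : ℕ) : ℤ) = m + 1 + s := by push_cast; ring
    have a2 : m - 1 + ((s + 1 : ℕ) : ℤ) = m + 1 + s - 1 := by push_cast; ring
    have a3 : m + (s : ℤ) = m + 1 + s - 1 := by ring
    have a4 : q * q ^ (2 * (m + s)) = q ^ (2 * (m + 1 + s) - 1) := by
      rw [← zpow_one_add₀ hq0]; congr 1; ring
    rw [a1, a2, this, ← a4, a3]
    ring
  have h7 := h1.unique (by simpa only [e] using h6)
  simp only [Finset.range_one, Finset.sum_singleton, Nat.cast_zero, add_zero] at h7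
  have := gzA0 (q := q) m
  linear_combination h7 + this

lemma relY (hq : ‖q‖ < 1) (hq0 : q ≠ 0) (m : ℤ) : q * V q (m + 1) + q ^ 2 * V q m =
    q ^ (2 * m + 2) * (U q (m + 1) - q ^ 2 * U q (m + 2) + (if m = -2 then q ^ 2 else 0)
      - (if m = -1 then 1 else 0)) := by
  have h1 := (hasSum_nat_add_iff' 1).2 (hasSum_U hq (m + 1))
  have h2 := (hasSum_U hq (m + 2)).mul_left (q ^ 2)
  have h3 := (hasSum_V hq (m + 1)).mul_left (q * q ^ (-(2 * m + 2)))
  have h4 := (hasSum_nat_add_iff' 1).2 ((hasSum_V hq m).mul_left (q ^ (- (2 * m))))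
  have h5 : HasSum (fun s : ℕ => if m + 1 + s = -1 ∧ s = 0 then (q ^ 2 : ℂ) else 0)
      (if m = -2 then q ^ 2 else 0) := by
    convert hasSum_ite_eq (0 : ℕ) (if m = -2 then (q ^ 2 : ℂ) else 0) using 2 with s
    split_ifs <;> first | omega | rfl
  have h6 := ((h1.sub h2).add h5)
  have e : ∀ s : ℕ, q * q ^ (-(2 * m + 2)) * (q ^ (2 * (m + 1 + s)) * gz q (m + 1 + s) s) +
      q ^ (- (2 * m)) * (q ^ (2 * (m + ((s + 1 : ℕ) : ℤ))) * gz q (m + ((s + 1 : ℕ) : ℤ)) (s + 1)) =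
      gz q (m + 1 + ((s + 1 : ℕ) : ℤ)) (s + 1) - q ^ 2 * gz q (m + 2 + s) s +
       (if m + 1 + s = -1 ∧ s = 0 then (q ^ 2 : ℂ) else 0) := by
    intro s
    have := gzB (q := q) (m + 1 + s) s
    have a1 : m + 1 + ((s + 1 : ℕ) : ℤ) = m + 1 + s + 1 := by push_cast; ring
    have a2 : m + ((s + 1 : ℕ) : ℤ) = m + 1 + s := by push_cast; ring
    have a3 : m + 2 + (s : ℤ) = m + 1 + s + 1 := by ring
    have a4 : q * q ^ (-(2 * m + 2)) * q ^ (2 * (m + 1 + s)) = q ^ (2 * s + 1) := by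
      rw [← zpow_one_add₀ hq0, ← zpow_add₀ hq0, ← zpow_natCast]; congr 1; push_cast; ring
    have a5 : q ^ (-(2 * m)) * q ^ (2 * (m + 1 + s)) = q ^ (2 * s + 2) := by
      rw [← zpow_add₀ hq0, ← zpow_natCast]; congr 1; push_cast; ring
    rw [a1, a2, a3, ← this, ← mul_assoc, ← mul_assoc, a4, a5]
    ring
  have h7 := (h3.add h4).unique (by simpa only [e] using h6)
  simp only [Finset.range_one, Finset.sum_singleton, Nat.cast_zero, add_zero] at h7
  have h8 := gzA0 (q := q) (m + 1)
  have h9 : (if m + 1 = 0 then (1 : ℂ) else 0) = if m = -1 then 1 else 0 := by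
    split_ifs <;> first | omega | rfl
  rw [h9, show m + 1 - 1 = m by ring] at h8
  have b1 : q ^ (2 * m + 2) * q ^ (-(2 * m + 2)) = 1 := by
    rw [← zpow_add₀ hq0]; simp
  have b2 : q ^ (2 * m + 2) * q ^ (-(2 * m)) = q ^ 2 := by
    rw [← zpow_add₀ hq0]
    rw [show 2 * m + 2 + -(2 * m) = ((2 : ℕ) : ℤ) by push_cast; ring, zpow_natCast]
  have b3 : q ^ (-(2 * m)) * q ^ (2 * m) = 1 := by
    rw [← zpow_add₀ hq0]; simp
  linear_combination q ^ (2 * m + 2) * h7 - q ^ (2 * m + 2) * h8 - q * V q (m + 1) * b1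
    - V q m * b2 + q ^ (2 * m + 2) * gz q m 0 * b3

/-- The invariant. -/
noncomputable def W (q : ℂ) (m : ℤ) : ℂ := q * U q m + q ^ (2 * m + 4) * U q (m + 2)

lemma relW (hq : ‖q‖ < 1) (hq0 : q ≠ 0) (m : ℤ) : W q m = W q (m - 1) +
    (if m = 0 then q else 0) - (if m = -1 then q + 1 else 0) + (if m = -2 then 1 else 0) := by
  have h1 := relX hq hq0 m
  have h2 := relY hq hq0 m
  unfold W
  have e1 : q ^ (2 * (m - 1) + 4) = q ^ (2 * m + 2) := by congr 1; ring
  have e2 : q ^ (2 * m + 4) = q ^ (2 * m + 2) * q ^ 2 := by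
    rw [← zpow_natCast, ← zpow_add₀ hq0]; congr 1; push_cast; ring
  rw [e1, e2, show m - 1 + 2 = m + 1 by ring]
  have h3 : q ^ (2 * m + 2) * ((if m = -2 then q ^ 2 else 0)
      - (if m = -1 then 1 else 0)) = (if m = -2 then 1 else 0) - (if m = -1 then 1 else 0) := by
    split_ifs with a b c
    · omega
    · subst a
      simp [hq0, zpow_neg]
    · subst c; simp
    · simp
  have h4 : (if m = 0 then q else 0) = q * (if m = 0 then 1 else 0) := by simp
  have h5 : (if m = -1 then q + 1 else 0) = (q + 1) * (if m = -1 then 1 else 0) := by simp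
  rw [h4, h5]
  linear_combination q * h1 + h2 + h3

end M2R

namespace M2R
open Filter Topology
variable {q : ℂ}

lemma U_tendsto (hq : ‖q‖ < 1) : Tendsto (fun m : ℕ => U q m) atTop (𝓝 (PP q)) := by
  unfold U PP
  refine tendsto_tsum_of_dominated_convergence (summable_wt_norm hq) (fun μ => ?_) ?_
  · apply tendsto_const_nhds.congr'
    filter_upwards [eventually_ge_atTop (rk μ).toNat] with m hm
    rw [if_pos (by omega)]
  · refine Eventually.of_forall fun m μ => ?_
    split_ifs <;> simp

lemma norm_U_le (hq : ‖q‖ < 1) (m : ℤ) : ‖U q m‖ ≤ ∑' μ, ‖wt q μ‖ := by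
  unfold U
  refine tsum_of_norm_bounded (summable_wt_norm hq).hasSum (fun μ => ?_)
  split_ifs <;> simp

lemma W_nat (hq : ‖q‖ < 1) (hq0 : q ≠ 0) (m : ℕ) : W q m = q * PP q := by
  have h1 : ∀ m : ℕ, W q m = W q 0 := by
    intro m
    induction m with
    | zero => simp
    | succ m ih =>
      have := relW hq hq0 ((m : ℤ) + 1)
      rw [if_neg (by omega), if_neg (by omega), if_neg (by omega)] at this
      push_cast
      rw [this, show (m : ℤ) + 1 - 1 = m by ring, ih]
      ring
  have h2 : Tendsto (fun m : ℕ => W q m) atTop (𝓝 (q * PP q + 0)) := by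
    unfold W
    refine ((U_tendsto hq).const_mul q).add ?_
    refine squeeze_zero_norm (a := fun m : ℕ => ‖q‖ ^ m * ∑' μ, ‖wt q μ‖) (fun m => ?_) ?_
    · rw [norm_mul]
      apply mul_le_mul _ (norm_U_le hq _) (norm_nonneg _) (by positivity)
      have : (2 * (m : ℤ) + 4) = ((2 * m + 4 : ℕ) : ℤ) := by push_cast; ring
      rw [this, zpow_natCast, norm_pow]
      exact pow_le_pow_of_le_one (norm_nonneg _) hq.le (by omega)
    · simpa using (tendsto_pow_atTop_nhds_zero_of_lt_one (norm_nonneg _) hq).mul_const _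
  have h3 : Tendsto (fun m : ℕ => W q m) atTop (𝓝 (W q 0)) := by simp [h1]
  rw [h1, tendsto_nhds_unique h3 h2, add_zero]

lemma W_neg (hq : ‖q‖ < 1) (hq0 : q ≠ 0) (d : ℕ) : W q (-(d : ℤ) - 3) = q * PP q := by
  have h0 := W_nat hq hq0 0
  have r0 := relW hq hq0 0
  have r1 := relW hq hq0 (-1)
  have r2 := relW hq hq0 (-2)
  norm_num at h0 r0 r1 r2
  induction d with
  | zero =>
    norm_num
    linear_combination h0 - r0 - r1 - r2
  | succ d ih =>
    have := relW hq hq0 (-(d : ℤ) - 3)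
    rw [if_neg (by omega), if_neg (by omega), if_neg (by omega)] at this
    push_cast
    rw [show -((d : ℤ) + 1) - 3 = -(d : ℤ) - 3 - 1 by ring, ← ih, this]
    ring

lemma gauss_rel (hq : ‖q‖ < 1) (hq0 : q ≠ 0) : PP q = U q (-1) + q * U q 1 + 1 := by
  have h0 := W_nat hq hq0 0
  have r0 := relW hq hq0 0
  norm_num at h0 r0
  rw [h0] at r0
  unfold W at r0
  norm_num at r0
  apply mul_left_cancel₀ hq0
  linear_combination r0

lemma T_rel (hq : ‖q‖ < 1) (hq0 : q ≠ 0) (m : ℕ) :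
    PP q - U q m = q ^ (2 * m + 3) * U q ((m + 2 : ℕ) : ℤ) := by
  have h := W_nat hq hq0 m
  unfold W at h
  apply mul_left_cancel₀ hq0
  have e : q ^ (2 * (m : ℤ) + 4) = q ^ (2 * m + 4) := by
    rw [← zpow_natCast]; congr 1
  rw [e] at h
  push_cast
  linear_combination -h

lemma Un_rel (hq : ‖q‖ < 1) (hq0 : q ≠ 0) (m : ℕ) :
    U q (-(m : ℤ) - 1) = q ^ (2 * m + 3) * (PP q - U q (-((m + 2 : ℕ) : ℤ) - 1)) := by
  have h := W_neg hq hq0 m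
  unfold W at h
  have e : q ^ (2 * (-(m : ℤ) - 3) + 4) * q ^ (2 * m + 2) = 1 := by
    rw [← zpow_natCast, ← zpow_add₀ hq0]
    rw [show (2 * (-(m : ℤ) - 3) + 4) + ((2 * m + 2 : ℕ) : ℤ) = 0 by push_cast; ring]
    simp
  have e1 : -(m : ℤ) - 3 + 2 = -(m : ℤ) - 1 := by ring
  have e2 : -((m + 2 : ℕ) : ℤ) - 1 = -(m : ℤ) - 3 := by push_cast; ring
  rw [e1] at h
  rw [e2]
  linear_combination q ^ (2 * m + 2) * h - U q (-(m : ℤ) - 1) * e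

/-- Summand of the partial theta series. -/
noncomputable def tt (q : ℂ) (m k : ℕ) : ℂ :=
  (-1) ^ k * q ^ (2 * (k + 1) ^ 2 + (k + 1) + 2 * m * (k + 1))

lemma norm_tt_le (hq : ‖q‖ < 1) (m k : ℕ) : ‖tt q m k‖ ≤ ‖q‖ ^ m * ‖q‖ ^ k := by
  unfold tt
  rw [norm_mul, norm_pow, norm_neg, norm_one, one_pow, one_mul, norm_pow, ← pow_add]
  apply pow_le_pow_of_le_one (norm_nonneg _) hq.le
  nlinarith [Nat.zero_le (m * k), Nat.zero_le (k ^ 2)]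

lemma summable_tt (hq : ‖q‖ < 1) (m : ℕ) : Summable (tt q m) :=
  Summable.of_norm_bounded ((summable_geometric_of_lt_one (norm_nonneg q) hq).mul_left (‖q‖ ^ m))
    (norm_tt_le hq m)

lemma tt_rel (hq : ‖q‖ < 1) (m : ℕ) :
    ∑' k, tt q m k = q ^ (2 * m + 3) * (1 - ∑' k, tt q (m + 2) k) := by
  rw [(summable_tt hq m).tsum_eq_zero_add, mul_sub, ← tsum_mul_left, mul_one, sub_eq_add_neg,
    ← tsum_neg]
  congr 1
  · simp only [tt]; ring_nf
  · congr 1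
    funext k
    simp only [tt]
    ring

lemma unique_rec (hq : ‖q‖ < 1) {x y : ℕ → ℂ} {p : ℂ} {B : ℝ}
    (hx : ∀ m, x m = q ^ (2 * m + 3) * (p - x (m + 2)))
    (hy : ∀ m, y m = q ^ (2 * m + 3) * (p - y (m + 2)))
    (hB : ∀ m, ‖x m - y m‖ ≤ B) (m : ℕ) : x m = y m := by
  have h1 : ∀ j m, ‖x m - y m‖ ≤ ‖q‖ ^ j * B := by
    intro j
    induction j with
    | zero => simpa using hB
    | succ j ih =>
      intro m
      have : x m - y m = - (q ^ (2 * m + 3) * (x (m + 2) - y (m + 2))) := by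
        rw [hx m, hy m]; ring
      rw [this, norm_neg, norm_mul, norm_pow, pow_succ' _ j, mul_assoc]
      apply mul_le_mul _ (ih _) (norm_nonneg _) (norm_nonneg _)
      calc ‖q‖ ^ (2 * m + 3) ≤ ‖q‖ ^ 1 := pow_le_pow_of_le_one (norm_nonneg _) hq.le (by omega)
        _ = ‖q‖ := pow_one _
  have h2 : Tendsto (fun j : ℕ => ‖q‖ ^ j * B) atTop (𝓝 0) := by
    simpa using (tendsto_pow_atTop_nhds_zero_of_lt_one (norm_nonneg _) hq).mul_const B
  have h3 : ‖x m - y m‖ ≤ 0 := ge_of_tendsto' h2 (fun j => h1 j m)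
  exact sub_eq_zero.1 (norm_le_zero_iff.1 h3)

lemma norm_tsum_tt (hq : ‖q‖ < 1) (m : ℕ) : ‖∑' k, tt q m k‖ ≤ (1 - ‖q‖)⁻¹ := by
  refine tsum_of_norm_bounded (hasSum_geometric_of_lt_one (norm_nonneg q) hq) (fun k => ?_)
  refine (norm_tt_le hq m k).trans ?_
  exact mul_le_of_le_one_left (by positivity) (pow_le_one₀ (norm_nonneg _) hq.le)

lemma T_formula (hq : ‖q‖ < 1) (hq0 : q ≠ 0) (m : ℕ) :
    PP q - U q m = PP q * ∑' k, tt q m k := by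
  refine unique_rec (q := q) hq (x := fun m => PP q - U q m) (y := fun m => PP q * ∑' k, tt q m k)
    (p := PP q) (B := ‖PP q‖ + ∑' μ, ‖wt q μ‖ + ‖PP q‖ * (1 - ‖q‖)⁻¹) ?_ ?_ ?_ m
  · intro m
    rw [T_rel hq hq0]; ring
  · intro m
    rw [tt_rel hq]; ring
  · intro m
    refine (norm_sub_le _ _).trans (add_le_add ((norm_sub_le _ _).trans
      (add_le_add le_rfl (norm_U_le hq _))) ?_)
    rw [norm_mul]
    exact mul_le_mul_of_nonneg_left (norm_tsum_tt hq m) (norm_nonneg _)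

lemma Un_formula (hq : ‖q‖ < 1) (hq0 : q ≠ 0) (m : ℕ) :
    U q (-(m : ℤ) - 1) = PP q * ∑' k, tt q m k := by
  refine unique_rec (q := q) hq (x := fun m : ℕ => U q (-(m : ℤ) - 1)) (y := fun m => PP q * ∑' k, tt q m k)
    (p := PP q) (B := ∑' μ, ‖wt q μ‖ + ‖PP q‖ * (1 - ‖q‖)⁻¹) ?_ ?_ ?_ m
  · intro m
    exact Un_rel hq hq0 m
  · intro m
    rw [tt_rel hq]; ring
  · intro m
    refine (norm_sub_le _ _).trans (add_le_add (norm_U_le hq _) ?_)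
    rw [norm_mul]
    exact mul_le_mul_of_nonneg_left (norm_tsum_tt hq m) (norm_nonneg _)

/-- Gauss identity: one over the product is a theta series. -/
lemma gauss (hq : ‖q‖ < 1) (hq0 : q ≠ 0) :
    PP q * (1 - q - ∑' k, tt q 0 k + q * ∑' k, tt q 1 k) = 1 := by
  have h1 := gauss_rel hq hq0
  have h2 := Un_formula hq hq0 0
  have h3 := T_formula hq hq0 1
  norm_num at h2 h3
  linear_combination h1 + h2 - q * h3

end M2R

namespace M2R
open Filter Topology
variable {q : ℂ}

lemma hasSum_congr' {β : Type*} {f g : β → ℂ} {a b : ℂ} (h : HasSum f a)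
    (hfg : ∀ n, g n = f n) (hab : b = a) : HasSum g b := by
  rw [funext hfg, hab]; exact h

/-- Rank generating function. -/
noncomputable def R2 (z q : ℂ) : ℂ := ∑' μ, wt q μ * z ^ rk μ

lemma summable_R2 {z : ℂ} (hz : ‖z‖ = 1) (hq : ‖q‖ < 1) :
    Summable (fun μ => wt q μ * z ^ rk μ) := by
  refine Summable.of_norm_bounded (summable_wt_norm hq) (fun μ => ?_)
  rw [norm_mul, norm_zpow, hz, one_zpow, mul_one]

lemma R2_int {z : ℂ} (hz : ‖z‖ = 1) (hq : ‖q‖ < 1) :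
    HasSum (fun m : ℤ => z ^ m * (U q m - U q (m - 1))) (R2 z q) := by
  have h := (summable_R2 hz hq).hasSum.tsum_fiberwise rk
  refine hasSum_congr' h (fun m => ?_) rfl
  rw [tsum_subtype (rk ⁻¹' {m} : Set (Multiset ℕ)) (fun μ => wt q μ * z ^ rk μ)]
  unfold U
  rw [← (summable_U hq m).tsum_sub (summable_U hq (m - 1)), ← tsum_mul_left]
  congr 1
  funext μ
  rw [Set.indicator_apply]
  simp only [Set.mem_preimage, Set.mem_singleton_iff]
  split_ifs with h1 h2 h3 h3 h4 <;> first | omega | (try subst h3); ring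

/-- Base of geometric sums. -/
noncomputable def QQ (q : ℂ) (k : ℕ) : ℂ := q ^ (2 * (k + 1))

lemma norm_QQ_le (hq : ‖q‖ < 1) (k : ℕ) : ‖QQ q k‖ ≤ ‖q‖ := by
  unfold QQ
  rw [norm_pow]
  calc ‖q‖ ^ (2 * (k + 1)) ≤ ‖q‖ ^ 1 := pow_le_pow_of_le_one (norm_nonneg _) hq.le (by omega)
    _ = ‖q‖ := pow_one _

lemma tt_eq (m k : ℕ) : tt q m k = tt q 0 k * QQ q k ^ m := by
  unfold tt QQ; ring

lemma one_sub_ne {z : ℂ} (hz : ‖z‖ = 1) (hq : ‖q‖ < 1) (k : ℕ) : 1 - z * QQ q k ≠ 0 := by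
  intro h
  have h1 : z * QQ q k = 1 := (sub_eq_zero.1 h).symm
  have h2 : ‖z * QQ q k‖ < 1 := by
    rw [norm_mul, hz, one_mul]; exact (norm_QQ_le hq k).trans_lt hq
  rw [h1, norm_one] at h2
  exact lt_irrefl _ h2

lemma geom_part {z : ℂ} (hz : ‖z‖ = 1) (hq : ‖q‖ < 1) :
    Summable (fun k => tt q 0 k * (1 - QQ q k) * (z / (1 - z * QQ q k))) ∧
    HasSum (fun n : ℕ => z ^ (n + 1) * (∑' k, tt q n k - ∑' k, tt q (n + 1) k))
      (∑' k, tt q 0 k * (1 - QQ q k) * (z / (1 - z * QQ q k))) := by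
  set F : ℕ × ℕ → ℂ := fun p => z ^ (p.1 + 1) * (tt q p.1 p.2 * (1 - QQ q p.2)) with hF
  have hs : Summable F := by
    have h1 : Summable (fun p : ℕ × ℕ => ‖q‖ ^ p.1 * ‖q‖ ^ p.2 * 2) := by
      apply Summable.mul_right
      exact (summable_geometric_of_lt_one (norm_nonneg q) hq).mul_of_nonneg
        (summable_geometric_of_lt_one (norm_nonneg q) hq) (fun _ => by positivity)
        (fun _ => by positivity)
    refine Summable.of_norm_bounded h1 (fun p => ?_)
    simp only [hF]
    rw [norm_mul, norm_mul, norm_pow, hz, one_pow, one_mul]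
    apply mul_le_mul (norm_tt_le hq _ _) _ (norm_nonneg _) (by positivity)
    refine (norm_sub_le _ _).trans ?_
    have := norm_QQ_le hq p.2
    rw [norm_one]; linarith
  have hA : HasSum (fun n : ℕ => z ^ (n + 1) * (∑' k, tt q n k - ∑' k, tt q (n + 1) k)) (∑' p, F p) := by
    refine hs.hasSum.prod_fiberwise (fun n => ?_)
    simp only [hF]
    refine HasSum.mul_left _ ?_
    have := (summable_tt hq n).hasSum.sub (summable_tt hq (n + 1)).hasSum
    refine hasSum_congr' this (fun k => ?_) rfl
    rw [tt_eq n k, tt_eq (n + 1) k]; ring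
  have hB : HasSum (fun k => tt q 0 k * (1 - QQ q k) * (z / (1 - z * QQ q k))) (∑' p, F p) := by
    have h2 := (Equiv.prodComm ℕ ℕ).hasSum_iff.2 hs.hasSum
    refine h2.prod_fiberwise (fun k => ?_)
    have hg := hasSum_geometric_of_norm_lt_one (ξ := z * QQ q k) (by
      rw [norm_mul, hz, one_mul]; exact (norm_QQ_le hq k).trans_lt hq)
    refine hasSum_congr' (hg.mul_left (tt q 0 k * (1 - QQ q k) * z)) (fun n => ?_) ?_
    · simp only [hF, Function.comp, Equiv.prodComm_apply, Prod.swap]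
      rw [tt_eq n k, mul_pow]; ring
    · rw [div_eq_mul_inv]; ring
  exact ⟨hB.summable, hB.tsum_eq ▸ hA⟩

lemma R2_formula {z : ℂ} (hz : ‖z‖ = 1) (hq : ‖q‖ < 1) (hq0 : q ≠ 0) :
    Summable (fun k => tt q 0 k * ((z - 1) / (1 - z * QQ q k) + (z⁻¹ - 1) / (1 - z⁻¹ * QQ q k))) ∧
    R2 z q = PP q * (1 + ∑' k, tt q 0 k * ((z - 1) / (1 - z * QQ q k) + (z⁻¹ - 1) / (1 - z⁻¹ * QQ q k))) := by
  have hz' : ‖z⁻¹‖ = 1 := by rw [norm_inv, hz, inv_one]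
  have hz0 : z ≠ 0 := by rintro rfl; simp at hz
  obtain ⟨s1, h1⟩ := geom_part hz hq
  obtain ⟨s2, h2⟩ := geom_part hz' hq
  have s0 := summable_tt hq 0
  have hpos : HasSum (fun n : ℕ => z ^ (n : ℤ) * (U q n - U q ((n : ℤ) - 1)))
      (PP q * (∑' k, tt q 0 k * (1 - QQ q k) * (z / (1 - z * QQ q k))) +
        (PP q - 2 * (PP q * ∑' k, tt q 0 k))) := by
    have h3 := h1.mul_left (PP q)
    rw [← hasSum_nat_add_iff' 1]
    refine hasSum_congr' h3 (fun n => ?_) ?_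
    · have a1 := T_formula hq hq0 n
      have a2 := T_formula hq hq0 (n + 1)
      rw [show (((n + 1 : ℕ) : ℤ) - 1) = n by push_cast; ring, zpow_natCast]
      linear_combination z ^ (n + 1) * (a1 - a2)
    · have a1 := T_formula hq hq0 0
      have a2 := Un_formula hq hq0 0
      norm_num at a1 a2
      simp only [Finset.range_one, Finset.sum_singleton, Nat.cast_zero, zpow_zero, zero_sub]
      linear_combination a1 + a2
  have hneg : HasSum (fun n : ℕ => z ^ (-((n : ℤ) + 1)) * (U q (-((n : ℤ) + 1)) - U q (-((n : ℤ) + 1) - 1)))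
      (PP q * (∑' k, tt q 0 k * (1 - QQ q k) * (z⁻¹ / (1 - z⁻¹ * QQ q k)))) := by
    refine hasSum_congr' (h2.mul_left (PP q)) (fun n => ?_) rfl
    have a1 := Un_formula hq hq0 n
    have a2 := Un_formula hq hq0 (n + 1)
    rw [show -((n : ℤ) + 1) = -(n : ℤ) - 1 by ring]
    rw [show -(((n + 1 : ℕ) : ℤ)) - 1 = -(n : ℤ) - 1 - 1 by push_cast; ring] at a2
    have e : z ^ (-(n : ℤ) - 1) = z⁻¹ ^ (n + 1) := by
      rw [inv_pow, ← zpow_natCast, ← zpow_neg]; congr 1; push_cast; ring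
    rw [e, a1, a2]; ring
  have hall := (R2_int hz hq).unique (HasSum.of_nat_of_neg_add_one
    (f := fun m : ℤ => z ^ m * (U q m - U q (m - 1))) hpos hneg)
  have key : ∀ k, tt q 0 k * ((z - 1) / (1 - z * QQ q k) + (z⁻¹ - 1) / (1 - z⁻¹ * QQ q k)) =
      tt q 0 k * (1 - QQ q k) * (z / (1 - z * QQ q k)) +
      tt q 0 k * (1 - QQ q k) * (z⁻¹ / (1 - z⁻¹ * QQ q k)) - 2 * tt q 0 k := by
    intro k
    have n1 := one_sub_ne hz hq k
    have n2 := one_sub_ne hz' hq k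
    have e1 : (z - 1) / (1 - z * QQ q k) = (1 - QQ q k) * (z / (1 - z * QQ q k)) - 1 := by
      rw [eq_sub_iff_add_eq, ← mul_div_assoc, div_add_one n1]; congr 1; ring
    have e2 : (z⁻¹ - 1) / (1 - z⁻¹ * QQ q k) = (1 - QQ q k) * (z⁻¹ / (1 - z⁻¹ * QQ q k)) - 1 := by
      rw [eq_sub_iff_add_eq, ← mul_div_assoc, div_add_one n2]; congr 1; ring
    rw [e1, e2]; ring
  have hS := (s1.hasSum.add s2.hasSum).sub (s0.hasSum.mul_left 2)
  simp only [← key] at hS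
  refine ⟨hS.summable, ?_⟩
  rw [hS.tsum_eq, hall]
  ring

/-- The tenth root of unity. -/
noncomputable def ζ : ℂ := Complex.exp (2 * Real.pi * Complex.I / 10)

lemma ζ_norm : ‖ζ‖ = 1 := by
  unfold ζ
  rw [show (2 * Real.pi * Complex.I / 10 : ℂ) = ((2 * Real.pi / 10 : ℝ) : ℂ) * Complex.I by
    push_cast; ring]
  exact Complex.norm_exp_ofReal_mul_I _

lemma ζ_pow : ζ ^ (10 : ℤ) = 1 := by
  unfold ζ
  rw [← Complex.exp_int_mul]
  rw [show ((10 : ℤ) : ℂ) * (2 * Real.pi * Complex.I / 10 : ℂ) = 2 * Real.pi * Complex.I by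
    push_cast; ring]
  exact Complex.exp_two_pi_mul_I

lemma ζ_zpow_eq {k : ℤ} {r : ℤ} (h : k ≡ r [ZMOD 10]) : ζ ^ k = ζ ^ r := by
  have hz0 : ζ ≠ 0 := Complex.exp_ne_zero _
  obtain ⟨j, hj⟩ := h.symm.dvd
  rw [show k = r + 10 * j by omega, zpow_add₀ hz0, zpow_mul, ζ_pow, one_zpow, mul_one]

lemma Acoef_eq (n : ℕ) : Acoef 1 10 n =
    ∑ P : n.Partition, if NoRepeatedOddParts P then ζ ^ m2Rank P else 0 := by
  unfold Acoef N2
  have h1 : ∀ r : ℕ, ((Nat.card {P : n.Partition // NoRepeatedOddParts P ∧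
      m2Rank P ≡ (r : ℤ) [ZMOD ((10 : ℕ) : ℤ)]} : ℕ) : ℂ) =
      ∑ P : n.Partition, if NoRepeatedOddParts P ∧ m2Rank P ≡ (r : ℤ) [ZMOD 10] then 1 else 0 := by
    intro r
    rw [Nat.card_eq_fintype_card, Fintype.card_subtype, Finset.card_eq_sum_ones, Nat.cast_sum,
      Finset.sum_filter]
    simp
  simp only [h1, Finset.sum_mul]
  rw [Finset.sum_comm]
  apply Finset.sum_congr rfl
  intro P _
  split_ifs with hP
  · have hr : 0 ≤ m2Rank P % 10 ∧ m2Rank P % 10 < 10 := by omega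
    rw [Finset.sum_eq_single_of_mem (m2Rank P % 10).toNat (Finset.mem_range.2 (by omega))]
    · have e : (((m2Rank P % 10).toNat : ℕ) : ℤ) = m2Rank P % 10 := by omega
      have hm : m2Rank P ≡ (((m2Rank P % 10).toNat : ℕ) : ℤ) [ZMOD 10] := by
        rw [e]; exact (Int.mod_modEq _ _).symm
      rw [if_pos ⟨hP, hm⟩, one_mul, ζ_zpow_eq hm, zpow_natCast]
      unfold ζ
      rw [← Complex.exp_nat_mul]
      congr 1
      push_cast
      ring
    · intro b hb hne
      rw [if_neg, zero_mul]
      rintro ⟨_, h⟩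
      apply hne
      have := Finset.mem_range.1 hb
      unfold Int.ModEq at h
      omega
  · simp [hP]

lemma hasSum_Acoef (hq : ‖q‖ < 1) : HasSum (fun n : ℕ => Acoef 1 10 n * q ^ n) (R2 ζ q) := by
  have h := (summable_R2 ζ_norm hq).hasSum.tsum_fiberwise Multiset.sum
  refine hasSum_congr' h (fun n => ?_) rfl
  rw [tsum_subtype (Multiset.sum ⁻¹' {n} : Set (Multiset ℕ)) (fun μ => wt q μ * ζ ^ rk μ)]
  have hinj : Function.Injective (fun P : n.Partition => P.parts) := by
    intro a b hab; exact Nat.Partition.ext hab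
  rw [← hinj.tsum_eq, tsum_fintype, Acoef_eq, Finset.sum_mul]
  · apply Finset.sum_congr rfl
    intro P _
    rw [Set.indicator_of_mem (by simpa using P.parts_sum)]
    have e : NRO P.parts ↔ NoRepeatedOddParts P := by
      unfold NRO NoRepeatedOddParts
      constructor
      · exact fun h => h.2
      · exact fun h => ⟨fun h0 => lt_irrefl _ (P.parts_pos h0), h⟩
    unfold wt
    simp only [e, P.parts_sum]
    split_ifs
    · unfold rk m2Rank; ring
    · ring
  · intro μ hμ
    rw [Function.mem_support, ne_eq, Set.indicator_apply] at hμ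
    by_cases h1 : μ ∈ (Multiset.sum ⁻¹' {n} : Set (Multiset ℕ))
    · rw [if_pos h1] at hμ
      by_cases h2 : NRO μ
      · refine ⟨⟨μ, fun {i} hi => Nat.pos_of_ne_zero ?_, by simpa using h1⟩, rfl⟩
        rintro rfl; exact h2.1 hi
      · simp [wt, h2] at hμ
    · rw [if_neg h1] at hμ; exact absurd rfl hμ

lemma summable_Acoef (hq : ‖q‖ < 1) : Summable (fun n : ℕ => ‖Acoef 1 10 n * q ^ n‖) :=
  (hasSum_Acoef hq).summable.norm

end M2R

namespace M2R
open Filter Topology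
variable {q : ℂ}

/-- Generating function with all members at most `2 * M`. -/
noncomputable def HH (q : ℂ) (M : ℕ) : ℂ := ∑' μ, if (∀ x ∈ μ, x ≤ 2 * M) then wt q μ else 0

lemma summable_HH (hq : ‖q‖ < 1) (M : ℕ) :
    Summable (fun μ => if (∀ x ∈ μ, x ≤ 2 * M) then wt q μ else 0) := by
  refine Summable.of_norm_bounded (summable_wt_norm hq) (fun μ => ?_)
  split_ifs <;> simp

lemma hasSum_HH (hq : ‖q‖ < 1) (M : ℕ) : HasSum (fun s : ℕ => g q M s) (HH q M) := by
  have h := (summable_HH hq M).hasSum.tsum_fiberwise Multiset.card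
  refine hasSum_congr' h (fun s => ?_) rfl
  rw [tsum_subtype (Multiset.card ⁻¹' {s} : Set (Multiset ℕ))
    (fun μ => if (∀ x ∈ μ, x ≤ 2 * M) then wt q μ else 0)]
  rw [tsum_eq_sum (s := SS M s)]
  · unfold g
    apply Finset.sum_congr rfl
    intro μ hμ
    obtain ⟨a, b, c⟩ := mem_SS.1 hμ
    rw [Set.indicator_of_mem (by simpa using b), if_pos c, wt, if_pos a]
  · intro μ hμ
    by_cases hb : Multiset.card μ = s
    · rw [Set.indicator_of_mem (by simpa using hb)]
      split_ifs with h1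
      · unfold wt
        rw [if_neg]
        intro h2
        exact hμ (mem_SS.2 ⟨h2, hb, h1⟩)
      · rfl
    · rw [Set.indicator_of_notMem (by simpa using hb)]

lemma HH_tendsto (hq : ‖q‖ < 1) : Tendsto (HH q) atTop (𝓝 (PP q)) := by
  unfold HH PP
  refine tendsto_tsum_of_dominated_convergence (summable_wt_norm hq) (fun μ => ?_)
    (Eventually.of_forall fun M μ => ?_)
  · apply tendsto_const_nhds.congr'
    filter_upwards [eventually_ge_atTop μ.sup] with M hM
    rw [if_pos]
    intro x hx
    have := Multiset.le_sup hx
    omega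
  · split_ifs <;> simp

lemma HH_zero (hq : ‖q‖ < 1) : HH q 0 = 1 := by
  have h := hasSum_HH hq 0
  refine h.unique (hasSum_congr' (hasSum_ite_eq 0 (1 : ℂ)) (fun n => ?_) rfl)
  cases n with
  | zero => simp [g_zero_right]
  | succ n => simp [g_zero_left]

lemma HH_succ (hq : ‖q‖ < 1) (M : ℕ) :
    HH q (M + 1) * (1 - q ^ (2 * M + 2)) = HH q M * (1 + q ^ (2 * M + 1)) := by
  have h1 := (hasSum_nat_add_iff' 1).2 (hasSum_HH hq (M + 1))
  have h2 := (hasSum_nat_add_iff' 1).2 (hasSum_HH hq M)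
  have h3 := ((hasSum_HH hq (M + 1)).mul_left (q ^ (2 * M + 2))).add h2 |>.add
    ((hasSum_HH hq M).mul_left (q ^ (2 * M + 1)))
  have h4 := h1.unique (hasSum_congr' h3 (fun n => g_succ (q := q) M n) rfl)
  simp only [Finset.range_one, Finset.sum_singleton, g_zero_right] at h4
  linear_combination h4

lemma pow_norm_lt (hq : ‖q‖ < 1) (k : ℕ) : ‖q ^ (k + 1)‖ < 1 := by
  rw [norm_pow]; exact pow_lt_one₀ (norm_nonneg _) hq (by omega)

/-- logarithmic factor -/
noncomputable def aj (q : ℂ) (j : ℕ) : ℂ :=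
  Complex.log (1 + q ^ (2 * j + 1)) + -Complex.log (1 - q ^ (2 * j + 2))

lemma HH_eq (hq : ‖q‖ < 1) (M : ℕ) : HH q M = Complex.exp (∑ j ∈ Finset.range M, aj q j) := by
  induction M with
  | zero => simp [HH_zero hq]
  | succ M ih =>
    have n1 : 1 - q ^ (2 * M + 2) ≠ 0 := by
      intro h
      have h1 : q ^ (2 * M + 1 + 1) = 1 := (sub_eq_zero.1 h).symm
      have := pow_norm_lt hq (2 * M + 1)
      rw [h1, norm_one] at this; exact lt_irrefl _ this
    have n2 : 1 + q ^ (2 * M + 1) ≠ 0 := by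
      intro h
      have h1 : q ^ (2 * M + 1) = -1 := by linear_combination h
      have := pow_norm_lt hq (2 * M)
      rw [h1, norm_neg, norm_one] at this; exact lt_irrefl _ this
    rw [Finset.sum_range_succ, Complex.exp_add, ← ih, aj, Complex.exp_add, Complex.exp_neg,
      Complex.exp_log n1, Complex.exp_log n2]
    have := HH_succ hq M
    field_simp
    linear_combination this

/-- double series term -/
noncomputable def FF (q : ℂ) (p : ℕ × ℕ) : ℂ :=
  (-1) ^ (p.2 + 1) * (q ^ (2 * p.1 + 1)) ^ p.2 / p.2 + (q ^ (2 * p.1 + 2)) ^ p.2 / p.2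

lemma summable_FF (hq : ‖q‖ < 1) : Summable (FF q) := by
  have h1 : Summable (fun p : ℕ × ℕ => ‖q‖ ^ p.1 * ‖q‖ ^ p.2 * 2) := by
    apply Summable.mul_right
    exact (summable_geometric_of_lt_one (norm_nonneg q) hq).mul_of_nonneg
      (summable_geometric_of_lt_one (norm_nonneg q) hq) (fun _ => by positivity)
      (fun _ => by positivity)
  refine Summable.of_norm_bounded h1 (fun p => ?_)
  obtain ⟨j, k⟩ := p
  unfold FF
  rcases Nat.eq_zero_or_pos k with rfl | hk
  · simp
  have hk1 : (1 : ℝ) ≤ k := by exact_mod_cast hk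
  refine (norm_add_le _ _).trans ?_
  simp only [norm_div, norm_mul, norm_pow, norm_neg, norm_one, one_pow, one_mul, Complex.norm_natCast]
  have b1 : (‖q‖ ^ (2 * j + 1)) ^ k / k ≤ ‖q‖ ^ j * ‖q‖ ^ k := by
    refine (div_le_self (by positivity) hk1).trans ?_
    rw [← pow_mul, ← pow_add]
    exact pow_le_pow_of_le_one (norm_nonneg _) hq.le (by nlinarith)
  have b2 : (‖q‖ ^ (2 * j + 2)) ^ k / k ≤ ‖q‖ ^ j * ‖q‖ ^ k := by
    refine (div_le_self (by positivity) hk1).trans ?_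
    rw [← pow_mul, ← pow_add]
    exact pow_le_pow_of_le_one (norm_nonneg _) hq.le (by nlinarith)
  linarith

/-- Lambert term -/
noncomputable def LL (q : ℂ) (k : ℕ) : ℂ :=
  if Odd k then q ^ k / (1 - q ^ k) / k else -(q ^ k / (1 + q ^ k) / k)

lemma PP_exp (hq : ‖q‖ < 1) : Summable (LL q) ∧ PP q = Complex.exp (∑' k, LL q k) := by
  have hs := (summable_FF hq).hasSum
  have hA : HasSum (aj q) (∑' p, FF q p) := by
    refine hs.prod_fiberwise (fun j => ?_)
    have e1 := Complex.hasSum_taylorSeries_log (pow_norm_lt hq (2 * j))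
    have e2 := Complex.hasSum_taylorSeries_neg_log (pow_norm_lt hq (2 * j + 1))
    refine hasSum_congr' (e1.add e2) (fun n => ?_) ?_
    · unfold FF; rfl
    · unfold aj; rfl
  have hB : HasSum (LL q) (∑' p, FF q p) := by
    have h2 := (Equiv.prodComm ℕ ℕ).hasSum_iff.2 hs
    refine h2.prod_fiberwise (fun k => ?_)
    rcases Nat.eq_zero_or_pos k with rfl | hk
    · refine hasSum_congr' hasSum_zero (fun n => ?_) ?_
      · simp [FF]
      · simp [LL]
    have hl : ‖q ^ k‖ < 1 := by obtain ⟨m, rfl⟩ := Nat.exists_eq_add_of_lt hk; simpa using pow_norm_lt hq m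
    have hl2 : ‖(q ^ k) ^ 2‖ < 1 := by rw [norm_pow]; exact pow_lt_one₀ (norm_nonneg _) hl (by omega)
    have hg := (hasSum_geometric_of_norm_lt_one hl2).mul_left (((-1) ^ (k + 1) * q ^ k + (q ^ k) ^ 2) / k)
    have n1 : 1 - q ^ k ≠ 0 := by
      intro h
      have h1 : q ^ k = 1 := (sub_eq_zero.1 h).symm
      rw [h1, norm_one] at hl; exact lt_irrefl _ hl
    have n2 : 1 + q ^ k ≠ 0 := by
      intro h
      have h1 : q ^ k = -1 := by linear_combination h
      rw [h1, norm_neg, norm_one] at hl; exact lt_irrefl _ hl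
    have n3 : (k : ℂ) ≠ 0 := by exact_mod_cast hk.ne'
    have n4 : 1 - (q ^ k) ^ 2 ≠ 0 := by
      rw [show 1 - (q ^ k) ^ 2 = (1 - q ^ k) * (1 + q ^ k) by ring]; exact mul_ne_zero n1 n2
    refine hasSum_congr' hg (fun n => ?_) ?_
    · simp only [Function.comp, Equiv.prodComm_apply, Prod.swap]
      unfold FF
      simp only []
      ring
    · unfold LL
      rw [show (1 - (q ^ k) ^ 2)⁻¹ = (1 - q ^ k)⁻¹ * (1 + q ^ k)⁻¹ by
        rw [← mul_inv]; congr 1; ring]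
      split_ifs with ho
      · rw [(Even.neg_one_pow (by rcases ho with ⟨m, rfl⟩; exact ⟨m + 1, by ring⟩) : (-1 : ℂ) ^ (k + 1) = 1)]
        field_simp
      · have he : Even k := Nat.not_odd_iff_even.1 ho
        rw [(Odd.neg_one_pow (by rcases he with ⟨m, rfl⟩; exact ⟨m, by ring⟩) : (-1 : ℂ) ^ (k + 1) = -1)]
        field_simp
        ring
  refine ⟨hB.summable, ?_⟩
  rw [hB.tsum_eq]
  refine tendsto_nhds_unique (HH_tendsto hq) ?_
  rw [funext (HH_eq hq)]
  exact (Complex.continuous_exp.tendsto _).comp hA.tendsto_sum_nat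

end M2R

namespace M2R
open Filter Topology
variable {q : ℂ}

lemma LL_le' {B : ℝ} (k : ℕ) (hq : ‖q‖ ≤ 1)
    (h : B⁻¹ ≤ ‖if Odd k then 1 - q ^ k else 1 + q ^ k‖) (hB0 : 0 < B) : ‖LL q k‖ ≤ B / k := by
  have hq' : ‖q ^ k‖ ≤ 1 := by rw [norm_pow]; exact pow_le_one₀ (norm_nonneg _) hq
  have hB' : 0 < B⁻¹ := inv_pos.2 hB0
  have key : ∀ x : ℂ, B⁻¹ ≤ ‖x‖ → ‖q ^ k / x / k‖ ≤ B / k := by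
    intro x hx
    rw [norm_div, norm_div, Complex.norm_natCast]
    apply div_le_div_of_nonneg_right _ (Nat.cast_nonneg k)
    rw [div_le_iff₀ (hB'.trans_le hx)]
    calc ‖q ^ k‖ ≤ 1 := hq'
      _ = B * B⁻¹ := (mul_inv_cancel₀ hB0.ne').symm
      _ ≤ B * ‖x‖ := by gcongr
  unfold LL
  split_ifs with ho
  · rw [if_pos ho] at h; exact key _ h
  · rw [if_neg ho] at h; rw [norm_neg]; exact key _ h

lemma exp_frac {x : ℝ} (hx : 0 < x) : Real.exp (-x) / (1 - Real.exp (-x)) ≤ 1 / x := by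
  have h1 : Real.exp (-x) < 1 := Real.exp_lt_one_iff.2 (by linarith)
  rw [div_le_div_iff₀ (by linarith) hx, one_mul]
  have h2 := Real.add_one_le_exp x
  have h3 : Real.exp (-x) * Real.exp x = 1 := by rw [← Real.exp_add]; simp
  have := Real.exp_pos (-x)
  nlinarith

lemma LL_le {t : ℝ} (ht : 0 < t) (hq : ‖q‖ = Real.exp (-t)) (k : ℕ) :
    ‖LL q k‖ ≤ 1 / (k : ℝ) ^ 2 / t := by
  rcases Nat.eq_zero_or_pos k with rfl | hk
  · simp [LL]
  have hk' : (0 : ℝ) < k := by exact_mod_cast hk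
  have hr : ‖q ^ k‖ = Real.exp (-(k * t)) := by
    rw [norm_pow, hq, ← Real.exp_nat_mul]; congr 1; ring
  have h1 : Real.exp (-(k * t)) < 1 := Real.exp_lt_one_iff.2 (neg_lt_zero.2 (by positivity))
  have key : ∀ x : ℂ, 1 - Real.exp (-(k * t)) ≤ ‖x‖ → ‖q ^ k / x / k‖ ≤ 1 / (k : ℝ) ^ 2 / t := by
    intro x hx
    rw [norm_div, norm_div, Complex.norm_natCast, hr]
    calc Real.exp (-(k * t)) / ‖x‖ / k ≤ Real.exp (-(k * t)) / (1 - Real.exp (-(k * t))) / k := by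
          gcongr
      _ ≤ 1 / (k * t) / k := div_le_div_of_nonneg_right (exp_frac (by positivity)) hk'.le
      _ = _ := by field_simp
  unfold LL
  split_ifs with ho
  · apply key
    have := norm_sub_norm_le 1 (q ^ k)
    rwa [norm_one, hr] at this
  · rw [norm_neg]; apply key
    have := norm_sub_norm_le 1 (-q ^ k)
    rw [norm_one, norm_neg, hr, sub_neg_eq_add] at this
    exact this

lemma PP_bound {t : ℝ} (ht : 0 < t) (hq : ‖q‖ = Real.exp (-t)) (S : Finset ℕ) :
    ‖PP q‖ ≤ Real.exp (∑ k ∈ S, ‖LL q k‖ + (Real.pi ^ 2 / 6 - ∑ k ∈ S, 1 / (k : ℝ) ^ 2) / t) := by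
  have hq1 : ‖q‖ < 1 := by rw [hq]; exact Real.exp_lt_one_iff.2 (by linarith)
  obtain ⟨hs, hP⟩ := PP_exp hq1
  rw [hP, Complex.norm_exp]
  apply Real.exp_le_exp.2
  refine (Complex.re_le_norm _).trans ((norm_tsum_le_tsum_norm hs.norm).trans ?_)
  have hz := hasSum_zeta_two.div_const t
  rw [← hs.norm.sum_add_tsum_compl (s := S)]
  have h2 := hz.summable.sum_add_tsum_compl (s := S)
  rw [hz.tsum_eq] at h2
  have h3 : ∑' x : ((S : Set ℕ)ᶜ : Set ℕ), ‖LL q x‖ ≤ ∑' x : ((S : Set ℕ)ᶜ : Set ℕ), 1 / ((x : ℕ) : ℝ) ^ 2 / t :=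
    Summable.tsum_le_tsum (fun x => LL_le ht hq x) (hs.norm.subtype _) (hz.summable.subtype _)
  rw [sub_div, Finset.sum_div]
  linarith

lemma one_sub_exp_lower {τ : ℂ} (him : |τ.im| ≤ Real.pi) :
    4 * Real.exp (-τ.re) * (τ.im / Real.pi) ^ 2 ≤ ‖1 - Complex.exp (-τ)‖ ^ 2 := by
  have h1 := Real.cos_le_one_sub_mul_cos_sq him
  rw [← Complex.normSq_eq_norm_sq, Complex.normSq_apply]
  simp only [Complex.sub_re, Complex.sub_im, Complex.exp_re, Complex.exp_im, Complex.one_re,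
    Complex.one_im, Complex.neg_re, Complex.neg_im, Real.cos_neg, Real.sin_neg]
  have h2 := Real.sin_sq_add_cos_sq τ.im
  have h3 := Real.exp_pos (-τ.re)
  set r := Real.exp (-τ.re)
  have e : (1 - r * Real.cos τ.im) * (1 - r * Real.cos τ.im) + (0 - r * -Real.sin τ.im) * (0 - r * -Real.sin τ.im)
    = (1 - r) ^ 2 + 2 * r * (1 - Real.cos τ.im) := by linear_combination r ^ 2 * h2
  rw [e]
  have h4 : 2 / Real.pi ^ 2 * τ.im ^ 2 ≤ 1 - Real.cos τ.im := by linarith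
  have h5 : 4 * r * (τ.im / Real.pi) ^ 2 = 2 * r * (2 / Real.pi ^ 2 * τ.im ^ 2) := by rw [div_pow]; ring
  rw [h5]
  have : 2 * r * (2 / Real.pi ^ 2 * τ.im ^ 2) ≤ 2 * r * (1 - Real.cos τ.im) := by gcongr
  nlinarith [sq_nonneg (1 - r)]

lemma LL_one {τ : ℂ} (ht : 0 < τ.re) (him : |τ.im| ≤ Real.pi) (him2 : 1000 * τ.re ≤ |τ.im|) :
    ‖LL (Complex.exp (-τ)) 1‖ ≤ 0.002 / τ.re := by
  have h := one_sub_exp_lower him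
  have hn : ‖Complex.exp (-τ)‖ = Real.exp (-τ.re) := by rw [Complex.norm_exp, Complex.neg_re]
  have h0 := Real.exp_pos (-τ.re)
  have h1 : Real.exp (-τ.re) ≤ 1 := Real.exp_le_one_iff.2 (by linarith)
  unfold LL
  rw [if_pos odd_one, pow_one, Nat.cast_one, div_one, norm_div, hn]
  set y := ‖1 - Complex.exp (-τ)‖ with hy
  have hy0 : 0 ≤ y := norm_nonneg _
  set r := Real.exp (-τ.re) with hr
  have h5 : (1000 * τ.re) ^ 2 ≤ τ.im ^ 2 := by
    rw [← sq_abs τ.im]; gcongr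
  have hpi : Real.pi ^ 2 ≤ 10 := by nlinarith [Real.pi_lt_d2, Real.pi_gt_three]
  have h6 : 100000 * τ.re ^ 2 ≤ (τ.im / Real.pi) ^ 2 := by
    rw [div_pow, le_div_iff₀ (by positivity)]
    nlinarith [sq_nonneg τ.re]
  have h7 : 400000 * (r * τ.re) ^ 2 ≤ y ^ 2 := by
    calc 400000 * (r * τ.re) ^ 2 = 4 * r * r * (100000 * τ.re ^ 2) := by ring
      _ ≤ 4 * r * 1 * (τ.im / Real.pi) ^ 2 := by gcongr
      _ ≤ y ^ 2 := by linarith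
  have h8 : 500 * (r * τ.re) ≤ y := by
    apply le_of_sq_le_sq _ hy0
    nlinarith
  have hy1 : 0 < y := lt_of_lt_of_le (by positivity) h8
  rw [div_le_div_iff₀ hy1 ht]
  linarith

lemma PP_minor {τ : ℂ} (ht : 0 < τ.re) (him : |τ.im| ≤ Real.pi) (him2 : 1000 * τ.re ≤ |τ.im|) :
    ‖PP (Complex.exp (-τ))‖ ≤ Real.exp (0.434 / τ.re + 6) := by
  have hn : ‖Complex.exp (-τ)‖ = Real.exp (-τ.re) := by rw [Complex.norm_exp, Complex.neg_re]
  have h1 := LL_one ht him him2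
  have hq1 : ‖Complex.exp (-τ)‖ ≤ 1 := by rw [hn]; exact Real.exp_le_one_iff.2 (by linarith)
  set q := Complex.exp (-τ) with hq
  have hpi : Real.pi ^ 2 ≤ 9.8697 := by nlinarith [Real.pi_lt_d4, Real.pi_gt_three]
  by_cases hc : 1 / 10 ≤ ‖1 + q ^ 2‖
  · refine (PP_bound ht hn {1, 2}).trans (Real.exp_le_exp.2 ?_)
    have h2 : ‖LL q 2‖ ≤ 10 / (2 : ℕ) := by
      apply LL_le' 2 hq1 _ (by norm_num)
      rw [if_neg (by decide)]; norm_num at hc ⊢; exact hc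
    rw [Finset.sum_pair (by norm_num), Finset.sum_pair (by norm_num)]
    have h3 : (Real.pi ^ 2 / 6 - (1 / ((1 : ℕ) : ℝ) ^ 2 + 1 / ((2 : ℕ) : ℝ) ^ 2)) / τ.re ≤ 0.4 / τ.re := by
      apply div_le_div_of_nonneg_right _ ht.le
      norm_num; linarith
    have h4 : 0.434 / τ.re = 0.002 / τ.re + 0.4 / τ.re + 0.032 / τ.re := by rw [← add_div, ← add_div]; norm_num
    have h5 : 0 ≤ 0.032 / τ.re := by positivity
    norm_num at h2 h3 h4 h5 h1 ⊢
    linarith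
  · push Not at hc
    refine (PP_bound ht hn {1, 3, 4, 5}).trans (Real.exp_le_exp.2 ?_)
    set e := 1 + q ^ 2 with he
    have q2 : q ^ 2 = e - 1 := by rw [he]; ring
    have a0 : 1.9 ≤ ‖(1 + q) * (1 - q)‖ := by
      rw [show (1 + q) * (1 - q) = 2 - e by linear_combination -q2]
      have := norm_sub_norm_le 2 e
      norm_num at this ⊢; linarith
    rw [norm_mul] at a0
    have a1 : ‖1 + q‖ ≤ 2 := (norm_add_le _ _).trans (by rw [norm_one]; linarith)
    have a2 : ‖1 - q‖ ≤ 2 := (norm_sub_le _ _).trans (by rw [norm_one]; linarith)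
    have a3 : 0.9 ≤ ‖1 + q‖ := by nlinarith [norm_nonneg (1 + q), norm_nonneg (1 - q)]
    have a4 : 0.9 ≤ ‖1 - q‖ := by nlinarith [norm_nonneg (1 + q), norm_nonneg (1 - q)]
    have e0 := norm_nonneg e
    have qe : ‖q * e‖ ≤ 0.1 := by rw [norm_mul]; nlinarith [norm_nonneg q]
    have h3 : ‖LL q 3‖ ≤ 2 / (3 : ℕ) := by
      apply LL_le' 3 hq1 _ (by norm_num)
      rw [if_pos (by decide), show 1 - q ^ 3 = (1 + q) - q * e by linear_combination (-q) * q2]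
      have := norm_sub_norm_le (1 + q) (q * e)
      norm_num at this a3 qe ⊢; linarith
    have h4 : ‖LL q 4‖ ≤ 2 / (4 : ℕ) := by
      apply LL_le' 4 hq1 _ (by norm_num)
      rw [if_neg (by decide), show 1 + q ^ 4 = 2 - e * (2 - e) by linear_combination (q ^ 2 + e - 1) * q2]
      have := norm_sub_norm_le 2 (e * (2 - e))
      have b : ‖e * (2 - e)‖ ≤ 0.3 := by
        rw [norm_mul]
        have := norm_sub_le 2 e
        norm_num at this
        nlinarith [norm_nonneg (2 - e)]
      norm_num at this b ⊢; linarith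
    have h5 : ‖LL q 5‖ ≤ 2 / (5 : ℕ) := by
      apply LL_le' 5 hq1 _ (by norm_num)
      rw [if_pos (by decide), show 1 - q ^ 5 = (1 - q) - (q * e) * (e - 2) by
        linear_combination (-q * (q ^ 2 + e - 1)) * q2]
      have := norm_sub_norm_le (1 - q) ((q * e) * (e - 2))
      have b : ‖(q * e) * (e - 2)‖ ≤ 0.3 := by
        rw [norm_mul]
        have := norm_sub_le e 2
        norm_num at this
        nlinarith [norm_nonneg (e - 2), norm_nonneg (q * e)]
      norm_num at this b a4 ⊢; linarith
    rw [Finset.sum_insert (by norm_num), Finset.sum_insert (by norm_num), Finset.sum_pair (by norm_num),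
      Finset.sum_insert (by norm_num), Finset.sum_insert (by norm_num), Finset.sum_pair (by norm_num)]
    have h6 : (Real.pi ^ 2 / 6 - (1 / ((1 : ℕ) : ℝ) ^ 2 + (1 / ((3 : ℕ) : ℝ) ^ 2 + (1 / ((4 : ℕ) : ℝ) ^ 2
        + 1 / ((5 : ℕ) : ℝ) ^ 2)))) / τ.re ≤ 0.432 / τ.re := by
      apply div_le_div_of_nonneg_right _ ht.le
      norm_num; linarith
    have h7 : 0.434 / τ.re = 0.002 / τ.re + 0.432 / τ.re := by rw [← add_div]; norm_num
    norm_num at h3 h4 h5 h6 h7 h1 ⊢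
    linarith

lemma bracket_bound {z : ℂ} (hz : ‖z‖ = 1) (hq : ‖q‖ < 1) (k : ℕ) :
    ‖tt q 0 k * ((z - 1) / (1 - z * QQ q k) + (z⁻¹ - 1) / (1 - z⁻¹ * QQ q k))‖ ≤
      ‖q‖ ^ k * (4 / (1 - ‖q‖)) := by
  have key : ∀ w : ℂ, ‖w‖ = 1 → ‖(w - 1) / (1 - w * QQ q k)‖ ≤ 2 / (1 - ‖q‖) := by
    intro w hw
    rw [norm_div]
    have h1 : ‖w - 1‖ ≤ 2 := (norm_sub_le _ _).trans (by rw [hw, norm_one]; norm_num)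
    have h2 : 1 - ‖q‖ ≤ ‖1 - w * QQ q k‖ := by
      have := norm_sub_norm_le 1 (w * QQ q k)
      rw [norm_one, norm_mul, hw, one_mul] at this
      have := norm_QQ_le hq k
      linarith
    exact div_le_div₀ (by norm_num) h1 (by linarith) h2
  rw [norm_mul]
  have h1 := norm_tt_le hq 0 k
  rw [pow_zero, one_mul] at h1
  refine mul_le_mul h1 ?_ (norm_nonneg _) (by positivity)
  refine (norm_add_le _ _).trans ?_
  have a := key z hz
  have b := key z⁻¹ (by rw [norm_inv, hz, inv_one])
  calc _ ≤ 2 / (1 - ‖q‖) + 2 / (1 - ‖q‖) := add_le_add a b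
    _ = _ := by ring

lemma R2_le {z : ℂ} (hz : ‖z‖ = 1) (hq : ‖q‖ < 1) (hq0 : q ≠ 0) :
    ‖R2 z q‖ ≤ ‖PP q‖ * (1 + 4 / (1 - ‖q‖) ^ 2) := by
  obtain ⟨hs, h⟩ := R2_formula hz hq hq0
  rw [h, norm_mul]
  gcongr
  refine (norm_add_le _ _).trans ?_
  rw [norm_one]
  gcongr
  have hg := (hasSum_geometric_of_lt_one (norm_nonneg q) hq).mul_right (4 / (1 - ‖q‖))
  refine (tsum_of_norm_bounded hg (bracket_bound hz hq)).trans (le_of_eq ?_)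
  have : 1 - ‖q‖ ≠ 0 := by linarith
  field_simp

lemma R2_minor {τ : ℂ} (ht : 0 < τ.re) (ht1 : τ.re ≤ 1) (him : |τ.im| ≤ Real.pi)
    (him2 : 1000 * τ.re ≤ |τ.im|) :
    ‖R2 ζ (Complex.exp (-τ))‖ ≤ Real.exp (0.434 / τ.re + 6) * (1 + 16 / τ.re ^ 2) := by
  have hn : ‖Complex.exp (-τ)‖ = Real.exp (-τ.re) := by rw [Complex.norm_exp, Complex.neg_re]
  have hq1 : ‖Complex.exp (-τ)‖ < 1 := by rw [hn]; exact Real.exp_lt_one_iff.2 (by linarith)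
  refine (R2_le ζ_norm hq1 (Complex.exp_ne_zero _)).trans ?_
  apply mul_le_mul (PP_minor ht him him2) _ (by positivity) (by positivity)
  have h1 : τ.re / 2 ≤ 1 - Real.exp (-τ.re) := by
    have h2 := exp_frac ht
    have h3 : 0 < 1 - Real.exp (-τ.re) := by rw [hn] at hq1; linarith
    rw [div_le_div_iff₀ h3 ht] at h2
    nlinarith [Real.exp_pos (-τ.re)]
  rw [hn]
  have : 16 / τ.re ^ 2 = 4 / (τ.re / 2) ^ 2 := by field_simp; norm_num
  rw [this]
  gcongr

end M2R

namespace M2R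
open Filter Topology
variable {q : ℂ}

/-- z-argument -/
noncomputable def zz (τ : ℂ) : ℂ := 1 / 2 + Complex.I * τ / (2 * Real.pi)

/-- modular argument -/
noncomputable def ww (τ : ℂ) : ℂ := 2 * Complex.I * τ / Real.pi

lemma piC : (Real.pi : ℂ) ≠ 0 := by exact_mod_cast Real.pi_ne_zero

lemma theta_term (τ : ℂ) (n : ℤ) : jacobiTheta₂_term n (zz τ) (ww τ) =
    (-1) ^ n * Complex.exp (-((2 * n ^ 2 + n) * τ)) := by
  unfold jacobiTheta₂_term zz ww
  have h : (-1 : ℂ) ^ n = Complex.exp (n * (Real.pi * Complex.I)) := by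
    rw [Complex.exp_int_mul, Complex.exp_pi_mul_I]
  rw [h, ← Complex.exp_add]
  congr 1
  have := piC
  field_simp
  ring_nf
  rw [Complex.I_sq]; ring

lemma ww_im {τ : ℂ} (ht : 0 < τ.re) : 0 < (ww τ).im := by
  unfold ww
  rw [show 2 * Complex.I * τ / Real.pi = ((2 / Real.pi : ℝ) : ℂ) * (Complex.I * τ) by push_cast; ring,
    Complex.im_ofReal_mul]
  simp only [Complex.mul_im, Complex.I_re, Complex.I_im]
  have := Real.pi_pos
  have : 0 < 2 / Real.pi := by positivity
  simp; positivity

lemma PP_theta {τ : ℂ} (ht : 0 < τ.re) :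
    PP (Complex.exp (-τ)) * jacobiTheta₂ (zz τ) (ww τ) = 1 := by
  have hn : ‖Complex.exp (-τ)‖ = Real.exp (-τ.re) := by rw [Complex.norm_exp, Complex.neg_re]
  have hq1 : ‖Complex.exp (-τ)‖ < 1 := by rw [hn]; exact Real.exp_lt_one_iff.2 (by linarith)
  have hG := gauss hq1 (Complex.exp_ne_zero _)
  have h := hasSum_jacobiTheta₂_term (zz τ) (ww_im ht)
  have hpow : ∀ k : ℕ, Complex.exp (-τ) ^ k = Complex.exp (-(k * τ)) := by
    intro k; rw [← Complex.exp_nat_mul]; congr 1; ring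
  have h0 := (summable_tt hq1 0).hasSum
  have h1 := (summable_tt hq1 1).hasSum
  have hp : HasSum (fun n : ℕ => jacobiTheta₂_term (n : ℤ) (zz τ) (ww τ))
      (1 - ∑' k, tt (Complex.exp (-τ)) 0 k) := by
    rw [← hasSum_nat_add_iff' 1]
    refine hasSum_congr' h0.neg (fun n => ?_) ?_
    · rw [theta_term]; unfold tt
      rw [hpow, zpow_natCast, pow_succ]
      push_cast
      ring_nf
    · simp [theta_term]
  have hm : HasSum (fun n : ℕ => jacobiTheta₂_term (-((n : ℤ) + 1)) (zz τ) (ww τ))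
      (- Complex.exp (-τ) + Complex.exp (-τ) * ∑' k, tt (Complex.exp (-τ)) 1 k) := by
    rw [← hasSum_nat_add_iff' 1]
    refine hasSum_congr' (h1.mul_left (Complex.exp (-τ))) (fun n => ?_) ?_
    · rw [theta_term]; unfold tt
      rw [hpow, mul_left_comm, ← Complex.exp_add]
      congr 1
      · rw [show -(((n + 1 : ℕ) : ℤ) + 1) = -((n + 2 : ℕ) : ℤ) by push_cast; ring, zpow_neg, zpow_natCast,
          ← inv_pow, pow_add]; norm_num
      · congr 1; push_cast; ring
    · simp [theta_term]
      ring_nf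
  rw [h.unique (HasSum.of_nat_of_neg_add_one hp hm)]
  linear_combination hG

/-- transformed theta -/
noncomputable def EE (τ : ℂ) : ℂ := jacobiTheta₂ (zz τ / ww τ) (-1 / ww τ)

lemma EE_term {τ : ℂ} (h0 : τ ≠ 0) (n : ℤ) : jacobiTheta₂_term n (zz τ / ww τ) (-1 / ww τ) =
    Complex.exp (Real.pi * Complex.I * n / 2) * Complex.exp (-(((Real.pi ^ 2 / 2 : ℝ) : ℂ) * ((n ^ 2 - n : ℤ) : ℂ) * τ⁻¹)) := by
  unfold jacobiTheta₂_term zz ww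
  rw [← Complex.exp_add]
  congr 1
  have := piC
  have hI := Complex.I_ne_zero
  push_cast
  field_simp
  ring_nf

lemma PP_eq {τ : ℂ} (ht : 0 < τ.re) : PP (Complex.exp (-τ)) *
    (1 / (2 * τ / Real.pi) ^ (1 / 2 : ℂ) * Complex.exp (-(Real.pi ^ 2 / (8 * τ)) - Real.pi * Complex.I / 4 + τ / 8)
      * EE τ) = 1 := by
  have h0 : τ ≠ 0 := by rintro rfl; simp at ht
  have hT := PP_theta ht
  rw [jacobiTheta₂_functional_equation] at hT
  unfold EE
  have hp := piC
  have e1 : -Complex.I * ww τ = 2 * τ / Real.pi := by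
    unfold ww; field_simp; rw [Complex.I_sq]; ring
  have e2 : -Real.pi * Complex.I * zz τ ^ 2 / ww τ =
      -(Real.pi ^ 2 / (8 * τ)) - Real.pi * Complex.I / 4 + τ / 8 := by
    unfold zz ww
    have hI := Complex.I_ne_zero
    field_simp
    ring_nf
    simp only [Complex.I_sq]
    ring
  rw [e1, e2] at hT
  exact hT

/-- cusp filter -/
noncomputable def cusp : Filter ℂ := comap (fun τ : ℂ => (τ⁻¹).re) atTop

lemma cusp_ge (x : ℝ) : ∀ᶠ τ : ℂ in cusp, x ≤ (τ⁻¹).re := tendsto_comap.eventually_ge_atTop x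

lemma re_pos_of_inv {τ : ℂ} (h : 0 < (τ⁻¹).re) : 0 < τ.re := by
  rw [Complex.inv_re] at h
  by_contra hc
  push Not at hc
  have := div_nonpos_of_nonpos_of_nonneg hc (Complex.normSq_nonneg τ)
  linarith

lemma cusp_re : ∀ᶠ τ : ℂ in cusp, 0 < τ.re := by
  filter_upwards [cusp_ge 1] with τ h
  exact re_pos_of_inv (by linarith)

lemma EE_tendsto : Tendsto EE cusp (𝓝 (1 + Complex.I)) := by
  have hs : Summable (fun n : ℤ => Real.exp (1 - |(n : ℝ)|)) := by
    have h1 : Summable (fun n : ℕ => Real.exp 1 * Real.exp (-1) ^ n) :=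
      (summable_geometric_of_lt_one (Real.exp_pos _).le (Real.exp_lt_one_iff.2 (by norm_num))).mul_left _
    have e : ∀ n : ℕ, Real.exp (1 - |((n : ℤ) : ℝ)|) = Real.exp 1 * Real.exp (-1) ^ n := by
      intro n
      rw [← Real.exp_nat_mul, ← Real.exp_add]; congr 1; simp; ring
    apply Summable.of_nat_of_neg
    · simp only [e]; exact h1
    · simp only [Int.cast_neg, abs_neg, e]; exact h1
  have hlim : ∑' n : ℤ, (if n = 0 then (1 : ℂ) else if n = 1 then Complex.I else 0) = 1 + Complex.I := by
    rw [tsum_eq_sum (s := {0, 1})]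
    · simp
    · intro n hn
      simp only [Finset.mem_insert, Finset.mem_singleton, not_or] at hn
      simp [hn.1, hn.2]
  rw [← hlim]
  have hfun : ∀ᶠ τ in cusp, EE τ = ∑' n : ℤ, Complex.exp (Real.pi * Complex.I * n / 2) *
      Complex.exp (-(((Real.pi ^ 2 / 2 : ℝ) : ℂ) * ((n ^ 2 - n : ℤ) : ℂ) * τ⁻¹)) := by
    filter_upwards [cusp_re] with τ h
    have h0 : τ ≠ 0 := by rintro rfl; simp at h
    unfold EE jacobiTheta₂
    simp only [EE_term h0]
  have hnorm : ∀ (n : ℤ) (τ : ℂ), ‖Complex.exp (Real.pi * Complex.I * n / 2) *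
      Complex.exp (-(((Real.pi ^ 2 / 2 : ℝ) : ℂ) * ((n ^ 2 - n : ℤ) : ℂ) * τ⁻¹))‖ =
      Real.exp (-(Real.pi ^ 2 / 2 * ((n ^ 2 - n : ℤ) : ℝ) * (τ⁻¹).re)) := by
    intro n τ
    rw [norm_mul, show (Real.pi * Complex.I * n / 2 : ℂ) = ((Real.pi * n / 2 : ℝ) : ℂ) * Complex.I by push_cast; ring,
      Complex.norm_exp_ofReal_mul_I, one_mul, Complex.norm_exp, Complex.neg_re,
      show (((Real.pi ^ 2 / 2 : ℝ) : ℂ) * ((n ^ 2 - n : ℤ) : ℂ) * τ⁻¹) = ((Real.pi ^ 2 / 2 * ((n ^ 2 - n : ℤ) : ℝ) : ℝ) : ℂ) * τ⁻¹ by push_cast; ring,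
      Complex.re_ofReal_mul]
  have hpi : 1 ≤ Real.pi ^ 2 / 2 := by nlinarith [Real.pi_gt_three]
  refine (tendsto_congr' hfun).2 (tendsto_tsum_of_dominated_convergence hs (fun n => ?_) ?_)
  · by_cases h0 : n = 0
    · subst h0; simp [tendsto_const_nhds]
    by_cases h1 : n = 1
    · subst h1
      simp only [h0, if_false, if_true]
      apply tendsto_const_nhds.congr
      intro τ
      rw [show (Real.pi * Complex.I * ((1 : ℤ) : ℂ) / 2 : ℂ) = Real.pi / 2 * Complex.I by push_cast; ring,
        Complex.exp_pi_div_two_mul_I]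
      simp
    · rw [if_neg h0, if_neg h1, tendsto_zero_iff_norm_tendsto_zero]
      simp only [hnorm]
      apply Real.tendsto_exp_atBot.comp
      apply tendsto_neg_atTop_atBot.comp
      apply Tendsto.const_mul_atTop _ tendsto_comap
      have : 0 < n ^ 2 - n := by
        rcases lt_or_gt_of_ne h0 with h | h
        · nlinarith
        · have : 2 ≤ n := by omega
          nlinarith
      have : (0 : ℝ) < ((n ^ 2 - n : ℤ) : ℝ) := by exact_mod_cast this
      positivity
  · filter_upwards [cusp_ge 1] with τ hτ n
    rw [hnorm]
    apply Real.exp_le_exp.2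
    have h2 : |n| - 1 ≤ n ^ 2 - n := by
      rcases le_total 0 n with h | h
      · rw [abs_of_nonneg h]; nlinarith [sq_nonneg (n - 1)]
      · rw [abs_of_nonpos h]; nlinarith
    have h2' : |(n : ℝ)| - 1 ≤ ((n ^ 2 - n : ℤ) : ℝ) := by exact_mod_cast h2
    have h3 : 0 ≤ n ^ 2 - n := by
      rcases le_total n 0 with h | h
      · nlinarith
      · rcases h.eq_or_lt with h | h
        · rw [← h]; norm_num
        · nlinarith
    have h3' : (0 : ℝ) ≤ ((n ^ 2 - n : ℤ) : ℝ) := by exact_mod_cast h3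
    have : ((n ^ 2 - n : ℤ) : ℝ) ≤ Real.pi ^ 2 / 2 * ((n ^ 2 - n : ℤ) : ℝ) * (τ⁻¹).re := by
      calc ((n ^ 2 - n : ℤ) : ℝ) = 1 * ((n ^ 2 - n : ℤ) : ℝ) * 1 := by ring
        _ ≤ _ := by gcongr
    linarith

/-- main size of `PP` at the cusp -/
noncomputable def P0 (τ : ℂ) : ℂ :=
  (2 * τ / Real.pi) ^ (1 / 2 : ℂ) / (Real.sqrt 2 : ℂ) * Complex.exp (Real.pi ^ 2 / (8 * τ) - τ / 8)

lemma sqrt2_eq : (1 + Complex.I) * Complex.exp (-(Real.pi * Complex.I / 4)) = (Real.sqrt 2 : ℂ) := by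
  have h2 : ((Real.sqrt 2 : ℝ) : ℂ) ^ 2 = 2 := by
    rw [← Complex.ofReal_pow, Real.sq_sqrt (by norm_num)]; norm_num
  rw [show -(Real.pi * Complex.I / 4 : ℂ) = ((-(Real.pi / 4) : ℝ) : ℂ) * Complex.I by push_cast; ring,
    Complex.exp_mul_I, ← Complex.ofReal_cos, ← Complex.ofReal_sin, Real.cos_neg, Real.sin_neg,
    Real.cos_pi_div_four, Real.sin_pi_div_four]
  push_cast
  linear_combination (-(Real.sqrt 2 : ℂ) / 2) * Complex.I_sq

lemma PP_cusp : Tendsto (fun τ => PP (Complex.exp (-τ)) / P0 τ) cusp (𝓝 1) := by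
  have hlim : Tendsto (fun τ => (Real.sqrt 2 : ℂ) / (Complex.exp (-(Real.pi * Complex.I / 4)) * EE τ)) cusp (𝓝 1) := by
    have h1 := (EE_tendsto.const_mul (Complex.exp (-(Real.pi * Complex.I / 4))))
    rw [mul_comm _ (1 + Complex.I), sqrt2_eq] at h1
    have hne : (Real.sqrt 2 : ℂ) ≠ 0 := by
      simp
    have := (tendsto_const_nhds (x := (Real.sqrt 2 : ℂ))).div h1 hne
    rwa [div_self hne] at this
  refine hlim.congr' ?_
  filter_upwards [cusp_re] with τ ht
  have h := PP_eq ht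
  have h0 : τ ≠ 0 := by rintro rfl; simp at ht
  have hp : (2 * τ / Real.pi) ^ (1 / 2 : ℂ) ≠ 0 := by
    rw [Complex.cpow_ne_zero_iff_of_exponent_ne_zero (by norm_num)]
    exact div_ne_zero (mul_ne_zero two_ne_zero h0) piC
  have hE : EE τ ≠ 0 := by rintro hE; rw [hE] at h; simp at h
  have hne : (Real.sqrt 2 : ℂ) ≠ 0 := by simp
  have hx := Complex.exp_ne_zero (-(Real.pi * Complex.I / 4))
  have hy := Complex.exp_ne_zero (Real.pi ^ 2 / (8 * τ) - τ / 8)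
  have e : Complex.exp (-(Real.pi ^ 2 / (8 * τ)) - Real.pi * Complex.I / 4 + τ / 8) =
      Complex.exp (-(Real.pi * Complex.I / 4)) * (Complex.exp (Real.pi ^ 2 / (8 * τ) - τ / 8))⁻¹ := by
    rw [← Complex.exp_neg, ← Complex.exp_add]; congr 1; ring
  rw [e] at h
  unfold P0
  field_simp at h ⊢
  linear_combination -h

end M2R

namespace M2R
open Filter Topology

/-- Boundary integral over a rectangle. -/
noncomputable def BI (f : ℂ → ℂ) (x1 x2 y1 y2 : ℝ) : ℂ :=
  (∫ x : ℝ in x1..x2, f (x + y1 * Complex.I)) - (∫ x : ℝ in x1..x2, f (x + y2 * Complex.I)) +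
      Complex.I * (∫ y : ℝ in y1..y2, f (x2 + y * Complex.I)) -
      Complex.I * (∫ y : ℝ in y1..y2, f (x1 + y * Complex.I))

/-- Integrability on all four sides. -/
def IB (f : ℂ → ℂ) (x1 x2 y1 y2 : ℝ) : Prop :=
  IntervalIntegrable (fun x : ℝ => f (x + y1 * Complex.I)) MeasureTheory.volume x1 x2 ∧
  IntervalIntegrable (fun x : ℝ => f (x + y2 * Complex.I)) MeasureTheory.volume x1 x2 ∧
  IntervalIntegrable (fun y : ℝ => f (x2 + y * Complex.I)) MeasureTheory.volume y1 y2 ∧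
  IntervalIntegrable (fun y : ℝ => f (x1 + y * Complex.I)) MeasureTheory.volume y1 y2

variable {x1 x2 y1 y2 : ℝ}

lemma BI_add {f g : ℂ → ℂ} (hf : IB f x1 x2 y1 y2) (hg : IB g x1 x2 y1 y2) :
    IB (fun w => f w + g w) x1 x2 y1 y2 ∧
    BI (fun w => f w + g w) x1 x2 y1 y2 = BI f x1 x2 y1 y2 + BI g x1 x2 y1 y2 := by
  obtain ⟨a1, a2, a3, a4⟩ := hf
  obtain ⟨b1, b2, b3, b4⟩ := hg
  refine ⟨⟨a1.add b1, a2.add b2, a3.add b3, a4.add b4⟩, ?_⟩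
  unfold BI
  rw [intervalIntegral.integral_add a1 b1, intervalIntegral.integral_add a2 b2,
    intervalIntegral.integral_add a3 b3, intervalIntegral.integral_add a4 b4]
  ring

lemma BI_sum {ι : Type*} (S : Finset ι) (f : ι → ℂ → ℂ) (v : ι → ℂ)
    (hf : ∀ p ∈ S, IB (f p) x1 x2 y1 y2 ∧ BI (f p) x1 x2 y1 y2 = v p) :
    IB (fun w => ∑ p ∈ S, f p w) x1 x2 y1 y2 ∧
    BI (fun w => ∑ p ∈ S, f p w) x1 x2 y1 y2 = ∑ p ∈ S, v p := by
  induction S using Finset.induction_on with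
  | empty => simp [IB, BI]
  | insert a S ha ih =>
    simp only [Finset.sum_insert ha]
    obtain ⟨i1, i2⟩ := ih (fun p hp => hf p (Finset.mem_insert_of_mem hp))
    obtain ⟨j1, j2⟩ := hf a (Finset.mem_insert_self _ _)
    obtain ⟨k1, k2⟩ := BI_add j1 i1
    exact ⟨k1, by rw [k2, i2, j2]⟩

/-- side-wise congruence -/
lemma BI_congr {f g : ℂ → ℂ} (hx : x1 ≤ x2) (hy : y1 ≤ y2)
    (h : ∀ w : ℂ, w.re ∈ Set.Icc x1 x2 → w.im ∈ Set.Icc y1 y2 →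
      (w.re = x1 ∨ w.re = x2 ∨ w.im = y1 ∨ w.im = y2) → f w = g w) :
    BI f x1 x2 y1 y2 = BI g x1 x2 y1 y2 := by
  unfold BI
  congr 1
  · congr 1
    · congr 1
      · apply intervalIntegral.integral_congr
        intro x hx'
        rw [Set.uIcc_of_le hx] at hx'
        apply h <;> simp [hx', hy]
      · apply intervalIntegral.integral_congr
        intro x hx'
        rw [Set.uIcc_of_le hx] at hx'
        apply h <;> simp [hx', hy]
    · congr 1
      apply intervalIntegral.integral_congr
      intro x hx'
      rw [Set.uIcc_of_le hy] at hx'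
      apply h <;> simp [hx', hx]
  · congr 1
    apply intervalIntegral.integral_congr
    intro x hx'
    rw [Set.uIcc_of_le hy] at hx'
    apply h <;> simp [hx', hx]

/-- integrability from continuity -/
lemma IB_of_cont {f : ℂ → ℂ} (hx : x1 ≤ x2) (hy : y1 ≤ y2)
    (h : ∀ w : ℂ, w.re ∈ Set.Icc x1 x2 → w.im ∈ Set.Icc y1 y2 →
      (w.re = x1 ∨ w.re = x2 ∨ w.im = y1 ∨ w.im = y2) → ContinuousAt f w) :
    IB f x1 x2 y1 y2 := by
  have hc1 : ∀ c : ℂ, Continuous (fun x : ℝ => (x : ℂ) + c) := fun c => by fun_prop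
  have hc2 : ∀ c : ℂ, Continuous (fun x : ℝ => c + (x : ℂ) * Complex.I) := fun c => by fun_prop
  refine ⟨?_, ?_, ?_, ?_⟩
  · apply ContinuousOn.intervalIntegrable
    intro x hx'
    rw [Set.uIcc_of_le hx] at hx'
    refine (ContinuousAt.comp (f := fun x : ℝ => (x : ℂ) + y1 * Complex.I) (x := x) (h _ ?_ ?_ ?_) (hc1 _).continuousAt).continuousWithinAt <;> simp [hx', hy]
  · apply ContinuousOn.intervalIntegrable
    intro x hx'
    rw [Set.uIcc_of_le hx] at hx'
    refine (ContinuousAt.comp (f := fun x : ℝ => (x : ℂ) + y2 * Complex.I) (x := x) (h _ ?_ ?_ ?_) (hc1 _).continuousAt).continuousWithinAt <;> simp [hx', hy]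
  · apply ContinuousOn.intervalIntegrable
    intro x hx'
    rw [Set.uIcc_of_le hy] at hx'
    refine (ContinuousAt.comp (f := fun y : ℝ => (x2 : ℂ) + y * Complex.I) (x := x) (h _ ?_ ?_ ?_) (hc2 _).continuousAt).continuousWithinAt <;> simp [hx', hx]
  · apply ContinuousOn.intervalIntegrable
    intro x hx'
    rw [Set.uIcc_of_le hy] at hx'
    refine (ContinuousAt.comp (f := fun y : ℝ => (x1 : ℂ) + y * Complex.I) (x := x) (h _ ?_ ?_ ?_) (hc2 _).continuousAt).continuousWithinAt <;> simp [hx', hx]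

lemma log_neg_pos {x : ℂ} (hi : 0 < x.im) : Complex.log (-x) = Complex.log x - Real.pi * Complex.I := by
  unfold Complex.log
  rw [Complex.arg_neg_eq_arg_sub_pi_of_im_pos hi, norm_neg]; push_cast; ring

lemma log_neg_neg {x : ℂ} (hi : x.im < 0) : Complex.log (-x) = Complex.log x + Real.pi * Complex.I := by
  unfold Complex.log
  rw [Complex.arg_neg_eq_arg_add_pi_of_im_neg hi, norm_neg]; push_cast; ring

lemma BI_pole {p : ℂ} (c : ℂ) (h1 : x1 < p.re) (h2 : p.re < x2) (h3 : y1 < p.im) (h4 : p.im < y2) :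
    IB (fun w => c / (w - p)) x1 x2 y1 y2 ∧ BI (fun w => c / (w - p)) x1 x2 y1 y2 = 2 * Real.pi * Complex.I * c := by
  have hIB : IB (fun w => 1 / (w - p)) x1 x2 y1 y2 := by
    apply IB_of_cont (by linarith) (by linarith)
    intro w _ _ hw
    apply ContinuousAt.div continuousAt_const (by fun_prop)
    intro h
    have : w = p := sub_eq_zero.1 h
    subst this
    rcases hw with h | h | h | h <;> linarith
  have hhor : ∀ y : ℝ, y ≠ p.im → IntervalIntegrable (fun x : ℝ => 1 / ((x + y * Complex.I : ℂ) - p)) MeasureTheory.volume x1 x2 →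
      ∫ x : ℝ in x1..x2, 1 / ((x + y * Complex.I : ℂ) - p) =
      Complex.log ((x2 + y * Complex.I : ℂ) - p) - Complex.log ((x1 + y * Complex.I : ℂ) - p) := by
    intro y hy hi
    refine intervalIntegral.integral_eq_sub_of_hasDerivAt
      (f := fun x : ℝ => Complex.log ((x + y * Complex.I : ℂ) - p)) (fun x _ => ?_) hi
    apply HasDerivAt.clog_real
    · exact ((Complex.ofRealCLM.hasDerivAt (x := x)).add_const _).sub_const p
    · right
      simp; intro h; apply hy; linarith
  have hR : ∫ y : ℝ in y1..y2, 1 / ((x2 + y * Complex.I : ℂ) - p) =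
      (Complex.log ((x2 + y2 * Complex.I : ℂ) - p) - Complex.log ((x2 + y1 * Complex.I : ℂ) - p)) / Complex.I := by
    rw [eq_div_iff Complex.I_ne_zero, ← intervalIntegral.integral_mul_const]
    refine intervalIntegral.integral_eq_sub_of_hasDerivAt
      (f := fun y : ℝ => Complex.log ((x2 + y * Complex.I : ℂ) - p)) (fun y _ => ?_) (hIB.2.2.1.mul_const _)
    rw [one_div_mul_eq_div]
    apply HasDerivAt.clog_real
    · simpa using! (((Complex.ofRealCLM.hasDerivAt (x := y)).mul_const Complex.I).const_add (x2 : ℂ)).sub_const p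
    · left
      simp; linarith
  have hL : ∫ y : ℝ in y1..y2, 1 / ((x1 + y * Complex.I : ℂ) - p) =
      (Complex.log (-((x1 + y2 * Complex.I : ℂ) - p)) - Complex.log (-((x1 + y1 * Complex.I : ℂ) - p))) / Complex.I := by
    rw [eq_div_iff Complex.I_ne_zero, ← intervalIntegral.integral_mul_const]
    refine intervalIntegral.integral_eq_sub_of_hasDerivAt
      (f := fun y : ℝ => Complex.log (-((x1 + y * Complex.I : ℂ) - p))) (fun y _ => ?_) (hIB.2.2.2.mul_const _)
    rw [one_div_mul_eq_div, ← neg_div_neg_eq]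
    apply HasDerivAt.clog_real
    · have hd := ((((Complex.ofRealCLM.hasDerivAt (x := y)).mul_const Complex.I).const_add (x1 : ℂ)).sub_const p).neg
      simp only [Complex.ofRealCLM_apply, Complex.ofReal_one, one_mul] at hd
      exact hd
    · left
      simp; linarith
  have hone : BI (fun w => 1 / (w - p)) x1 x2 y1 y2 = 2 * Real.pi * Complex.I := by
    unfold BI
    rw [hhor y1 h3.ne hIB.1, hhor y2 h4.ne' hIB.2.1, hR, hL, log_neg_pos (by simp; linarith),
      log_neg_neg (by simp; linarith)]
    have := Complex.I_ne_zero
    field_simp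
    ring
  have e : (fun w => c / (w - p)) = fun w => c * (1 / (w - p)) := by funext w; ring
  rw [e]
  refine ⟨⟨hIB.1.const_mul c, hIB.2.1.const_mul c, hIB.2.2.1.const_mul c, hIB.2.2.2.const_mul c⟩, ?_⟩
  rw [mul_comm, ← hone]
  unfold BI
  simp only [intervalIntegral.integral_const_mul]
  ring

/-- Principal parts can be removed. -/
lemma remove_poles {U : Set ℂ} (hU : IsOpen U) (c : ℂ → ℂ) (S : Finset ℂ) : ∀ F : ℂ → ℂ,
    (↑S ⊆ U) → DifferentiableOn ℂ F (U \ S) →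
    (∀ p ∈ S, Tendsto (fun w => (w - p) * F w) (𝓝[≠] p) (𝓝 (c p))) →
    ∃ G : ℂ → ℂ, DifferentiableOn ℂ G U ∧ ∀ w ∈ U \ S, F w = G w + ∑ p ∈ S, c p / (w - p) := by
  induction S using Finset.induction_on with
  | empty =>
    intro F _ hF _
    exact ⟨F, by simpa using hF, by simp⟩
  | insert a S ha ih =>
    intro F hS hF hc
    have hSU : (↑S : Set ℂ) ⊆ U := fun x hx => hS (by simp [Finset.mem_coe.1 hx])
    have haU : a ∈ U := hS (by simp)
    set V : Set ℂ := U \ S with hV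
    have hVo : IsOpen V := hU.sdiff S.finite_toSet.isClosed
    have haV : a ∈ V := ⟨haU, by simpa using ha⟩
    set H : ℂ → ℂ := fun w => F w - c a / (w - a) with hH
    have hHd : DifferentiableOn ℂ H (V \ {a}) := by
      have hsub : V \ {a} ⊆ U \ ↑(insert a S) := by
        rintro w ⟨⟨h1, h2⟩, h3⟩
        refine ⟨h1, ?_⟩
        simp only [Finset.coe_insert, Set.mem_insert_iff, not_or]
        exact ⟨h3, h2⟩
      refine (hF.mono hsub).sub ?_
      intro w hw
      have : w - a ≠ 0 := sub_ne_zero.2 hw.2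
      exact (DifferentiableAt.div (differentiableAt_const (c a)) (differentiableAt_id.sub_const a) this).differentiableWithinAt
    have hlit : (fun z => H z - H a) =o[𝓝[≠] a] fun z => (z - a)⁻¹ := by
      rw [Asymptotics.isLittleO_iff_tendsto']
      · have h1 := hc a (Finset.mem_insert_self _ _)
        have h2 : Tendsto (fun z => (z - a) * F z - c a - (z - a) * H a) (𝓝[≠] a) (𝓝 0) := by
          have h3 : Tendsto (fun z : ℂ => (z - a) * H a) (𝓝[≠] a) (𝓝 0) := by
            have : Continuous (fun z : ℂ => (z - a) * H a) := by fun_prop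
            have := (this.tendsto a).mono_left (nhdsWithin_le_nhds (s := {a}ᶜ))
            simpa using this
          simpa using (h1.sub_const (c a)).sub h3
        refine h2.congr' ?_
        filter_upwards [self_mem_nhdsWithin] with z hz
        have : z - a ≠ 0 := sub_ne_zero.2 hz
        simp only [hH]
        field_simp
      · filter_upwards [self_mem_nhdsWithin] with z hz h
        have : z - a ≠ 0 := sub_ne_zero.2 hz
        exact absurd h (inv_ne_zero this)
    have hH' := Complex.differentiableOn_update_limUnder_of_isLittleO (hVo.mem_nhds haV) hHd hlit
    set H' := Function.update H a (limUnder (𝓝[≠] a) H) with hH'd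
    obtain ⟨G, hG1, hG2⟩ := ih H' hSU hH' (by
      intro p hp
      have hpa : p ≠ a := by rintro rfl; exact ha hp
      have h1 := hc p (Finset.mem_insert_of_mem hp)
      have h2 : Tendsto (fun w => (w - p) * (c a / (w - a))) (𝓝[≠] p) (𝓝 0) := by
        have : ContinuousAt (fun w => (w - p) * (c a / (w - a))) p := by
          apply ContinuousAt.mul (by fun_prop)
          exact ContinuousAt.div (by fun_prop) (by fun_prop) (sub_ne_zero.2 hpa)
        have := this.tendsto.mono_left (nhdsWithin_le_nhds (s := {p}ᶜ))
        simpa using this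
      have h3 := h1.sub h2
      rw [sub_zero] at h3
      refine h3.congr' ?_
      have : ∀ᶠ w in 𝓝[≠] p, w ≠ a := by
        apply eventually_nhdsWithin_of_eventually_nhds
        exact isOpen_ne.mem_nhds hpa
      filter_upwards [this] with w hw
      simp only [hH'd, Function.update_of_ne hw, hH]
      ring)
    refine ⟨G, hG1, ?_⟩
    intro w hw
    have hwa : w ≠ a := by rintro rfl; exact hw.2 (by simp)
    have hwS : w ∈ U \ ↑S := ⟨hw.1, fun h => hw.2 (by simp [Finset.mem_coe.1 h])⟩
    have := hG2 w hwS
    simp only [hH'd, Function.update_of_ne hwa, hH] at this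
    rw [Finset.sum_insert ha]
    linear_combination this

/-- Residue theorem on a rectangle with simple poles. -/
lemma residue_rect {U : Set ℂ} (hU : IsOpen U) (c : ℂ → ℂ) (S : Finset ℂ) (F : ℂ → ℂ)
    (hx : x1 ≤ x2) (hy : y1 ≤ y2)
    (hR : ∀ w : ℂ, w.re ∈ Set.Icc x1 x2 → w.im ∈ Set.Icc y1 y2 → w ∈ U)
    (hS : ∀ p ∈ S, x1 < p.re ∧ p.re < x2 ∧ y1 < p.im ∧ p.im < y2)
    (hF : DifferentiableOn ℂ F (U \ S))
    (hc : ∀ p ∈ S, Tendsto (fun w => (w - p) * F w) (𝓝[≠] p) (𝓝 (c p))) :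
    BI F x1 x2 y1 y2 = 2 * Real.pi * Complex.I * ∑ p ∈ S, c p := by
  have hSU : (↑S : Set ℂ) ⊆ U := by
    intro p hp
    obtain ⟨a, b, d, e⟩ := hS p hp
    exact hR p ⟨a.le, b.le⟩ ⟨d.le, e.le⟩
  obtain ⟨G, hG1, hG2⟩ := remove_poles hU c S F hSU hF hc
  have h1 : BI F x1 x2 y1 y2 = BI (fun w => G w + ∑ p ∈ S, c p / (w - p)) x1 x2 y1 y2 := by
    apply BI_congr hx hy
    intro w hw1 hw2 hw3
    apply hG2
    refine ⟨hR w hw1 hw2, ?_⟩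
    intro hwS
    obtain ⟨a, b, d, e⟩ := hS w hwS
    rcases hw3 with h | h | h | h <;> linarith
  have h2 := BI_sum (x1 := x1) (x2 := x2) (y1 := y1) (y2 := y2) S (fun p w => c p / (w - p))
    (fun p => 2 * Real.pi * Complex.I * c p) (fun p hp => by
      obtain ⟨a, b, d, e⟩ := hS p hp
      exact BI_pole (c p) a b d e)
  have h3 : IB G x1 x2 y1 y2 := by
    apply IB_of_cont hx hy
    intro w a b _
    exact (hG1.differentiableAt (hU.mem_nhds (hR w a b))).continuousAt
  have h4 : BI G x1 x2 y1 y2 = 0 := by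
    have := Complex.integral_boundary_rect_eq_zero_of_differentiableOn G (x1 + y1 * Complex.I) (x2 + y2 * Complex.I)
      (hG1.mono (by
        intro w hw
        rw [Complex.mem_reProdIm] at hw
        simp [Set.uIcc_of_le hx, Set.uIcc_of_le hy] at hw
        exact hR w hw.1 hw.2))
    simpa [BI] using this
  rw [h1, (BI_add h3 h2.1).2, h4, h2.2, Finset.mul_sum, zero_add]

end M2R

namespace M2R
open Filter Topology

/-- the angle -/
noncomputable def phi : ℝ := Real.pi / 10

lemma sinh_zero {z : ℂ} (h : Complex.sinh z = 0) : ∃ k : ℤ, z = k * Real.pi * Complex.I := by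
  have h1 : Complex.sin (z * Complex.I) = 0 := by rw [Complex.sin_mul_I, h, zero_mul]
  obtain ⟨k, hk⟩ := Complex.sin_eq_zero_iff.1 h1
  refine ⟨-k, ?_⟩
  have : z = -(z * Complex.I) * Complex.I := by linear_combination (z) * Complex.I_sq
  rw [this, hk]; push_cast; ring

/-- summand -/
noncomputable def aa (τ w : ℂ) : ℂ := Complex.exp (-(2 * τ * w ^ 2)) / Complex.sinh (τ * w - phi * Complex.I)

/-- extra pole -/
noncomputable def w0 (τ : ℂ) : ℂ := phi * Complex.I / τ

lemma inv_re_pos {τ : ℂ} (ht : 0 < τ.re) : 0 < (τ⁻¹).re := by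
  rw [Complex.inv_re]
  have : τ ≠ 0 := by rintro rfl; simp at ht
  exact div_pos ht (Complex.normSq_pos.2 this)

lemma zero_im {τ w : ℂ} (h0 : τ ≠ 0) (h : Complex.sinh (τ * w - phi * Complex.I) = 0) :
    ∃ k : ℤ, w = (phi + k * Real.pi) * Complex.I / τ ∧ w.im = (phi + k * Real.pi) * (τ⁻¹).re := by
  obtain ⟨k, hk⟩ := sinh_zero h
  have e : w = (phi + k * Real.pi) * Complex.I / τ := by
    field_simp; linear_combination hk
  refine ⟨k, e, ?_⟩
  rw [e, div_eq_mul_inv, show (phi + k * Real.pi : ℂ) * Complex.I * τ⁻¹ = ((phi + k * Real.pi : ℝ) : ℂ) * (Complex.I * τ⁻¹) by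
    push_cast; ring, Complex.im_ofReal_mul, Complex.I_mul_im]

lemma phi_add_ne (k : ℤ) : phi + k * Real.pi ≠ 0 := by
  unfold phi
  intro h
  have h1 : Real.pi * (1 + 10 * k) = 0 := by linear_combination 10 * h
  rcases mul_eq_zero.1 h1 with h2 | h2
  · exact Real.pi_ne_zero h2
  · have : (1 + 10 * k : ℤ) = 0 := by exact_mod_cast h2
    omega

lemma sinh_int_ne {τ : ℂ} (ht : 0 < τ.re) (n : ℤ) : Complex.sinh (τ * n - phi * Complex.I) ≠ 0 := by
  have h0 : τ ≠ 0 := by rintro rfl; simp at ht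
  intro h
  obtain ⟨k, _, hk⟩ := zero_im h0 h
  simp only [Complex.intCast_im] at hk
  rcases mul_eq_zero.1 hk.symm with h | h
  · exact phi_add_ne k h
  · exact (inv_re_pos ht).ne' h

lemma ζ_eq : ζ = Complex.exp (phi * Complex.I) * Complex.exp (phi * Complex.I) := by
  unfold ζ phi
  rw [← Complex.exp_add]; congr 1; push_cast; ring

lemma frac_eq (τ x : ℂ) (b : ℂ) (hs : Complex.sinh (τ * x - b * Complex.I) ≠ 0) :
    (Complex.exp (b * Complex.I) * Complex.exp (b * Complex.I) - 1) /
      (1 - Complex.exp (b * Complex.I) * Complex.exp (b * Complex.I) * Complex.exp (-(2 * τ * x))) =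
    Complex.I * Complex.sin b * Complex.exp (τ * x) / Complex.sinh (τ * x - b * Complex.I) := by
  have e1 : Complex.I * Complex.sin b = (Complex.exp (b * Complex.I) - Complex.exp (-(b * Complex.I))) / 2 := by
    rw [Complex.sin, show -b * Complex.I = -(b * Complex.I) by ring]
    linear_combination ((Complex.exp (-(b * Complex.I)) - Complex.exp (b * Complex.I)) / 2) * Complex.I_sq
  rw [Complex.sinh] at hs ⊢
  rw [e1]
  rw [show τ * x - b * Complex.I = τ * x + -(b * Complex.I) by ring,
    show -(τ * x + -(b * Complex.I)) = -(τ * x) + b * Complex.I by ring, Complex.exp_add, Complex.exp_add] at hs ⊢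
  rw [show -(2 * τ * x) = -(τ * x) + -(τ * x) by ring, Complex.exp_add]
  simp only [Complex.exp_neg] at hs ⊢
  set E := Complex.exp (b * Complex.I)
  have hE : E ≠ 0 := Complex.exp_ne_zero _
  set X := Complex.exp (τ * x)
  have hX : X ≠ 0 := Complex.exp_ne_zero _
  have hd : X ^ 2 - E ^ 2 ≠ 0 := by
    intro h; apply hs; field_simp; linear_combination h
  have hd2 : 1 - E * E * (X⁻¹ * X⁻¹) ≠ 0 := by
    intro h; apply hd; field_simp at h; linear_combination h
  rw [div_eq_div_iff hd2 hs]
  field_simp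

/-- the signed summand -/
noncomputable def sa (τ : ℂ) (n : ℤ) : ℂ := (-1) ^ n * aa τ n

lemma pair_eq {τ : ℂ} (ht : 0 < τ.re) (k : ℕ) :
    tt (Complex.exp (-τ)) 0 k * ((ζ - 1) / (1 - ζ * QQ (Complex.exp (-τ)) k) + (ζ⁻¹ - 1) / (1 - ζ⁻¹ * QQ (Complex.exp (-τ)) k))
      = -(Complex.I * Complex.sin phi) * (sa τ ((k : ℤ) + 1) + sa τ (-((k : ℤ) + 1))) := by
  have hpow : ∀ k : ℕ, Complex.exp (-τ) ^ k = Complex.exp (-(k * τ)) := by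
    intro k; rw [← Complex.exp_nat_mul]; congr 1; ring
  have hinv : ζ⁻¹ = Complex.exp ((-phi : ℂ) * Complex.I) * Complex.exp ((-phi : ℂ) * Complex.I) := by
    rw [ζ_eq, mul_inv, ← Complex.exp_neg]; ring_nf
  have s1 := sinh_int_ne ht ((k : ℤ) + 1)
  have s2 := sinh_int_ne ht (-((k : ℤ) + 1))
  have hQ : QQ (Complex.exp (-τ)) k = Complex.exp (-(2 * τ * ((k : ℂ) + 1))) := by
    unfold QQ; rw [hpow]; congr 1; push_cast; ring
  have s2' : Complex.sinh (τ * ((k : ℂ) + 1) - (-phi : ℂ) * Complex.I) = - Complex.sinh (τ * ((-((k : ℤ) + 1) : ℤ) : ℂ) - phi * Complex.I) := by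
    rw [← Complex.sinh_neg]; congr 1; push_cast; ring
  have f1 := frac_eq τ ((k : ℂ) + 1) phi (by convert s1 using 3; push_cast; ring)
  have f2 := frac_eq τ ((k : ℂ) + 1) (-phi) (by rw [s2']; exact neg_ne_zero.2 s2)
  have htt : tt (Complex.exp (-τ)) 0 k * Complex.exp (τ * ((k : ℂ) + 1)) = -(-1) ^ (k + 1) * Complex.exp (-(2 * τ * ((k : ℂ) + 1) ^ 2)) := by
    unfold tt
    rw [hpow, mul_assoc, ← Complex.exp_add]
    rw [show (-((2 * (k + 1) ^ 2 + (k + 1) + 2 * 0 * (k + 1) : ℕ) * τ) + τ * ((k : ℂ) + 1)) = -(2 * τ * ((k : ℂ) + 1) ^ 2) by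
      push_cast; ring]
    ring
  rw [hinv, hQ, f2, ζ_eq, f1, s2']
  unfold sa aa
  have z1 : (-1 : ℂ) ^ ((k : ℤ) + 1) = (-1) ^ (k + 1) := by
    rw [← zpow_natCast]; push_cast; rfl
  have z2 : (-1 : ℂ) ^ (-((k : ℤ) + 1)) = (-1) ^ (k + 1) := by
    rw [zpow_neg, z1, ← inv_pow]; norm_num
  rw [z1, z2, Complex.sin_neg]
  rw [show ((((k : ℤ) + 1 : ℤ)) : ℂ) = (k : ℂ) + 1 by push_cast; ring] at s1 ⊢
  rw [show (((-((k : ℤ) + 1) : ℤ)) : ℂ) ^ 2 = ((k : ℂ) + 1) ^ 2 by push_cast; ring]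
  set A := Complex.sinh (τ * ((k : ℂ) + 1) - phi * Complex.I)
  set B := Complex.sinh (τ * ((-((k : ℤ) + 1) : ℤ) : ℂ) - phi * Complex.I)
  generalize Complex.exp (-(2 * τ * ((k : ℂ) + 1) ^ 2)) = G at htt ⊢
  field_simp
  linear_combination (Complex.sin phi * (A + B)) * htt

lemma sum_Icc_succ (f : ℤ → ℂ) (N : ℕ) : ∑ n ∈ Finset.Icc (-((N + 1 : ℕ) : ℤ)) ((N + 1 : ℕ) : ℤ), f n =
    ∑ n ∈ Finset.Icc (-(N : ℤ)) N, f n + (f ((N : ℤ) + 1) + f (-((N : ℤ) + 1))) := by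
  have h : Finset.Icc (-((N + 1 : ℕ) : ℤ)) ((N + 1 : ℕ) : ℤ) =
      insert ((N : ℤ) + 1) (insert (-((N : ℤ) + 1)) (Finset.Icc (-(N : ℤ)) N)) := by
    ext x; simp only [Finset.mem_insert, Finset.mem_Icc]; push_cast; omega
  rw [h, Finset.sum_insert, Finset.sum_insert]
  · ring
  · simp
  · simp only [Finset.mem_insert, Finset.mem_Icc]; omega

lemma sin_phi_pos : 0 < Real.sin phi := by
  apply Real.sin_pos_of_pos_of_lt_pi <;> unfold phi <;> linarith [Real.pi_pos]

lemma partial_eq {τ : ℂ} (ht : 0 < τ.re) (N : ℕ) :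
    1 + ∑ k ∈ Finset.range N, tt (Complex.exp (-τ)) 0 k * ((ζ - 1) / (1 - ζ * QQ (Complex.exp (-τ)) k) + (ζ⁻¹ - 1) / (1 - ζ⁻¹ * QQ (Complex.exp (-τ)) k))
    = -(Complex.I * Complex.sin phi) * ∑ n ∈ Finset.Icc (-(N : ℤ)) N, sa τ n := by
  induction N with
  | zero =>
    have hs : (Complex.sin (phi : ℂ)) ≠ 0 := by
      rw [← Complex.ofReal_sin]; exact_mod_cast sin_phi_pos.ne'
    simp only [Finset.range_zero, Finset.sum_empty, add_zero, CharP.cast_eq_zero, neg_zero, Finset.Icc_self,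
      Finset.sum_singleton, sa, aa]
    simp only [zpow_zero, Int.cast_zero, mul_zero, zero_sub, Complex.sinh_neg, Complex.sinh_mul_I]
    have := Complex.I_ne_zero
    simp
    field_simp
    rw [Complex.I_sq]; ring
  | succ N ih =>
    rw [Finset.sum_range_succ, ← add_assoc, ih, sum_Icc_succ, pair_eq ht]
    ring

lemma R2_limit {τ : ℂ} (ht : 0 < τ.re) : Tendsto (fun N : ℕ => PP (Complex.exp (-τ)) *
    (-(Complex.I * Complex.sin phi) * ∑ n ∈ Finset.Icc (-(N : ℤ)) N, sa τ n)) atTop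
    (𝓝 (R2 ζ (Complex.exp (-τ)))) := by
  have hn : ‖Complex.exp (-τ)‖ = Real.exp (-τ.re) := by rw [Complex.norm_exp, Complex.neg_re]
  have hq1 : ‖Complex.exp (-τ)‖ < 1 := by rw [hn]; exact Real.exp_lt_one_iff.2 (by linarith)
  obtain ⟨hs, h⟩ := R2_formula ζ_norm hq1 (Complex.exp_ne_zero (-τ))
  rw [h]
  simp only [← partial_eq ht]
  exact (hs.hasSum.tendsto_sum_nat.const_add 1).const_mul _

/-- integrand -/
noncomputable def FI (τ w : ℂ) : ℂ := aa τ w * (Real.pi / Complex.sin (Real.pi * w))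

lemma simple_pole {f h : ℂ → ℂ} {p h' : ℂ} (hf : ContinuousAt f p) (h0 : h p = 0) (hd : HasDerivAt h h' p) (hne : h' ≠ 0) :
    Tendsto (fun w => (w - p) * (f w / h w)) (𝓝[≠] p) (𝓝 (f p / h')) := by
  have h1 := hasDerivAt_iff_tendsto_slope.1 hd
  have h2 := (hf.tendsto.mono_left (nhdsWithin_le_nhds (s := {p}ᶜ))).div h1 hne
  refine h2.congr' ?_
  filter_upwards [self_mem_nhdsWithin] with w hw
  have : w - p ≠ 0 := sub_ne_zero.2 hw
  simp only [Pi.div_apply, slope_def_field, h0, sub_zero]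
  rw [div_div_eq_mul_div]; ring

end M2R

namespace M2R
open Filter Topology

lemma sinh_norm_sq (z : ℂ) : ‖Complex.sinh z‖ ^ 2 = Real.sinh z.re ^ 2 + Real.sin z.im ^ 2 := by
  have e : Complex.sinh z = ((Real.sinh z.re * Real.cos z.im : ℝ) : ℂ) + ((Real.cosh z.re * Real.sin z.im : ℝ) : ℂ) * Complex.I := by
    conv_lhs => rw [← Complex.re_add_im z]
    rw [Complex.sinh_add, Complex.sinh_mul_I, Complex.cosh_mul_I]
    push_cast; ring
  rw [e, ← Complex.normSq_eq_norm_sq, Complex.normSq_add_mul_I]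
  have h1 := Real.cosh_sq z.re
  have h2 := Real.sin_sq_add_cos_sq z.im
  rw [mul_pow, mul_pow, h1]
  linear_combination (Real.sinh z.re ^ 2) * h2

lemma sinh_norm_ge (z : ℂ) : |Real.sinh z.re| ≤ ‖Complex.sinh z‖ := by
  refine abs_le_of_sq_le_sq ?_ (norm_nonneg _)
  rw [sinh_norm_sq]; nlinarith [sq_nonneg (Real.sin z.im)]

lemma sinh_norm_ge' (z : ℂ) : |Real.sin z.im| ≤ ‖Complex.sinh z‖ := by
  refine abs_le_of_sq_le_sq ?_ (norm_nonneg _)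
  rw [sinh_norm_sq]; nlinarith [sq_nonneg (Real.sinh z.re)]

lemma sin_norm (w : ℂ) : ‖Complex.sin w‖ = ‖Complex.sinh (w * Complex.I)‖ := by
  rw [Complex.sinh_mul_I, norm_mul, Complex.norm_I, mul_one]

lemma sin_norm_ge (w : ℂ) : |Real.sinh w.im| ≤ ‖Complex.sin w‖ := by
  rw [sin_norm]
  have := sinh_norm_ge (w * Complex.I)
  simpa [Real.sinh_neg] using this

lemma sin_norm_ge' (w : ℂ) : |Real.sin w.re| ≤ ‖Complex.sin w‖ := by
  rw [sin_norm]
  have := sinh_norm_ge' (w * Complex.I)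
  simpa using this

lemma abs_sinh_ge (x : ℝ) : |x| ≤ |Real.sinh x| := by
  rw [Real.abs_sinh]
  exact Real.self_le_sinh_iff.2 (abs_nonneg x)

/-- residue at the extra pole -/
noncomputable def c0 (τ : ℂ) : ℂ :=
  (Complex.exp (-(2 * τ * (w0 τ) ^ 2)) * (Real.pi / Complex.sin (Real.pi * w0 τ))) / τ

lemma sin_pi_zero {w : ℂ} (h : Complex.sin (Real.pi * w) = 0) : ∃ n : ℤ, w = n := by
  obtain ⟨k, hk⟩ := Complex.sin_eq_zero_iff.1 h
  refine ⟨k, ?_⟩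
  have : (Real.pi : ℂ) * w = Real.pi * k := by rw [hk]; ring
  exact mul_left_cancel₀ piC this

lemma w0_im {τ : ℂ} : (w0 τ).im = phi * (τ⁻¹).re := by
  rw [w0, div_eq_mul_inv, mul_assoc, Complex.im_ofReal_mul, Complex.I_mul_im]

lemma w0_ne_int {τ : ℂ} (ht : 0 < τ.re) (n : ℤ) : w0 τ ≠ n := by
  intro h
  have := congrArg Complex.im h
  rw [w0_im, Complex.intCast_im] at this
  have h2 : 0 < phi * (τ⁻¹).re := mul_pos (by unfold phi; positivity) (inv_re_pos ht)
  linarith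

lemma sinh_w0 {τ : ℂ} (h0 : τ ≠ 0) : Complex.sinh (τ * w0 τ - phi * Complex.I) = 0 := by
  have : τ * w0 τ - phi * Complex.I = 0 := by unfold w0; field_simp; ring
  rw [this, Complex.sinh_zero]

lemma cos_int_pi (n : ℤ) : Complex.cos (Real.pi * (n : ℂ)) = (-1) ^ n := by
  have := Real.cos_int_mul_pi n
  rw [mul_comm]
  have h2 := congrArg (fun x : ℝ => (x : ℂ)) this
  push_cast at h2
  exact h2

lemma residue_sum {τ : ℂ} (ht : 0 < τ.re) (N : ℕ) (hN : |(w0 τ).re| < N + 1 / 2) :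
    BI (FI τ) (-(N + 1 / 2)) (N + 1 / 2) (-(Real.pi / 4 * (τ⁻¹).re)) (Real.pi / 4 * (τ⁻¹).re) =
      2 * Real.pi * Complex.I * (c0 τ + ∑ n ∈ Finset.Icc (-(N : ℤ)) N, sa τ n) := by
  have h0 : τ ≠ 0 := by rintro rfl; simp at ht
  have hx := inv_re_pos ht
  set x := (τ⁻¹).re with hxd
  have hpx : 0 < Real.pi * x := mul_pos Real.pi_pos hx
  have hinj : Function.Injective (fun n : ℤ => (n : ℂ)) := Int.cast_injective
  let S : Finset ℂ := insert (w0 τ) ((Finset.Icc (-(N : ℤ)) N).image (fun n : ℤ => (n : ℂ)))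
  let U : Set ℂ := {w | |w.re| < N + 1} ∩ {w | -(9/10 * (Real.pi * x)) < w.im} ∩ {w | w.im < 11/10 * (Real.pi * x)}
  have hU : IsOpen U := by
    refine IsOpen.inter (IsOpen.inter ?_ ?_) ?_
    · exact isOpen_lt (by fun_prop) (by fun_prop)
    · exact isOpen_lt (by fun_prop) (by fun_prop)
    · exact isOpen_lt (by fun_prop) (by fun_prop)
  let c : ℂ → ℂ := fun p => if p = w0 τ then c0 τ else aa τ p * Real.pi / (Real.pi * Complex.cos (Real.pi * p))
  have hp10 : phi * x = 1/10 * (Real.pi * x) := by unfold phi; ring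
  have key := residue_rect hU c S (FI τ) (x1 := -(N + 1 / 2)) (x2 := N + 1/2) (y1 := -(Real.pi / 4 * x)) (y2 := Real.pi / 4 * x)
    (by have : (0:ℝ) ≤ N := Nat.cast_nonneg N
        linarith) (by nlinarith) ?_ ?_ ?_ ?_
  · rw [key]
    congr 1
    have hnot : w0 τ ∉ (Finset.Icc (-(N : ℤ)) N).image (fun n : ℤ => (n : ℂ)) := by
      intro h
      obtain ⟨n, _, hn⟩ := Finset.mem_image.1 h
      exact w0_ne_int ht n hn.symm
    simp only [S]
    rw [Finset.sum_insert hnot, Finset.sum_image (fun a _ b _ h => hinj h)]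
    congr 1
    · simp [c]
    · refine Finset.sum_congr rfl fun n _ => ?_
      simp only [c]
      rw [if_neg (fun h => w0_ne_int ht n h.symm), cos_int_pi]
      unfold sa
      have h1 : ((-1 : ℂ) ^ n) * (-1) ^ n = 1 := by
        rw [← mul_zpow]; norm_num
      have h2 : ((-1 : ℂ) ^ n) ≠ 0 := zpow_ne_zero _ (by norm_num)
      have := piC
      field_simp
      linear_combination (-aa τ n) * h1
  · intro w hw1 hw2
    refine ⟨⟨?_, ?_⟩, ?_⟩
    · simp only [Set.mem_ofPred_eq]; rw [abs_lt]; constructor <;> linarith [hw1.1, hw1.2]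
    · simp only [Set.mem_ofPred_eq]; linarith [hw2.1]
    · simp only [Set.mem_ofPred_eq]; linarith [hw2.2]
  · intro p hp
    rcases Finset.mem_insert.1 hp with h | h
    · subst h
      rw [w0_im, ← hxd, hp10]
      obtain ⟨h1, h2⟩ := abs_lt.1 hN
      refine ⟨h1, h2, ?_, ?_⟩ <;> linarith
    · obtain ⟨n, hn, rfl⟩ := Finset.mem_image.1 h
      rw [Finset.mem_Icc] at hn
      have h1 : (-(N : ℝ)) ≤ n := by exact_mod_cast hn.1
      have h2 : (n : ℝ) ≤ N := by exact_mod_cast hn.2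
      simp only [Complex.intCast_re, Complex.intCast_im]
      refine ⟨?_, ?_, ?_, ?_⟩ <;> linarith
  · intro w hw
    obtain ⟨⟨⟨hw1, hw2⟩, hw3⟩, hwS⟩ := hw
    simp only [Set.mem_ofPred_eq] at hw1 hw2 hw3
    have n1 : Complex.sinh (τ * w - phi * Complex.I) ≠ 0 := by
      intro h
      obtain ⟨k, hk, hki⟩ := zero_im h0 h
      rw [← hxd] at hki
      have e : (phi + k * Real.pi) * x = (1/10 + k) * (Real.pi * x) := by unfold phi; ring
      rw [hki, e] at hw2 hw3
      have k1 : (-1 : ℝ) < k := by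
        by_contra hc; push Not at hc; nlinarith
      have k2 : (k : ℝ) < 1 := by
        by_contra hc; push Not at hc; nlinarith
      have k3 : k = 0 := by
        have : (-1 : ℤ) < k := by exact_mod_cast k1
        have : k < (1 : ℤ) := by exact_mod_cast k2
        omega
      apply hwS
      rw [hk, k3]
      simp only [S, Finset.coe_insert, Set.mem_insert_iff]
      left; unfold w0; push_cast; ring
    have n2 : Complex.sin (Real.pi * w) ≠ 0 := by
      intro h
      obtain ⟨n, rfl⟩ := sin_pi_zero h
      apply hwS
      simp only [S, Finset.coe_insert, Set.mem_insert_iff]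
      right
      rw [Finset.mem_coe]
      refine Finset.mem_image.2 ⟨n, ?_, rfl⟩
      rw [Complex.intCast_re, abs_lt] at hw1
      rw [Finset.mem_Icc]
      have a1 : (-((N : ℤ) + 1) : ℤ) < n := by exact_mod_cast hw1.1
      have a2 : n < (N : ℤ) + 1 := by exact_mod_cast hw1.2
      omega
    apply DifferentiableAt.differentiableWithinAt
    unfold FI aa
    fun_prop (disch := assumption)
  · intro p hp
    by_cases hpw : p = w0 τ
    · subst hpw
      simp only [c, if_true]
      have hsin : Complex.sin (Real.pi * w0 τ) ≠ 0 := by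
        intro h; obtain ⟨n, hn⟩ := sin_pi_zero h; exact w0_ne_int ht n hn
      have hd : HasDerivAt (fun w => Complex.sinh (τ * w - phi * Complex.I)) τ (w0 τ) := by
        have h1 : HasDerivAt (fun w : ℂ => τ * w - phi * Complex.I) τ (w0 τ) := by
          simpa using ((hasDerivAt_id (w0 τ)).const_mul τ).sub_const (phi * Complex.I)
        have h2 := h1.csinh
        have h3 : τ * w0 τ - phi * Complex.I = 0 := by unfold w0; field_simp; ring
        simpa [h3] using h2
      have := simple_pole (f := fun w => Complex.exp (-(2 * τ * w ^ 2)) * (Real.pi / Complex.sin (Real.pi * w)))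
        (h := fun w => Complex.sinh (τ * w - phi * Complex.I)) (p := w0 τ)
        (by fun_prop (disch := assumption)) (sinh_w0 h0) hd h0
      refine this.congr fun w => ?_
      unfold FI aa; ring
    · have hp2 : p ∈ (Finset.Icc (-(N : ℤ)) N).image (fun n : ℤ => (n : ℂ)) := (Finset.mem_insert.1 hp).resolve_left hpw
      obtain ⟨n, _, rfl⟩ := Finset.mem_image.1 hp2
      simp only [c]
      rw [if_neg hpw]
      have hd : HasDerivAt (fun w : ℂ => Complex.sin (Real.pi * w)) (Real.pi * Complex.cos (Real.pi * n)) n := by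
        have h1 : HasDerivAt (fun w : ℂ => (Real.pi : ℂ) * w) Real.pi (n : ℂ) := by
          simpa using ((hasDerivAt_id (n : ℂ)).const_mul (Real.pi : ℂ))
        have := h1.csin
        rwa [mul_comm] at this
      have hs : Complex.sin (Real.pi * (n : ℂ)) = 0 := Complex.sin_eq_zero_iff.2 ⟨n, by ring⟩
      have hne : (Real.pi : ℂ) * Complex.cos (Real.pi * n) ≠ 0 := by
        rw [cos_int_pi]; exact mul_ne_zero piC (zpow_ne_zero _ (by norm_num))
      have hn := sinh_int_ne ht n
      have := simple_pole (f := fun w => aa τ w * Real.pi)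
        (h := fun w : ℂ => Complex.sin (Real.pi * w)) (p := (n : ℂ))
        (by unfold aa; fun_prop (disch := assumption)) hs hd hne
      refine this.congr fun w => ?_
      unfold FI; ring

end M2R

namespace M2R
open Filter Topology

lemma sin_low {b : ℝ} (h1 : Real.pi / 10 ≤ b) (h2 : b ≤ Real.pi / 2) : 1 / 10000 ≤ Real.sin b := by
  have h := Real.mul_le_sin (x := b) (by linarith [Real.pi_pos]) h2
  have : 2 / Real.pi * b ≥ 2 / Real.pi * (Real.pi / 10) := by gcongr
  have h3 : 2 / Real.pi * (Real.pi / 10) = 1 / 5 := by field_simp; norm_num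
  linarith

lemma sinh_line {τ : ℂ} (ht : 0 < τ.re) (hsec : |τ.im| ≤ 1000 * τ.re) (s c : ℝ)
    (hc : c = 3 * Real.pi / 20 ∨ c = -(7 * Real.pi / 20)) :
    1 / 10000 ≤ ‖Complex.sinh (τ * s + c * Complex.I)‖ := by
  have hp := Real.pi_gt_three
  have hre : (τ * s + c * Complex.I).re = τ.re * s := by simp
  have him : (τ * s + c * Complex.I).im = τ.im * s + c := by simp
  by_cases hs : |τ.re * s| ≤ Real.pi / 20000
  · have h1 : |τ.im * s| ≤ Real.pi / 20 := by
      rw [abs_mul] at hs ⊢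
      rw [abs_of_pos ht] at hs
      nlinarith [abs_nonneg s]
    obtain ⟨h2, h3⟩ := abs_le.1 h1
    refine le_trans ?_ (sinh_norm_ge' _)
    rw [him]
    rcases hc with rfl | rfl
    · refine le_trans (sin_low ?_ ?_) (le_abs_self _) <;> linarith
    · rw [← abs_neg, ← Real.sin_neg]
      refine le_trans (sin_low ?_ ?_) (le_abs_self _) <;> linarith
  · push Not at hs
    refine le_trans ?_ (sinh_norm_ge _)
    rw [hre]
    refine le_trans ?_ (abs_sinh_ge _)
    linarith

lemma sinh_ge_exp {y : ℝ} (hy : 1 ≤ y) : Real.exp y / 4 ≤ Real.sinh y := by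
  rw [Real.sinh_eq]
  have h1 : Real.exp y ≥ 2 := by have := Real.add_one_le_exp y; linarith
  have h2 : Real.exp (-y) ≤ 1 := Real.exp_le_one_iff.2 (by linarith)
  linarith

/-- pointwise bound on a horizontal line; `e = ±1` -/
lemma FI_line {τ : ℂ} (ht : 0 < τ.re) (hsec : |τ.im| ≤ 1000 * τ.re) (hx : 1 ≤ (τ⁻¹).re) (s e : ℝ)
    (he : e = 1 ∨ e = -1) :
    ‖FI τ (s + e * (Real.pi / 4) * Complex.I / τ)‖ ≤
      40000 * Real.pi * Real.exp (-(Real.pi ^ 2 / 8 * (τ⁻¹).re)) * Real.exp (-(2 * τ.re) * s ^ 2) := by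
  have h0 : τ ≠ 0 := by rintro rfl; simp at ht
  have hp := Real.pi_gt_three
  set x := (τ⁻¹).re with hxd
  set w : ℂ := s + e * (Real.pi / 4) * Complex.I / τ with hw
  have he2 : e ^ 2 = 1 := by rcases he with rfl | rfl <;> norm_num
  have heC : (e : ℂ) ^ 2 = 1 := by exact_mod_cast he2
  have habs : |e| = 1 := by rcases he with rfl | rfl <;> norm_num
  have hwim : w.im = e * (Real.pi / 4) * x := by
    rw [hw, Complex.add_im, Complex.ofReal_im, zero_add, div_eq_mul_inv, mul_assoc,
      show ((e : ℂ) * (Real.pi / 4)) = ((e * (Real.pi / 4) : ℝ) : ℂ) by push_cast; ring, Complex.im_ofReal_mul, Complex.I_mul_im]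
  have hexp : ‖Complex.exp (-(2 * τ * w ^ 2))‖ = Real.exp (Real.pi ^ 2 / 8 * x) * Real.exp (-(2 * τ.re) * s ^ 2) := by
    have e1 : -(2 * τ * w ^ 2) = ((-2 * s ^ 2 : ℝ) : ℂ) * τ + ((-(e * Real.pi * s) : ℝ) : ℂ) * Complex.I + ((Real.pi ^ 2 / 8 : ℝ) : ℂ) * τ⁻¹ := by
      rw [hw]; push_cast; field_simp
      linear_combination (-(16 : ℂ) * Real.pi ^ 2 * Complex.I ^ 2) * heC - (16 * (Real.pi : ℂ) ^ 2) * Complex.I_sq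
    rw [e1, Complex.norm_exp, ← Real.exp_add]
    congr 1
    simp only [Complex.add_re, Complex.re_ofReal_mul, Complex.I_re]
    rw [← hxd]; ring
  have hsinh : 1 / 10000 ≤ ‖Complex.sinh (τ * w - phi * Complex.I)‖ := by
    rcases he with rfl | rfl
    · have e2 : τ * w - phi * Complex.I = τ * s + ((3 * Real.pi / 20 : ℝ) : ℂ) * Complex.I := by
        rw [hw]; unfold phi; push_cast; field_simp; ring
      rw [e2]; exact sinh_line ht hsec s _ (Or.inl rfl)
    · have e2 : τ * w - phi * Complex.I = τ * s + ((-(7 * Real.pi / 20) : ℝ) : ℂ) * Complex.I := by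
        rw [hw]; unfold phi; push_cast; field_simp; ring
      rw [e2]; exact sinh_line ht hsec s _ (Or.inr rfl)
  have hsin : Real.exp (Real.pi ^ 2 / 4 * x) / 4 ≤ ‖Complex.sin (Real.pi * w)‖ := by
    refine le_trans ?_ (sin_norm_ge _)
    rw [Complex.im_ofReal_mul, hwim, Real.abs_sinh]
    rw [show Real.pi * (e * (Real.pi / 4) * x) = e * (Real.pi ^ 2 / 4 * x) by ring, abs_mul, habs, one_mul,
      abs_of_nonneg (by positivity)]
    apply sinh_ge_exp
    nlinarith
  unfold FI aa
  rw [norm_mul, norm_div, norm_div, hexp, Complex.norm_real, Real.norm_of_nonneg Real.pi_pos.le]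
  have p1 : 0 < Real.exp (Real.pi ^ 2 / 4 * x) / 4 := by positivity
  calc _ ≤ Real.exp (Real.pi ^ 2 / 8 * x) * Real.exp (-(2 * τ.re) * s ^ 2) / (1 / 10000) *
        (Real.pi / (Real.exp (Real.pi ^ 2 / 4 * x) / 4)) := by gcongr
    _ = _ := by
        have : Real.exp (Real.pi ^ 2 / 4 * x) = Real.exp (Real.pi ^ 2 / 8 * x) * Real.exp (Real.pi ^ 2 / 8 * x) := by
          rw [← Real.exp_add]; ring_nf
        rw [this, Real.exp_neg]
        have := Real.exp_ne_zero (Real.pi ^ 2 / 8 * x)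
        field_simp
        norm_num

lemma line_int {τ : ℂ} (ht : 0 < τ.re) (hsec : |τ.im| ≤ 1000 * τ.re) (hx : 1 ≤ (τ⁻¹).re) (e : ℝ)
    (he : e = 1 ∨ e = -1) (R : ℝ) (hR : 0 ≤ R) :
    ‖∫ y in (-R)..R, FI τ (y + ((e * (Real.pi / 4 * (τ⁻¹).re) : ℝ) : ℂ) * Complex.I)‖ ≤
      40000 * Real.pi * Real.exp (-(Real.pi ^ 2 / 8 * (τ⁻¹).re)) * √(Real.pi / (2 * τ.re)) := by
  set sh : ℝ := (e * (Real.pi / 4) * Complex.I / τ).re with hsh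
  set K := 40000 * Real.pi * Real.exp (-(Real.pi ^ 2 / 8 * (τ⁻¹).re)) with hK
  have hK0 : 0 ≤ K := by positivity
  have hb : 0 < 2 * τ.re := by positivity
  have hg : MeasureTheory.Integrable (fun y : ℝ => K * Real.exp (-(2 * τ.re) * (y - sh) ^ 2)) :=
    ((integrable_exp_neg_mul_sq hb).comp_sub_right sh).const_mul K
  have hpt : ∀ y : ℝ, ‖FI τ (y + ((e * (Real.pi / 4 * (τ⁻¹).re) : ℝ) : ℂ) * Complex.I)‖ ≤ K * Real.exp (-(2 * τ.re) * (y - sh) ^ 2) := by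
    intro y
    have h := FI_line ht hsec hx (y - sh) e he
    have e1 : ((y - sh : ℝ) : ℂ) + e * (Real.pi / 4) * Complex.I / τ = y + ((e * (Real.pi / 4 * (τ⁻¹).re) : ℝ) : ℂ) * Complex.I := by
      have him : (e * (Real.pi / 4) * Complex.I / τ : ℂ).im = e * (Real.pi / 4 * (τ⁻¹).re) := by
        rw [div_eq_mul_inv, mul_assoc,
          show ((e : ℂ) * (Real.pi / 4)) = ((e * (Real.pi / 4) : ℝ) : ℂ) by push_cast; ring, Complex.im_ofReal_mul, Complex.I_mul_im]
        ring
      apply Complex.ext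
      · simp only [Complex.add_re, Complex.ofReal_re, ← hsh, Complex.re_ofReal_mul, Complex.I_re]; ring
      · simp only [Complex.add_im, Complex.ofReal_im, him, Complex.im_ofReal_mul, Complex.I_im]; ring
    rwa [e1] at h
  refine (intervalIntegral.norm_integral_le_of_norm_le (by linarith) (Eventually.of_forall fun y _ => hpt y) hg.intervalIntegrable).trans ?_
  rw [intervalIntegral.integral_of_le (by linarith)]
  refine (MeasureTheory.setIntegral_le_integral hg (Eventually.of_forall fun y => by positivity)).trans ?_
  rw [MeasureTheory.integral_const_mul, MeasureTheory.integral_sub_right_eq_self (fun y => Real.exp (-(2 * τ.re) * y ^ 2)) sh, integral_gaussian]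

lemma FI_vert {τ : ℂ} (ht : 0 < τ.re) (N : ℕ) (Y y e : ℝ) (hy : |y| ≤ Y) (he : e = 1 ∨ e = -1)
    (hN : |τ.im| * Y + 1 ≤ τ.re * (N + 1 / 2)) :
    ‖FI τ (((e * (N + 1 / 2) : ℝ) : ℂ) + y * Complex.I)‖ ≤
      Real.pi * Real.exp (-2 * (τ.re * ((N + 1/2) ^ 2 - Y ^ 2) - 2 * |τ.im| * (N + 1/2) * Y)) := by
  have he2 : e ^ 2 = 1 := by rcases he with rfl | rfl <;> norm_num
  have habs : |e| = 1 := by rcases he with rfl | rfl <;> norm_num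
  set R : ℝ := N + 1 / 2 with hR
  have hR0 : 0 < R := by positivity
  have hY0 : 0 ≤ Y := (abs_nonneg y).trans hy
  set w : ℂ := ((e * R : ℝ) : ℂ) + y * Complex.I with hw
  have hwre : w.re = e * R := by simp [hw]
  have hwim : w.im = y := by simp [hw]
  have hb : |τ.im * y| ≤ |τ.im| * Y := by rw [abs_mul]; gcongr
  have hsin : 1 ≤ ‖Complex.sin (Real.pi * w)‖ := by
    refine le_trans ?_ (sin_norm_ge' _)
    rw [Complex.re_ofReal_mul, hwre]
    have : |Real.sin (Real.pi * R)| = 1 := by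
      rw [hR, show Real.pi * ((N : ℝ) + 1 / 2) = Real.pi / 2 + N * Real.pi by ring, Real.sin_add_nat_mul_pi]
      simp
    rcases he with rfl | rfl
    · rw [one_mul, this]
    · rw [show Real.pi * (-1 * R) = -(Real.pi * R) by ring, Real.sin_neg, abs_neg, this]
  have hsinh : 1 ≤ ‖Complex.sinh (τ * w - phi * Complex.I)‖ := by
    refine le_trans ?_ ((abs_sinh_ge _).trans (sinh_norm_ge _))
    have : (τ * w - phi * Complex.I).re = e * (τ.re * R) - τ.im * y := by
      simp [hwre, hwim]; ring
    rw [this]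
    have h1 : |e * (τ.re * R)| = τ.re * R := by rw [abs_mul, habs, one_mul, abs_of_pos (by positivity)]
    have h2 := abs_sub_abs_le_abs_sub (e * (τ.re * R)) (τ.im * y)
    linarith
  have hexp : ‖Complex.exp (-(2 * τ * w ^ 2))‖ ≤ Real.exp (-2 * (τ.re * (R ^ 2 - Y ^ 2) - 2 * |τ.im| * R * Y)) := by
    rw [Complex.norm_exp]
    apply Real.exp_le_exp.2
    have : (-(2 * τ * w ^ 2)).re = -2 * (τ.re * (R ^ 2 - y ^ 2) - 2 * (τ.im * y) * (e * R)) := by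
      have e1 : w ^ 2 = ((R ^ 2 - y ^ 2 : ℝ) : ℂ) + ((2 * e * R * y : ℝ) : ℂ) * Complex.I := by
        rw [hw]; push_cast
        have heC : (e : ℂ) ^ 2 = 1 := by exact_mod_cast he2
        linear_combination (R : ℂ) ^ 2 * heC + (y : ℂ) ^ 2 * Complex.I_sq
      rw [e1, show (-2 * (τ.re * (R ^ 2 - y ^ 2) - 2 * (τ.im * y) * (e * R))) = -2 * (τ.re * (R ^ 2 - y ^ 2) - τ.im * (2 * e * R * y)) by ring]
      generalize R ^ 2 - y ^ 2 = A
      generalize 2 * e * R * y = B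
      simp; ring
    rw [this]
    have h1 : y ^ 2 ≤ Y ^ 2 := by rw [← sq_abs y]; gcongr
    have h2 : (τ.im * y) * (e * R) ≤ |τ.im| * Y * R := by
      refine (le_abs_self _).trans ?_
      rw [abs_mul, abs_mul e, habs, one_mul, abs_of_pos hR0]
      gcongr
    nlinarith
  unfold FI aa
  rw [norm_mul, norm_div, norm_div, Complex.norm_real, Real.norm_of_nonneg Real.pi_pos.le]
  calc _ ≤ Real.exp (-2 * (τ.re * (R ^ 2 - Y ^ 2) - 2 * |τ.im| * R * Y)) / 1 * (Real.pi / 1) := by gcongr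
    _ = _ := by ring

end M2R

namespace M2R
open Filter Topology

lemma vert_int {τ : ℂ} (ht : 0 < τ.re) (N : ℕ) (Y e : ℝ) (hY : 0 ≤ Y) (he : e = 1 ∨ e = -1)
    (hN : |τ.im| * Y + 1 ≤ τ.re * (N + 1 / 2)) :
    ‖∫ y in (-Y)..Y, FI τ (((e * (N + 1 / 2) : ℝ) : ℂ) + y * Complex.I)‖ ≤
      Real.pi * Real.exp (-2 * (τ.re * ((N + 1/2) ^ 2 - Y ^ 2) - 2 * |τ.im| * (N + 1/2) * Y)) * (2 * Y) := by
  have := intervalIntegral.norm_integral_le_of_norm_le_const (a := -Y) (b := Y)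
    (f := fun y : ℝ => FI τ (((e * (N + 1 / 2) : ℝ) : ℂ) + y * Complex.I))
    (C := Real.pi * Real.exp (-2 * (τ.re * ((N + 1/2) ^ 2 - Y ^ 2) - 2 * |τ.im| * (N + 1/2) * Y))) (fun y hy => by
      rw [Set.uIoc_of_le (by linarith)] at hy
      exact FI_vert ht N Y y e (abs_le.2 ⟨hy.1.le, hy.2⟩) he hN)
  rwa [show Y - -Y = 2 * Y by ring, abs_of_nonneg (by linarith : 0 ≤ 2 * Y)] at this

lemma BI_le {τ : ℂ} (ht : 0 < τ.re) (hsec : |τ.im| ≤ 1000 * τ.re) (hx : 1 ≤ (τ⁻¹).re) (N : ℕ) (Y : ℝ)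
    (hYd : Y = Real.pi / 4 * (τ⁻¹).re)
    (hN : |τ.im| * Y + 1 ≤ τ.re * (N + 1 / 2)) :
    ‖BI (FI τ) (-(N + 1 / 2)) (N + 1 / 2) (-Y) Y‖ ≤
      2 * (40000 * Real.pi * Real.exp (-(Real.pi ^ 2 / 8 * (τ⁻¹).re)) * √(Real.pi / (2 * τ.re))) +
      2 * (Real.pi * Real.exp (-2 * (τ.re * ((N + 1/2) ^ 2 - Y ^ 2) - 2 * |τ.im| * (N + 1/2) * Y)) * (2 * Y)) := by
  have hY : 0 ≤ Y := by rw [hYd]; positivity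
  have v1 := vert_int ht N Y 1 hY (Or.inl rfl) hN
  have v2 := vert_int ht N Y (-1) hY (Or.inr rfl) hN
  have l1 := line_int ht hsec hx 1 (Or.inl rfl) (N + 1 / 2) (by positivity)
  have l2 := line_int ht hsec hx (-1) (Or.inr rfl) (N + 1 / 2) (by positivity)
  rw [← hYd, one_mul] at l1
  rw [← hYd, neg_one_mul] at l2
  rw [one_mul] at v1
  rw [neg_one_mul] at v2
  unfold BI
  refine (norm_sub_le _ _).trans ?_
  have h1 := norm_add_le ((∫ x : ℝ in (-((N : ℝ) + 1 / 2))..(N + 1 / 2), FI τ (x + ((-Y : ℝ) : ℂ) * Complex.I)) - (∫ x : ℝ in (-((N : ℝ) + 1 / 2))..(N + 1 / 2), FI τ (x + (Y : ℂ) * Complex.I)))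
    (Complex.I * (∫ y : ℝ in (-Y)..Y, FI τ ((((N : ℝ) + 1 / 2 : ℝ) : ℂ) + y * Complex.I)))
  have h2 := norm_sub_le (∫ x : ℝ in (-((N : ℝ) + 1 / 2))..(N + 1 / 2), FI τ (x + ((-Y : ℝ) : ℂ) * Complex.I)) (∫ x : ℝ in (-((N : ℝ) + 1 / 2))..(N + 1 / 2), FI τ (x + (Y : ℂ) * Complex.I))
  rw [norm_mul, Complex.norm_I, one_mul] at h1 ⊢
  linarith

lemma vert_lim (t a Y : ℝ) (ht : 0 < t) : Tendsto (fun N : ℕ => 2 * (Real.pi * Real.exp (-2 * (t * (((N : ℝ) + 1/2) ^ 2 - Y ^ 2) - 2 * a * (N + 1/2) * Y)) * (2 * Y)))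
    atTop (𝓝 0) := by
  have hR : Tendsto (fun N : ℕ => (N : ℝ) + 1/2) atTop atTop := tendsto_atTop_add_const_right _ _ tendsto_natCast_atTop_atTop
  have h1 : Tendsto (fun N : ℕ => t * (((N : ℝ) + 1/2) ^ 2 - Y ^ 2) - 2 * a * (N + 1/2) * Y) atTop atTop := by
    have h2 : Tendsto (fun R : ℝ => t * (R ^ 2 - Y ^ 2) - 2 * a * R * Y) atTop atTop := by
      have h3 : Tendsto (fun R : ℝ => R * (t * R - 2 * a * Y) - t * Y ^ 2) atTop atTop := by
        apply tendsto_atTop_add_const_right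
        apply tendsto_id.atTop_mul_atTop₀
        apply tendsto_atTop_add_const_right
        exact tendsto_id.const_mul_atTop ht
      refine h3.congr fun R => ?_
      ring
    exact h2.comp hR
  have h2 : Tendsto (fun N : ℕ => Real.exp (-2 * (t * (((N : ℝ) + 1/2) ^ 2 - Y ^ 2) - 2 * a * (N + 1/2) * Y))) atTop (𝓝 0) :=
    Real.tendsto_exp_atBot.comp (h1.const_mul_atTop_of_neg (by norm_num))
  have := ((h2.const_mul Real.pi).mul_const (2 * Y)).const_mul 2
  simpa using this

lemma R2_err {τ : ℂ} (ht : 0 < τ.re) (hsec : |τ.im| ≤ 1000 * τ.re) (hx : 1 ≤ (τ⁻¹).re) :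
    ‖R2 ζ (Complex.exp (-τ)) - PP (Complex.exp (-τ)) * (Complex.I * Complex.sin phi * c0 τ)‖ ≤
    ‖PP (Complex.exp (-τ))‖ * (40000 * Real.exp (-(Real.pi ^ 2 / 8 * (τ⁻¹).re)) * √(Real.pi / (2 * τ.re))) := by
  set L := Real.exp (-(Real.pi ^ 2 / 8 * (τ⁻¹).re)) * √(Real.pi / (2 * τ.re)) with hL
  have hL0 : 0 ≤ L := by positivity
  set P := PP (Complex.exp (-τ))
  set Y := Real.pi / 4 * (τ⁻¹).re with hYd
  have hlim := (R2_limit ht).sub_const (P * (Complex.I * Complex.sin phi * c0 τ))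
  have hR : Tendsto (fun N : ℕ => (N : ℝ) + 1/2) atTop atTop := tendsto_atTop_add_const_right _ _ tendsto_natCast_atTop_atTop
  have hR2 := hR.const_mul_atTop ht
  have hb : Tendsto (fun N : ℕ => ‖P‖ * ((2 * (40000 * Real.pi * Real.exp (-(Real.pi ^ 2 / 8 * (τ⁻¹).re)) * √(Real.pi / (2 * τ.re))) +
      2 * (Real.pi * Real.exp (-2 * (τ.re * (((N : ℝ) + 1/2) ^ 2 - Y ^ 2) - 2 * |τ.im| * (N + 1/2) * Y)) * (2 * Y))) / (2 * Real.pi)))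
      atTop (𝓝 (‖P‖ * (40000 * Real.exp (-(Real.pi ^ 2 / 8 * (τ⁻¹).re)) * √(Real.pi / (2 * τ.re))))) := by
    have := ((((vert_lim τ.re |τ.im| Y ht).const_add (2 * (40000 * Real.pi * Real.exp (-(Real.pi ^ 2 / 8 * (τ⁻¹).re)) * √(Real.pi / (2 * τ.re))))).div_const (2 * Real.pi)).const_mul ‖P‖)
    have e : ‖P‖ * ((2 * (40000 * Real.pi * Real.exp (-(Real.pi ^ 2 / 8 * (τ⁻¹).re)) * √(Real.pi / (2 * τ.re))) + 0) / (2 * Real.pi)) = ‖P‖ * (40000 * Real.exp (-(Real.pi ^ 2 / 8 * (τ⁻¹).re)) * √(Real.pi / (2 * τ.re))) := by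
      have := Real.pi_ne_zero
      field_simp; ring
    rwa [e] at this
  refine le_of_tendsto_of_tendsto hlim.norm hb ?_
  filter_upwards [hR.eventually_gt_atTop |(w0 τ).re|, hR2.eventually_ge_atTop (|τ.im| * Y + 1)] with N h1 h2
  have hres := residue_sum ht N h1
  have hle := BI_le ht hsec hx N Y hYd h2
  rw [← hYd] at hres
  have e1 : P * (-(Complex.I * Complex.sin phi) * ∑ n ∈ Finset.Icc (-(N : ℤ)) N, sa τ n) - P * (Complex.I * Complex.sin phi * c0 τ) =
      P * (-(Complex.sin phi) * (BI (FI τ) (-(N + 1 / 2)) (N + 1 / 2) (-Y) Y / (2 * Real.pi))) := by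
    rw [hres]
    have := piC
    field_simp
    ring
  rw [e1, norm_mul, norm_mul, norm_neg, norm_div]
  have e2 : ‖(2 * Real.pi : ℂ)‖ = 2 * Real.pi := by
    rw [norm_mul, Complex.norm_real, Real.norm_of_nonneg Real.pi_pos.le]; norm_num
  have e3 : ‖Complex.sin (phi : ℂ)‖ ≤ 1 := by
    rw [← Complex.ofReal_sin, Complex.norm_real]; exact Real.abs_sin_le_one _
  rw [e2]
  refine mul_le_mul_of_nonneg_left ?_ (norm_nonneg _)
  refine (mul_le_of_le_one_left (by positivity) e3).trans ?_
  gcongr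

/-- exponent -/
noncomputable def bet : ℝ := 9 * Real.pi ^ 2 / 200

/-- main term -/
noncomputable def MM (τ : ℂ) : ℂ := (2 * τ / Real.pi) ^ (1 / 2 : ℂ) / (Real.sqrt 2 : ℂ) * (2 * Real.pi * Complex.sin phi / τ) *
  Complex.exp (bet / τ - τ / 8)

/-- correction factor -/
noncomputable def rho (τ : ℂ) : ℂ := PP (Complex.exp (-τ)) / P0 τ / (1 - Complex.exp (-(Real.pi ^ 2 / 5 / τ)))

lemma P0_ne {τ : ℂ} (h0 : τ ≠ 0) : P0 τ ≠ 0 := by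
  unfold P0
  refine mul_ne_zero (div_ne_zero ?_ ?_) (Complex.exp_ne_zero _)
  · rw [Complex.cpow_ne_zero_iff]
    left; exact div_ne_zero (mul_ne_zero (by norm_num) h0) piC
  · exact_mod_cast (Real.sqrt_pos.2 (by norm_num : (0:ℝ) < 2)).ne'

lemma main_eq {τ : ℂ} (h0 : τ ≠ 0) : PP (Complex.exp (-τ)) * (Complex.I * Complex.sin phi * c0 τ) = MM τ * rho τ := by
  have hP := P0_ne h0
  have e1 : PP (Complex.exp (-τ)) = PP (Complex.exp (-τ)) / P0 τ * P0 τ := by field_simp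
  have hs2 : Complex.sin (Real.pi * w0 τ) = Complex.I * (Complex.exp (Real.pi ^ 2 / 10 / τ) * (1 - Complex.exp (-(Real.pi ^ 2 / 5 / τ))) / 2) := by
    have : (Real.pi : ℂ) * w0 τ = (Real.pi ^ 2 / 10 / τ) * Complex.I := by unfold w0 phi; push_cast; ring
    rw [this, Complex.sin_mul_I, Complex.sinh, mul_sub, ← Complex.exp_add]
    rw [show (Real.pi ^ 2 / 10 / τ : ℂ) + -(Real.pi ^ 2 / 5 / τ) = -(Real.pi ^ 2 / 10 / τ) by ring]
    ring
  have hw2 : -(2 * τ * w0 τ ^ 2) = Real.pi ^ 2 / 50 / τ := by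
    unfold w0 phi; push_cast; field_simp
    rw [Complex.I_sq]; norm_num
  have hexp : Complex.exp (bet / τ - τ / 8) = Complex.exp (Real.pi ^ 2 / (8 * τ) - τ / 8) * Complex.exp (Real.pi ^ 2 / 50 / τ) * (Complex.exp (Real.pi ^ 2 / 10 / τ))⁻¹ := by
    rw [← Complex.exp_neg, ← Complex.exp_add, ← Complex.exp_add]
    congr 1
    unfold bet; push_cast; field_simp; ring
  unfold MM rho c0
  rw [e1, hs2, hw2, hexp]
  nth_rewrite 2 [P0]
  generalize PP (Complex.exp (-τ)) / P0 τ = A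
  have := Complex.exp_ne_zero (Real.pi ^ 2 / 10 / τ)
  have := Complex.I_ne_zero
  generalize 1 - Complex.exp (-(Real.pi ^ 2 / 5 / τ)) = D
  by_cases hD : D = 0
  · simp [hD]
  field_simp

lemma rho_cusp : Tendsto rho cusp (𝓝 1) := by
  have h1 : Tendsto (fun τ : ℂ => Complex.exp (-(Real.pi ^ 2 / 5 / τ))) cusp (𝓝 0) := by
    rw [tendsto_zero_iff_norm_tendsto_zero]
    have h2 : Tendsto (fun τ : ℂ => Real.exp (-(Real.pi ^ 2 / 5) * (τ⁻¹).re)) cusp (𝓝 0) :=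
      Real.tendsto_exp_atBot.comp (tendsto_comap.const_mul_atTop_of_neg (by have := Real.pi_pos; nlinarith [sq_pos_of_pos this]))
    refine h2.congr fun τ => ?_
    rw [Complex.norm_exp]; congr 1
    rw [show (-(Real.pi ^ 2 / 5 / τ) : ℂ) = (-(Real.pi ^ 2 / 5) : ℂ) * τ⁻¹ by ring, show (-(Real.pi ^ 2 / 5) : ℂ) = ((-(Real.pi ^ 2 / 5) : ℝ) : ℂ) by push_cast; ring, Complex.re_ofReal_mul]
  have h3 := PP_cusp.div (h1.const_sub 1) (by norm_num)
  rw [sub_zero, div_one] at h3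
  exact h3

lemma P0_norm {τ : ℂ} (h0 : 0 < τ.re) : ‖P0 τ‖ ≤ √(2 * ‖τ‖ / Real.pi) * Real.exp (Real.pi ^ 2 / 8 * (τ⁻¹).re) := by
  unfold P0
  rw [norm_mul, norm_div, Complex.norm_exp]
  have e1 : ‖(2 * τ / Real.pi : ℂ) ^ (1 / 2 : ℂ)‖ = √(2 * ‖τ‖ / Real.pi) := by
    rw [show (1 / 2 : ℂ) = ((1 / 2 : ℝ) : ℂ) by push_cast; ring, Complex.norm_cpow_real, Real.sqrt_eq_rpow, norm_div, norm_mul,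
      Complex.norm_real, Real.norm_of_nonneg Real.pi_pos.le]
    norm_num
  have e2 : (Real.pi ^ 2 / (8 * τ) - τ / 8 : ℂ).re = Real.pi ^ 2 / 8 * (τ⁻¹).re - τ.re / 8 := by
    rw [show (Real.pi ^ 2 / (8 * τ) - τ / 8 : ℂ) = ((Real.pi ^ 2 / 8 : ℝ) : ℂ) * τ⁻¹ - ((1 / 8 : ℝ) : ℂ) * τ by push_cast; rw [div_mul_eq_div_div]; ring,
      Complex.sub_re, Complex.re_ofReal_mul, Complex.re_ofReal_mul]; ring
  rw [e1, e2, Complex.norm_real, Real.norm_of_nonneg (Real.sqrt_nonneg _)]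
  have : (1:ℝ) ≤ √2 := Real.one_le_sqrt.2 (by norm_num)
  gcongr
  · exact div_le_self (Real.sqrt_nonneg _) this
  · linarith

/-- Major-arc approximation. -/
lemma R2_major : ∀ᶠ τ : ℂ in cusp, |τ.im| ≤ 1000 * τ.re → ‖R2 ζ (Complex.exp (-τ)) - MM τ * rho τ‖ ≤ 10 ^ 7 := by
  have hP : ∀ᶠ τ : ℂ in cusp, ‖PP (Complex.exp (-τ)) / P0 τ‖ ≤ 2 :=
    (PP_cusp.norm.eventually_le_const (by norm_num))
  filter_upwards [hP, cusp_ge 1, cusp_re] with τ h1 h2 ht hsec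
  have h0 : τ ≠ 0 := by rintro rfl; simp at ht
  have h := R2_err ht hsec h2
  rw [main_eq h0] at h
  refine h.trans ?_
  rw [norm_div, div_le_iff₀ (norm_pos_iff.2 (P0_ne h0))] at h1
  have hP1 := P0_norm ht
  have hτ : ‖τ‖ ≤ 1001 * τ.re := by
    have := Complex.norm_le_abs_re_add_abs_im τ
    rw [abs_of_pos ht] at this; linarith
  have hsq : √(2 * ‖τ‖ / Real.pi) * √(Real.pi / (2 * τ.re)) ≤ 100 := by
    rw [← Real.sqrt_mul (by positivity)]
    apply Real.sqrt_le_iff.2 ⟨by norm_num, ?_⟩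
    have := Real.pi_pos
    rw [show 2 * ‖τ‖ / Real.pi * (Real.pi / (2 * τ.re)) = ‖τ‖ / τ.re by field_simp, div_le_iff₀ ht]
    linarith
  calc _ ≤ 2 * (√(2 * ‖τ‖ / Real.pi) * Real.exp (Real.pi ^ 2 / 8 * (τ⁻¹).re)) * (40000 * Real.exp (-(Real.pi ^ 2 / 8 * (τ⁻¹).re)) * √(Real.pi / (2 * τ.re))) := by
        gcongr; linarith
    _ = 80000 * (√(2 * ‖τ‖ / Real.pi) * √(Real.pi / (2 * τ.re))) := by
        rw [Real.exp_neg]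
        have := Real.exp_ne_zero (Real.pi ^ 2 / 8 * (τ⁻¹).re)
        field_simp; ring
    _ ≤ 10 ^ 7 := by linarith

end M2R

namespace M2R
open Filter Topology

/-- point on the circle -/
noncomputable def tau (t θ : ℝ) : ℂ := t + θ * Complex.I

lemma tau_re (t θ : ℝ) : (tau t θ).re = t := by simp [tau]
lemma tau_im (t θ : ℝ) : (tau t θ).im = θ := by simp [tau]

/-- the circle-method integrand -/
noncomputable def GG (n : ℕ) (t θ : ℝ) : ℂ := R2 ζ (Complex.exp (-(tau t θ))) * Complex.exp (n * tau t θ)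

lemma q_norm (t θ : ℝ) : ‖Complex.exp (-(tau t θ))‖ = Real.exp (-t) := by
  rw [Complex.norm_exp, Complex.neg_re, tau_re]

lemma term_norm {t : ℝ} (θ : ℝ) (k : ℕ) : ‖Acoef 1 10 k * Complex.exp (-(tau t θ)) ^ k‖ = ‖Acoef 1 10 k * ((Real.exp (-t) : ℝ) : ℂ) ^ k‖ := by
  rw [norm_mul, norm_pow, q_norm, norm_mul, norm_pow, Complex.norm_real, Real.norm_of_nonneg (Real.exp_pos _).le]

lemma sum_bound {t : ℝ} (ht : 0 < t) : Summable (fun k => ‖Acoef 1 10 k * ((Real.exp (-t) : ℝ) : ℂ) ^ k‖) := by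
  apply summable_Acoef
  rw [Complex.norm_real, Real.norm_of_nonneg (Real.exp_pos _).le]
  exact Real.exp_lt_one_iff.2 (by linarith)

lemma tau_cont (t : ℝ) : Continuous (fun θ => tau t θ) := by unfold tau; fun_prop

lemma R2_hasSum {t : ℝ} (ht : 0 < t) (θ : ℝ) : HasSum (fun k => Acoef 1 10 k * Complex.exp (-(tau t θ)) ^ k) (R2 ζ (Complex.exp (-(tau t θ)))) := by
  apply hasSum_Acoef
  rw [q_norm]; exact Real.exp_lt_one_iff.2 (by linarith)

lemma R2_cont {t : ℝ} (ht : 0 < t) : Continuous (fun θ => R2 ζ (Complex.exp (-(tau t θ)))) := by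
  have h : (fun θ => R2 ζ (Complex.exp (-(tau t θ)))) = fun θ => ∑' k, Acoef 1 10 k * Complex.exp (-(tau t θ)) ^ k := by
    ext θ; exact (R2_hasSum ht θ).tsum_eq.symm
  rw [h]
  have hc := tau_cont t
  refine continuous_tsum (fun k => by fun_prop) (sum_bound ht) (fun k θ => ?_)
  rw [term_norm]

lemma GG_cont {t : ℝ} (ht : 0 < t) (n : ℕ) : Continuous (GG n t) := by
  have hc := tau_cont t
  exact (R2_cont ht).mul (by fun_prop)

lemma exp_int (m : ℤ) : ∫ θ in (-Real.pi)..Real.pi, Complex.exp (m * Complex.I * θ) = if m = 0 then (2 * Real.pi : ℂ) else 0 := by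
  split_ifs with h
  · subst h; simp; ring
  · have hm : (m : ℂ) * Complex.I ≠ 0 := mul_ne_zero (by exact_mod_cast h) Complex.I_ne_zero
    rw [integral_exp_mul_complex hm]
    have : Complex.exp (m * Complex.I * (Real.pi : ℂ)) = Complex.exp (m * Complex.I * ((-Real.pi : ℝ) : ℂ)) := by
      rw [Complex.exp_eq_exp_iff_exists_int]
      exact ⟨m, by push_cast; ring⟩
    rw [this, sub_self, zero_div]

lemma GG_integral {t : ℝ} (ht : 0 < t) (n : ℕ) : ∫ θ in (-Real.pi)..Real.pi, GG n t θ = 2 * Real.pi * Acoef 1 10 n := by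
  let F : ℕ → ℝ → ℂ := fun k θ => Acoef 1 10 k * Complex.exp (-(tau t θ)) ^ k * Complex.exp (n * tau t θ)
  have hc := tau_cont t
  have hsum : HasSum (fun k => ∫ θ in (-Real.pi)..Real.pi, F k θ) (∫ θ in (-Real.pi)..Real.pi, GG n t θ) := by
    refine intervalIntegral.hasSum_integral_of_dominated_convergence
      (fun k _ => ‖Acoef 1 10 k * ((Real.exp (-t) : ℝ) : ℂ) ^ k‖ * Real.exp (n * t)) (fun k => ?_) (fun k => ?_) ?_ ?_ ?_
    · exact (by simp only [F]; fun_prop : Continuous (F k)).aestronglyMeasurable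
    · refine Eventually.of_forall fun θ _ => ?_
      simp only [F]
      rw [norm_mul, term_norm, Complex.norm_exp]
      apply le_of_eq
      congr 2
      rw [← Complex.ofReal_natCast, Complex.re_ofReal_mul, tau_re]
    · exact Eventually.of_forall fun θ _ => (sum_bound ht).mul_right _
    · exact intervalIntegrable_const
    · exact Eventually.of_forall fun θ _ => (R2_hasSum ht θ).mul_right _
  have hF : ∀ k, ∫ θ in (-Real.pi)..Real.pi, F k θ = if k = n then 2 * Real.pi * Acoef 1 10 n else 0 := by
    intro k
    have e : ∀ θ, F k θ = (Acoef 1 10 k * Complex.exp ((((n : ℤ) - k : ℤ) : ℂ) * t)) * Complex.exp ((((n : ℤ) - k : ℤ) : ℂ) * Complex.I * θ) := by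
      intro θ
      simp only [F]
      rw [mul_assoc, mul_assoc, ← Complex.exp_nat_mul, ← Complex.exp_add, ← Complex.exp_add]
      congr 2
      unfold tau; push_cast; ring
    simp only [e]
    rw [intervalIntegral.integral_const_mul, exp_int]
    by_cases h : k = n
    · subst h; simp; ring
    · rw [if_neg h, if_neg (by omega), mul_zero]
  simp only [hF] at hsum
  exact hsum.unique (hasSum_ite_eq n _)

/-- the real scale constant -/
noncomputable def KK : ℝ := 2 * √Real.pi * Real.sin phi

lemma KK_pos : 0 < KK := by unfold KK; have := sin_phi_pos; positivity

/-- scaled main factor -/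
noncomputable def hh (u v : ℝ) : ℂ := (1 + u * Complex.I) ^ (1 / 2 : ℂ) / (1 + u * Complex.I) * Complex.exp (-(v ^ 2 / (1 + u * Complex.I)))

lemma one_add_ne (u : ℝ) : (1 + u * Complex.I : ℂ) ≠ 0 := by
  intro h
  have := congrArg Complex.re h
  simp at this

lemma cpow_split {a : ℝ} (ha : 0 < a) {z : ℂ} (hz : z ≠ 0) : ((a : ℂ) * z) ^ (1 / 2 : ℂ) = ((√a : ℝ) : ℂ) * z ^ (1 / 2 : ℂ) := by
  rw [Complex.cpow_def_of_ne_zero (mul_ne_zero (by exact_mod_cast ha.ne') hz), Complex.cpow_def_of_ne_zero hz,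
    Complex.log_ofReal_mul ha hz, add_mul, Complex.exp_add]
  congr 1
  rw [Real.sqrt_eq_rpow, Real.rpow_def_of_pos ha]
  push_cast
  rfl

/-- factorisation of the main term along the scaled circle; `t = bet / X`, `N = X^2/bet`. -/
lemma MM_scaled {X : ℝ} (hX : 0 < X) (n : ℕ) (hn : (n : ℝ) = X ^ 2 / bet + 1 / 8) (u v : ℝ) (hv : v ^ 2 = X * u ^ 2) :
    MM (tau (bet / X) (bet / X * u)) * Complex.exp (n * tau (bet / X) (bet / X * u)) =
      ((KK / √(bet / X) * Real.exp (2 * X) : ℝ) : ℂ) * hh u v := by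
  have hb : 0 < bet := by unfold bet; positivity
  set t := bet / X with ht
  have ht0 : 0 < t := div_pos hb hX
  have e1 : tau t (t * u) = t * (1 + u * Complex.I) := by unfold tau; push_cast; ring
  set z : ℂ := 1 + u * Complex.I with hz
  have hz0 : z ≠ 0 := one_add_ne u
  have htC : (t : ℂ) ≠ 0 := by exact_mod_cast ht0.ne'
  have hXC : (X : ℂ) ≠ 0 := by exact_mod_cast hX.ne'
  have hbC : (bet : ℂ) ≠ 0 := by exact_mod_cast hb.ne'
  have hn' : (n : ℂ) = X ^ 2 / bet + 1 / 8 := by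
    have := congrArg (fun x : ℝ => (x : ℂ)) hn
    push_cast at this; exact this
  have hvC : (v : ℂ) ^ 2 = X * u ^ 2 := by exact_mod_cast hv
  have htX : (t : ℂ) = bet / X := by rw [ht]; push_cast; ring
  have hexp : Complex.exp (bet / (t * z) - t * z / 8) * Complex.exp (n * (t * z)) = Complex.exp (2 * X) * Complex.exp (-(v ^ 2 / z)) := by
    rw [← Complex.exp_add, ← Complex.exp_add]
    congr 1
    rw [hn', hvC, htX]
    field_simp
    rw [hz]
    linear_combination ((X : ℂ) ^ 2 * 8 * u ^ 2) * Complex.I_sq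
  unfold MM hh
  rw [e1, ← hz]
  rw [show 2 * ((t : ℂ) * z) / Real.pi = ((2 * t / Real.pi : ℝ) : ℂ) * z by push_cast; ring,
    cpow_split (by positivity) hz0]
  rw [mul_assoc _ (Complex.exp _), hexp]
  have hk : KK / √t = √(2 * t / Real.pi) / √2 * (2 * Real.pi * Real.sin phi / t) := by
    unfold KK
    rw [show 2 * t / Real.pi = 2 * (t / Real.pi) by ring, Real.sqrt_mul (by norm_num), Real.sqrt_div ht0.le]
    have a1 : √t ^ 2 = t := Real.sq_sqrt ht0.le
    have a2 : √Real.pi ^ 2 = Real.pi := Real.sq_sqrt Real.pi_pos.le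
    have a3 : √t ≠ 0 := (Real.sqrt_pos.2 ht0).ne'
    have a4 : √Real.pi ≠ 0 := (Real.sqrt_pos.2 Real.pi_pos).ne'
    have a5 : √(2:ℝ) ≠ 0 := (Real.sqrt_pos.2 (by norm_num)).ne'
    field_simp
    rw [a1, a2]; ring
  rw [hk]
  push_cast
  field_simp

end M2R

namespace M2R
open Filter Topology

lemma bet_pos : 0 < bet := by unfold bet; positivity
lemma bet_lt : bet < 1 := by unfold bet; nlinarith [Real.pi_lt_d2, Real.pi_pos]
lemma bet_gt : 0.443 < bet := by unfold bet; nlinarith [Real.pi_gt_d2]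

/-- scale -/
noncomputable def SC (X : ℝ) : ℝ := KK / √(bet / X) * Real.exp (2 * X)

lemma SC_pos {X : ℝ} (hX : 0 < X) : 0 < SC X := by
  unfold SC
  have := KK_pos
  have := Real.sqrt_pos.2 (div_pos bet_pos hX)
  positivity

/-- the point -/
noncomputable def tp (X u : ℝ) : ℂ := tau (bet / X) (bet / X * u)

lemma tp_inv {X u : ℝ} (hX : 0 < X) (hu : |u| ≤ 1000) : X / (1000001 * bet) ≤ ((tp X u)⁻¹).re := by
  have hb := bet_pos
  have ht : 0 < bet / X := div_pos hb hX
  have hu2 : u ^ 2 ≤ 1000000 := by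
    rw [← sq_abs]; nlinarith [abs_nonneg u]
  rw [Complex.inv_re, Complex.normSq_apply, tp, tau_re, tau_im]
  rw [show bet / X * (bet / X) + bet / X * u * (bet / X * u) = bet / X * (bet / X * (1 + u ^ 2)) by ring]
  rw [div_mul_cancel_left₀ ht.ne', le_inv_comm₀ (by positivity) (by positivity), inv_div]
  rw [show 1000001 * bet / X = bet / X * 1000001 by ring]
  gcongr
  linarith

lemma cusp_unif {P : ℂ → Prop} (h : ∀ᶠ τ in cusp, P τ) : ∀ᶠ X : ℝ in atTop, ∀ u : ℝ, |u| ≤ 1000 → P (tp X u) := by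
  unfold cusp at h
  rw [eventually_comap] at h
  obtain ⟨x0, hx0⟩ := eventually_atTop.1 h
  have h1 : Tendsto (fun X : ℝ => X / (1000001 * bet)) atTop atTop :=
    tendsto_id.atTop_div_const (by have := bet_pos; positivity)
  filter_upwards [h1.eventually_ge_atTop x0, eventually_gt_atTop 0] with X h2 h3 u hu
  exact hx0 _ (h2.trans (tp_inv h3 hu)) _ rfl

lemma hh_norm {u v : ℝ} (hu : |u| ≤ 1000) : ‖hh u v‖ ≤ Real.exp (-(1 / 1000001) * v ^ 2) := by
  unfold hh
  set z : ℂ := 1 + u * Complex.I with hz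
  have hzre : z.re = 1 := by simp [hz]
  have hzim : z.im = u := by simp [hz]
  have hz1 : 1 ≤ ‖z‖ := by
    have := Complex.abs_re_le_norm z
    rwa [hzre, abs_one] at this
  have hu2 : u ^ 2 ≤ 1000000 := by
    rw [← sq_abs]; nlinarith [abs_nonneg u]
  rw [norm_mul, norm_div]
  have h1 : ‖z ^ (1 / 2 : ℂ)‖ ≤ ‖z‖ := by
    rw [show (1 / 2 : ℂ) = ((1 / 2 : ℝ) : ℂ) by push_cast; ring, Complex.norm_cpow_real]
    calc ‖z‖ ^ (1 / 2 : ℝ) ≤ ‖z‖ ^ (1 : ℝ) := Real.rpow_le_rpow_of_exponent_le hz1 (by norm_num)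
      _ = ‖z‖ := Real.rpow_one _
  have h2 : ‖Complex.exp (-(v ^ 2 / z))‖ ≤ Real.exp (-(1 / 1000001) * v ^ 2) := by
    rw [Complex.norm_exp]
    apply Real.exp_le_exp.2
    rw [show (-((v : ℂ) ^ 2 / z)) = ((-v ^ 2 : ℝ) : ℂ) * z⁻¹ by push_cast; ring, Complex.re_ofReal_mul, Complex.inv_re,
      Complex.normSq_apply, hzre, hzim]
    have : 1 / 1000001 ≤ 1 / (1 * 1 + u * u) := by
      apply one_div_le_one_div_of_le (by nlinarith [sq_nonneg u]); nlinarith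
    nlinarith [sq_nonneg v]
  calc _ ≤ 1 * Real.exp (-(1 / 1000001) * v ^ 2) := by
        gcongr
        exact div_le_one_of_le₀ h1 (norm_nonneg _)
    _ = _ := one_mul _

lemma hh_tendsto (v : ℝ) : Tendsto (fun u => hh u v) (𝓝 0) (𝓝 (Real.exp (-v ^ 2) : ℝ)) := by
  have h : ContinuousAt (fun u => hh u v) 0 := by
    unfold hh
    have hc : ContinuousAt (fun u : ℝ => (1 + u * Complex.I : ℂ)) 0 := by fun_prop
    have h1 : (1 + ((0 : ℝ) : ℂ) * Complex.I : ℂ) ≠ 0 := one_add_ne 0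
    refine ContinuousAt.mul (ContinuousAt.div (hc.cpow continuousAt_const ?_) hc h1) ?_
    · simp
    · exact (ContinuousAt.div continuousAt_const hc h1).neg.cexp
  have h2 : hh 0 v = (Real.exp (-v ^ 2) : ℝ) := by
    unfold hh; simp
  have := h.tendsto
  rwa [h2] at this

/-- error constant -/
noncomputable def DD : ℝ := 10 ^ 7 * Real.exp 1 / KK

lemma exp_n_norm {X : ℝ} (hX : 1 ≤ X) (n : ℕ) (hn : (n : ℝ) = X ^ 2 / bet + 1 / 8) (θ : ℝ) :
    ‖Complex.exp (n * tau (bet / X) θ)‖ ≤ Real.exp 1 * Real.exp X := by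
  rw [Complex.norm_exp, ← Complex.ofReal_natCast, Complex.re_ofReal_mul, tau_re, hn, ← Real.exp_add]
  apply Real.exp_le_exp.2
  have hb := bet_pos
  have : (X ^ 2 / bet + 1 / 8) * (bet / X) = X + bet / (8 * X) := by field_simp
  rw [this]
  have : bet / (8 * X) ≤ 1 := by
    rw [div_le_one (by positivity)]; linarith [bet_lt]
  linarith

lemma GG_unif : ∀ᶠ X : ℝ in atTop, ∀ (n : ℕ) (u v : ℝ), (n : ℝ) = X ^ 2 / bet + 1 / 8 → |u| ≤ 1000 → v ^ 2 = X * u ^ 2 →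
    ‖GG n (bet / X) (bet / X * u) / (SC X : ℂ) - hh u v * rho (tp X u)‖ ≤ DD * Real.exp (-X) := by
  filter_upwards [cusp_unif R2_major, eventually_ge_atTop 1] with X h1 hX n u v hn hu hv
  have hX0 : 0 < X := by linarith
  have hb := bet_pos
  have ht : 0 < bet / X := div_pos hb hX0
  have h := h1 u hu (by
    rw [tp, tau_re, tau_im, abs_mul, abs_of_pos ht, mul_comm]; gcongr)
  have hM := MM_scaled hX0 n hn u v hv
  have hS := SC_pos hX0
  have hSC : (SC X : ℂ) ≠ 0 := by exact_mod_cast hS.ne'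
  rw [← SC, ← tp] at hM
  have e : GG n (bet / X) (bet / X * u) / (SC X : ℂ) - hh u v * rho (tp X u) =
      (R2 ζ (Complex.exp (-tp X u)) - MM (tp X u) * rho (tp X u)) * Complex.exp (n * tp X u) / SC X := by
    unfold GG
    rw [← tp, eq_div_iff hSC, sub_mul, div_mul_cancel₀ _ hSC]
    linear_combination (rho (tp X u)) * hM
  rw [e, norm_div, norm_mul, Complex.norm_real, Real.norm_of_nonneg hS.le]
  have h2 : ‖Complex.exp (n * tp X u)‖ ≤ Real.exp 1 * Real.exp X := exp_n_norm hX n hn _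
  have h3 : KK * Real.exp (2 * X) ≤ SC X := by
    unfold SC
    have : √(bet / X) ≤ 1 := by
      apply Real.sqrt_le_one.2
      rw [div_le_one hX0]; linarith [bet_lt]
    have h4 := Real.sqrt_pos.2 ht
    have h5 : KK ≤ KK / √(bet / X) := by
      rw [le_div_iff₀ h4]; nlinarith [KK_pos]
    gcongr
  have hK := KK_pos
  calc _ ≤ 10 ^ 7 * (Real.exp 1 * Real.exp X) / (KK * Real.exp (2 * X)) := by gcongr
    _ = _ := by
      unfold DD
      rw [show 2 * X = X + X by ring, Real.exp_add, Real.exp_neg]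
      field_simp

/-- the parameter -/
noncomputable def XX (n : ℕ) : ℝ := 3 * Real.pi * √(8 * (n : ℝ) - 1) / 40

lemma XX_tendsto : Tendsto XX atTop atTop := by
  unfold XX
  have h1 : Tendsto (fun n : ℕ => 8 * (n : ℝ) - 1) atTop atTop :=
    tendsto_atTop_add_const_right _ _ (tendsto_natCast_atTop_atTop.const_mul_atTop (by norm_num))
  have h2 := Real.tendsto_sqrt_atTop.comp h1
  have h3 := (h2.const_mul_atTop (by positivity : (0:ℝ) < 3 * Real.pi)).atTop_div_const (by norm_num : (0:ℝ) < 40)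
  exact h3

lemma XX_eq {n : ℕ} (hn : 1 ≤ n) : (n : ℝ) = XX n ^ 2 / bet + 1 / 8 := by
  have h1 : (1 : ℝ) ≤ n := by exact_mod_cast hn
  unfold XX bet
  rw [div_pow, mul_pow, Real.sq_sqrt (by linarith)]
  have := Real.pi_ne_zero
  field_simp
  ring

lemma decay (a b c : ℝ) (hc : 0 < c) : Tendsto (fun X : ℝ => (a * X ^ 3 + b * X) * Real.exp (-(c * X))) atTop (𝓝 0) := by
  have key : ∀ k : ℕ, Tendsto (fun X : ℝ => X ^ k * Real.exp (-(c * X))) atTop (𝓝 0) := by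
    intro k
    have h := (Real.tendsto_pow_mul_exp_neg_atTop_nhds_zero k).comp (tendsto_id.const_mul_atTop hc)
    have h2 := h.const_mul ((c ^ k)⁻¹)
    rw [mul_zero] at h2
    refine h2.congr fun X => ?_
    simp only [Function.comp, id]
    rw [mul_pow]; field_simp
  have := ((key 3).const_mul a).add ((key 1).const_mul b)
  rw [mul_zero, mul_zero, add_zero] at this
  refine this.congr fun X => ?_
  ring

/-- the scaled integrand -/
noncomputable def hn (n : ℕ) : ℝ → ℂ := Set.indicator (Set.Ioc (-(1000 * √(XX n))) (1000 * √(XX n)))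
  (fun v => GG n (bet / XX n) (bet / XX n * (v / √(XX n))) / (SC (XX n) : ℂ))

lemma hn_point (v : ℝ) : Tendsto (fun n => hn n v) atTop (𝓝 (Real.exp (-v ^ 2) : ℝ)) := by
  have hs : Tendsto (fun n => √(XX n)) atTop atTop := Real.tendsto_sqrt_atTop.comp XX_tendsto
  have hu : Tendsto (fun n => v / √(XX n)) atTop (𝓝 0) := hs.const_div_atTop v
  have hh1 := (hh_tendsto v).comp hu
  have hu1 : ∀ᶠ n in atTop, |v / √(XX n)| ≤ 1000 := by
    have := hu.abs
    rw [abs_zero] at this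
    exact this.eventually_le_const (by norm_num)
  have hcusp : Tendsto (fun n => tp (XX n) (v / √(XX n))) atTop cusp := by
    unfold cusp
    rw [tendsto_comap_iff]
    have h1 : Tendsto (fun n => XX n / (1000001 * bet)) atTop atTop :=
      XX_tendsto.atTop_div_const (by have := bet_pos; positivity)
    refine tendsto_atTop_mono' _ ?_ h1
    filter_upwards [hu1, XX_tendsto.eventually_gt_atTop 0] with n h2 h3
    exact tp_inv h3 h2
  have hlim := hh1.mul (rho_cusp.comp hcusp)
  have herr : Tendsto (fun n => DD * Real.exp (-(XX n))) atTop (𝓝 0) := by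
    have := (Real.tendsto_exp_neg_atTop_nhds_zero.comp XX_tendsto).const_mul DD
    rwa [mul_zero] at this
  have hdiff : Tendsto (fun n => GG n (bet / XX n) (bet / XX n * (v / √(XX n))) / (SC (XX n) : ℂ) - hh (v / √(XX n)) v * rho (tp (XX n) (v / √(XX n)))) atTop (𝓝 0) := by
    refine squeeze_zero_norm' ?_ herr
    filter_upwards [XX_tendsto.eventually GG_unif, hu1, eventually_ge_atTop 1, XX_tendsto.eventually_gt_atTop 0] with n h1 h2 h3 h4
    refine h1 n _ v (XX_eq h3) h2 ?_
    rw [div_pow, Real.sq_sqrt h4.le]; field_simp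
  have := hdiff.add hlim
  rw [zero_add, mul_one] at this
  refine this.congr' ?_
  filter_upwards [hs.eventually_gt_atTop |v|] with n h1
  have h2 : v ∈ Set.Ioc (-(1000 * √(XX n))) (1000 * √(XX n)) := by
    obtain ⟨a, b⟩ := abs_lt.1 h1
    have := Real.sqrt_nonneg (XX n)
    constructor <;> linarith
  rw [hn, Set.indicator_of_mem h2]
  simp only [Function.comp]
  ring

lemma hn_bound : ∀ᶠ n in atTop, ∀ v : ℝ, ‖hn n v‖ ≤ 2 * Real.exp (-(1 / 1000001) * v ^ 2) + (1 + v ^ 2)⁻¹ := by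
  have hd := decay 0 (1000001 * DD) 1 (by norm_num)
  have hrho : ∀ᶠ τ in cusp, ‖rho τ‖ ≤ 2 := rho_cusp.norm.eventually_le_const (by norm_num)
  filter_upwards [XX_tendsto.eventually GG_unif, XX_tendsto.eventually (cusp_unif hrho), eventually_ge_atTop 1, XX_tendsto.eventually_ge_atTop 1,
    XX_tendsto.eventually (hd.eventually_le_const (by norm_num : (0:ℝ) < 1))] with n h1 h2 h3 h4 h5 v
  have hX0 : 0 < XX n := by linarith
  have hsp := Real.sqrt_pos.2 hX0
  by_cases hv : v ∈ Set.Ioc (-(1000 * √(XX n))) (1000 * √(XX n))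
  · rw [hn, Set.indicator_of_mem hv]
    have hva : |v| ≤ 1000 * √(XX n) := abs_le.2 ⟨hv.1.le, hv.2⟩
    have hu : |v / √(XX n)| ≤ 1000 := by
      rw [abs_div, abs_of_pos hsp, div_le_iff₀ hsp]; exact hva
    have hvX : v ^ 2 = XX n * (v / √(XX n)) ^ 2 := by
      rw [div_pow, Real.sq_sqrt hX0.le]; field_simp
    have h6 := h1 n _ v (XX_eq h3) hu hvX
    have h7 := h2 _ hu
    have h8 := hh_norm (v := v) hu
    have h9 : ‖hh (v / √(XX n)) v * rho (tp (XX n) (v / √(XX n)))‖ ≤ 2 * Real.exp (-(1 / 1000001) * v ^ 2) := by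
      rw [norm_mul, mul_comm]
      gcongr
    have h10 : DD * Real.exp (-(XX n)) ≤ (1 + v ^ 2)⁻¹ := by
      rw [← one_div, le_div_iff₀ (by positivity)]
      have hv2 : v ^ 2 ≤ 1000000 * XX n := by
        rw [← sq_abs]
        calc |v| ^ 2 ≤ (1000 * √(XX n)) ^ 2 := by gcongr
          _ = _ := by rw [mul_pow, Real.sq_sqrt hX0.le]; norm_num
      have hD : 0 ≤ DD := by unfold DD; have := KK_pos; positivity
      calc DD * Real.exp (-(XX n)) * (1 + v ^ 2) ≤ DD * Real.exp (-(XX n)) * (1000001 * XX n) := by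
            gcongr; linarith
        _ = (0 * XX n ^ 3 + 1000001 * DD * XX n) * Real.exp (-(1 * XX n)) := by ring_nf
        _ ≤ 1 := h5
    have := norm_le_norm_sub_add (GG n (bet / XX n) (bet / XX n * (v / √(XX n))) / (SC (XX n) : ℂ)) (hh (v / √(XX n)) v * rho (tp (XX n) (v / √(XX n))))
    linarith
  · rw [hn, Set.indicator_of_notMem hv, norm_zero]
    positivity

lemma hn_lim : Tendsto (fun n => ∫ v, hn n v) atTop (𝓝 (√Real.pi : ℝ)) := by
  have hgauss : ∫ v : ℝ, ((Real.exp (-v ^ 2) : ℝ) : ℂ) = (√Real.pi : ℝ) := by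
    rw [integral_complex_ofReal]
    have := integral_gaussian 1
    simp only [neg_mul, one_mul, div_one] at this
    rw [this]
  rw [← hgauss]
  refine MeasureTheory.tendsto_integral_filter_of_dominated_convergence
    (fun v => 2 * Real.exp (-(1 / 1000001) * v ^ 2) + (1 + v ^ 2)⁻¹) ?_ ?_ ?_ ?_
  · filter_upwards [XX_tendsto.eventually_gt_atTop 0] with n h
    have hc := GG_cont (div_pos bet_pos h) n
    exact ((by fun_prop : Continuous (fun v => GG n (bet / XX n) (bet / XX n * (v / √(XX n))) / (SC (XX n) : ℂ))).aestronglyMeasurable).indicator measurableSet_Ioc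
  · filter_upwards [hn_bound] with n h
    exact Eventually.of_forall h
  · exact ((integrable_exp_neg_mul_sq (by norm_num)).const_mul 2).add integrable_inv_one_add_sq
  · exact Eventually.of_forall hn_point

end M2R

namespace M2R
open Filter Topology

/-- total scale -/
noncomputable def TT (X : ℝ) : ℝ := KK * √bet / X * Real.exp (2 * X)

lemma TT_pos {X : ℝ} (hX : 0 < X) : 0 < TT X := by
  unfold TT
  have := KK_pos
  have := Real.sqrt_pos.2 bet_pos
  positivity

lemma TT_eq {X : ℝ} (hX : 0 < X) : bet / X / √X * SC X = TT X := by
  unfold TT SC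
  rw [Real.sqrt_div bet_pos.le]
  have h1 := Real.sq_sqrt hX.le
  have h2 := Real.sq_sqrt bet_pos.le
  have h3 := (Real.sqrt_pos.2 hX).ne'
  have h4 := (Real.sqrt_pos.2 bet_pos).ne'
  field_simp
  rw [h2]; ring

lemma middle {n : ℕ} (hX : 0 < XX n) : ∫ θ in (-(1000 * (bet / XX n)))..(1000 * (bet / XX n)), GG n (bet / XX n) θ =
    (TT (XX n) : ℂ) * ∫ v, hn n v := by
  set X := XX n with hXd
  have hs := Real.sqrt_pos.2 hX
  have ht : 0 < bet / X := div_pos bet_pos hX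
  have hS := SC_pos hX
  have hSC : (SC X : ℂ) ≠ 0 := by exact_mod_cast hS.ne'
  have h1 : ∫ v, hn n v = ∫ v in (-(1000 * √X))..(1000 * √X), GG n (bet / X) (bet / X * (v / √X)) / (SC X : ℂ) := by
    rw [intervalIntegral.integral_of_le (by linarith)]
    unfold hn
    rw [MeasureTheory.integral_indicator measurableSet_Ioc]
  rw [h1, intervalIntegral.integral_div]
  have hc : bet / X / √X ≠ 0 := (div_pos ht hs).ne'
  have h2 := intervalIntegral.integral_comp_mul_left (a := -(1000 * √X)) (b := 1000 * √X) (fun θ => GG n (bet / X) θ) hc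
  have e1 : ∀ v : ℝ, bet / X / √X * v = bet / X * (v / √X) := fun v => by ring
  have e2 : bet / X / √X * (1000 * √X) = 1000 * (bet / X) := by field_simp
  have e3 : bet / X / √X * -(1000 * √X) = -(1000 * (bet / X)) := by field_simp
  rw [e2, e3] at h2
  simp only [e1] at h2
  rw [h2, ← TT_eq hX, Complex.real_smul]
  have hc' : ((bet / X / √X : ℝ) : ℂ) ≠ 0 := by exact_mod_cast hc
  rw [Complex.ofReal_mul, Complex.ofReal_inv]
  generalize ((bet / X / √X : ℝ) : ℂ) = c at hc' ⊢
  generalize (∫ (x : ℝ) in -(1000 * (bet / X))..1000 * (bet / X), GG n (bet / X) x) = J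
  field_simp

lemma GG_minor {n : ℕ} (hn1 : 1 ≤ n) (hX : 1 ≤ XX n) (θ : ℝ) (h1 : |θ| ≤ Real.pi) (h2 : 1000 * (bet / XX n) ≤ |θ|) :
    ‖GG n (bet / XX n) θ‖ ≤ Real.exp (0.98 * XX n + 6) * (1 + 16 * XX n ^ 2 / bet ^ 2) * (Real.exp 1 * Real.exp (XX n)) := by
  set X := XX n with hXd
  have hX0 : 0 < X := by linarith
  have hb := bet_pos
  have ht : 0 < bet / X := div_pos hb hX0
  have h3 : bet / X ≤ 1 := by rw [div_le_one hX0]; linarith [bet_lt]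
  have hm := R2_minor (τ := tau (bet / X) θ) (by rwa [tau_re]) (by rwa [tau_re]) (by rwa [tau_im]) (by rwa [tau_re, tau_im])
  rw [tau_re] at hm
  unfold GG
  rw [norm_mul]
  have he := exp_n_norm hX n (XX_eq hn1) θ
  have h4 : 0.434 / (bet / X) ≤ 0.98 * X := by
    rw [div_div_eq_mul_div, div_le_iff₀ hb]; nlinarith [bet_gt]
  have h5 : 16 / (bet / X) ^ 2 = 16 * X ^ 2 / bet ^ 2 := by field_simp
  rw [h5] at hm
  refine mul_le_mul (hm.trans ?_) he (norm_nonneg _) (by positivity)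
  gcongr

lemma minor_sum : Tendsto (fun n => ((∫ θ in (-Real.pi)..Real.pi, GG n (bet / XX n) θ) -
    ∫ θ in (-(1000 * (bet / XX n)))..(1000 * (bet / XX n)), GG n (bet / XX n) θ) / (TT (XX n) : ℂ)) atTop (𝓝 0) := by
  have hK := KK_pos
  have hb := bet_pos
  have hsb := Real.sqrt_pos.2 bet_pos
  have hd := (decay (2 * Real.pi * Real.exp 7 / (KK * √bet) * (16 / bet ^ 2)) (2 * Real.pi * Real.exp 7 / (KK * √bet)) 0.02 (by norm_num)).comp XX_tendsto
  refine squeeze_zero_norm' ?_ hd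
  filter_upwards [eventually_ge_atTop 1, XX_tendsto.eventually_ge_atTop 1000] with n h1 h2
  have hX1 : 1 ≤ XX n := by linarith
  have hX0 : 0 < XX n := by linarith
  have ht : 0 < bet / XX n := div_pos bet_pos hX0
  have hc := GG_cont ht n
  have hT := TT_pos hX0
  have htp : 1000 * (bet / XX n) ≤ Real.pi := by
    have : bet / XX n ≤ 1 / 1000 := by
      rw [div_le_div_iff₀ hX0 (by norm_num)]; linarith [bet_lt]
    linarith [Real.pi_gt_three]
  set C := Real.exp (0.98 * XX n + 6) * (1 + 16 * XX n ^ 2 / bet ^ 2) * (Real.exp 1 * Real.exp (XX n)) with hC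
  have hC0 : 0 ≤ C := by positivity
  set r := 1000 * (bet / XX n) with hr
  have hr0 : 0 < r := by positivity
  have i1 := intervalIntegral.integral_add_adjacent_intervals (hc.intervalIntegrable (-Real.pi) (-r)) (hc.intervalIntegrable (μ := MeasureTheory.volume) (-r) r)
  have i2 := intervalIntegral.integral_add_adjacent_intervals (hc.intervalIntegrable (-Real.pi) r) (hc.intervalIntegrable (μ := MeasureTheory.volume) r Real.pi)
  have b1 : ‖∫ θ in (-Real.pi)..(-r), GG n (bet / XX n) θ‖ ≤ C * |(-r) - (-Real.pi)| := by
    apply intervalIntegral.norm_integral_le_of_norm_le_const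
    intro θ hθ
    rw [Set.uIoc_of_le (by linarith)] at hθ
    apply GG_minor h1 hX1
    · rw [abs_le]; constructor <;> linarith [hθ.1, hθ.2]
    · rw [abs_of_nonpos (by linarith [hθ.2])]; linarith [hθ.2]
  have b2 : ‖∫ θ in r..Real.pi, GG n (bet / XX n) θ‖ ≤ C * |Real.pi - r| := by
    apply intervalIntegral.norm_integral_le_of_norm_le_const
    intro θ hθ
    rw [Set.uIoc_of_le htp] at hθ
    apply GG_minor h1 hX1
    · rw [abs_le]; constructor <;> linarith [hθ.1, hθ.2]
    · rw [abs_of_nonneg (by linarith [hθ.1])]; linarith [hθ.1]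
  rw [abs_of_nonneg (by linarith)] at b1 b2
  rw [← i2, ← i1]
  rw [norm_div, Complex.norm_real, Real.norm_of_nonneg hT.le, div_le_iff₀ hT]
  have e1 : ∀ a b c : ℂ, a + b + c - b = a + c := fun a b c => by ring
  rw [e1]
  refine (norm_add_le _ _).trans ?_
  have hfin : (2 * Real.pi) * C = ((fun X : ℝ => (2 * Real.pi * Real.exp 7 / (KK * √bet) * (16 / bet ^ 2) * X ^ 3 + 2 * Real.pi * Real.exp 7 / (KK * √bet) * X) * Real.exp (-(0.02 * X))) ∘ XX) n * TT (XX n) := by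
    simp only [Function.comp, TT, hC]
    generalize XX n = X at *
    have x1 : Real.exp (0.98 * X + 6) * (Real.exp 1 * Real.exp X) = Real.exp 7 * (Real.exp (-(0.02 * X)) * Real.exp (2 * X)) := by
      simp only [← Real.exp_add]; congr 1; ring
    have x2 : Real.exp (0.98 * X + 6) * (1 + 16 * X ^ 2 / bet ^ 2) * (Real.exp 1 * Real.exp X) = (1 + 16 * X ^ 2 / bet ^ 2) * (Real.exp (0.98 * X + 6) * (Real.exp 1 * Real.exp X)) := by ring
    rw [x2, x1]
    field_simp
    ring
  rw [← hfin]
  nlinarith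

lemma Acoef_lim : Tendsto (fun n => 2 * Real.pi * Acoef 1 10 n / (TT (XX n) : ℂ)) atTop (𝓝 (√Real.pi : ℝ)) := by
  have h := minor_sum.add hn_lim
  rw [zero_add] at h
  refine h.congr' ?_
  filter_upwards [XX_tendsto.eventually_gt_atTop 0] with n hX
  have hT : (TT (XX n) : ℂ) ≠ 0 := by exact_mod_cast (TT_pos hX).ne'
  rw [GG_integral (div_pos bet_pos hX), middle hX]
  field_simp
  ring

lemma sin_phi_eq : Real.sin phi = (√5 - 1) / 4 := by
  have h1 : Real.cos (Real.pi / 5) = 1 - 2 * Real.sin phi ^ 2 := by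
    have := Real.cos_two_mul phi
    have h2 := Real.sin_sq_add_cos_sq phi
    rw [show 2 * phi = Real.pi / 5 by unfold phi; ring] at this
    rw [this]; linarith
  rw [Real.cos_pi_div_five] at h1
  have h5 : √(5:ℝ) ^ 2 = 5 := Real.sq_sqrt (by norm_num)
  have h51 : 1 < √(5:ℝ) := by
    rw [Real.lt_sqrt] <;> norm_num
  have := sin_phi_pos
  have h6 : Real.sin phi ^ 2 = ((√5 - 1) / 4) ^ 2 := by nlinarith
  exact (pow_left_inj₀ this.le (by linarith) (by norm_num)).1 h6

lemma cosh_lim : Tendsto (fun X : ℝ => Real.exp (2 * X) / Real.cosh (2 * X)) atTop (𝓝 2) := by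
  have h1 : Tendsto (fun X : ℝ => Real.exp (-(4 * X))) atTop (𝓝 0) :=
    Real.tendsto_exp_neg_atTop_nhds_zero.comp (tendsto_id.const_mul_atTop (by norm_num : (0:ℝ) < 4))
  have h2 := (tendsto_const_nhds (x := (2:ℝ))).div (h1.const_add 1) (by norm_num)
  rw [add_zero, div_one] at h2
  refine h2.congr fun X => ?_
  simp only [Pi.div_apply]
  rw [Real.cosh_eq]
  have e1 : Real.exp (-(2 * X)) = Real.exp (2 * X) * Real.exp (-(4 * X)) := by
    rw [← Real.exp_add]; congr 1; ring
  rw [e1]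
  have := Real.exp_pos (2 * X)
  have := Real.exp_pos (-(4 * X))
  field_simp

lemma sqrt_bet : √bet = 3 * Real.pi / (10 * √2) := by
  have : bet = (3 * Real.pi / (10 * √2)) ^ 2 := by
    unfold bet
    rw [div_pow, mul_pow, mul_pow, Real.sq_sqrt (by norm_num)]; ring
  rw [this, Real.sqrt_sq (by positivity)]

theorem final_asymptotic :
    Filter.Tendsto
      (fun n : ℕ =>
        Acoef 1 10 n * ((Real.sqrt (8 * (n : ℝ) - 1) : ℝ) : ℂ) /
          (((Real.sqrt 2 * (Real.sqrt 5 - 1) : ℝ) : ℂ) *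
            ((Real.cosh (3 * Real.pi * Real.sqrt (8 * (n : ℝ) - 1) / 20) : ℝ) : ℂ)))
      Filter.atTop (nhds 1) := by
  have h1 := Acoef_lim
  have h2 : Tendsto (fun n => ((Real.exp (2 * XX n) / Real.cosh (2 * XX n) : ℝ) : ℂ)) atTop (𝓝 ((2 : ℝ) : ℂ)) :=
    (Complex.continuous_ofReal.tendsto _).comp (cosh_lim.comp XX_tendsto)
  have h3 := (h1.mul h2).mul_const ((1 / (2 * √Real.pi) : ℝ) : ℂ)
  have e : ((√Real.pi : ℝ) : ℂ) * ((2 : ℝ) : ℂ) * ((1 / (2 * √Real.pi) : ℝ) : ℂ) = 1 := by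
    rw [← Complex.ofReal_mul, ← Complex.ofReal_mul]
    have := (Real.sqrt_pos.2 Real.pi_pos).ne'
    norm_cast
    field_simp
  rw [e] at h3
  refine h3.congr' ?_
  filter_upwards [eventually_ge_atTop 1] with n hn1
  have hn2 : (1 : ℝ) ≤ n := by exact_mod_cast hn1
  set s := √(8 * (n : ℝ) - 1) with hs
  have hs0 : 0 < s := Real.sqrt_pos.2 (by linarith)
  have hX : XX n = 3 * Real.pi * s / 40 := rfl
  have h2X : 3 * Real.pi * s / 20 = 2 * XX n := by rw [hX]; ring
  rw [h2X]
  have hc := Real.cosh_pos (2 * XX n)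
  have key : 2 * Real.pi / TT (XX n) * (Real.exp (2 * XX n) / Real.cosh (2 * XX n)) * (1 / (2 * √Real.pi)) =
      s / (√2 * (√5 - 1) * Real.cosh (2 * XX n)) := by
    unfold TT KK
    rw [sin_phi_eq, sqrt_bet]
    have h51 : 0 < √(5:ℝ) - 1 := by
      have : 1 < √(5:ℝ) := by rw [Real.lt_sqrt] <;> norm_num
      linarith
    have hX' : XX n = 3 * Real.pi * s / 40 := hX
    have hE := Real.exp_ne_zero (2 * XX n)
    generalize Real.exp (2 * XX n) = E at *
    generalize Real.cosh (2 * XX n) = Ch at *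
    rw [hX']
    have p1 := Real.sq_sqrt Real.pi_pos.le
    have p2 : √(2:ℝ) ^ 2 = 2 := Real.sq_sqrt (by norm_num)
    have p3 := (Real.sqrt_pos.2 Real.pi_pos)
    have p4 : 0 < √(2:ℝ) := Real.sqrt_pos.2 (by norm_num)
    have := Real.pi_pos
    field_simp
    rw [p1, p2]; ring
  have key2 := congrArg (fun x : ℝ => (x : ℂ)) key
  push_cast at key2 ⊢
  linear_combination (Acoef 1 10 n) * key2

end M2R

theorem Acoef_one_tenth_asymptotic :
    Filter.Tendsto
      (fun n : ℕ =>
        Acoef 1 10 n * ((Real.sqrt (8 * (n : ℝ) - 1) : ℝ) : ℂ) /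
          (((Real.sqrt 2 * (Real.sqrt 5 - 1) : ℝ) : ℂ) *
            ((Real.cosh (3 * Real.pi * Real.sqrt (8 * (n : ℝ) - 1) / 20) : ℝ) : ℂ)))
      Filter.atTop (nhds 1) :=
  M2R.final_asymptotic
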